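/- Let (S_n)_{n≥0} be a simple symmetric random walk on ℤ and (ξ_k)_{k∈ℤ} a sequence of random variables on the same probability space, independent of (S_n), which is stationary, centered, has finite fourth moments, and satisfies conditions (4) and (5). Then for every real number t, the difference E[exp((it/n^{3/4}) Σ_{k=1}^n ξ_{S_k})] − E[exp(−(t²/(2 n^{3/2})) Σ_{ℓ∈ℤ} Σ_{m∈ℤ} E[ξ_ℓ ξ_m] N_n(ℓ)²)] converges to 0 as n → ∞. -/

import Mathlib

open MeasureTheory ProbabilityTheory Filter

noncomputable section

/-- Number of visits of the walk `S` to site `k` among times `1,...,n` (local time). -/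
def localTime {Ω : Type*} (S : ℕ → Ω → ℤ) (n : ℕ) (k : ℤ) (ω : Ω) : ℝ :=
  ((Finset.Icc 1 n).filter (fun j => S j ω = k)).card

/-- `S` is a simple symmetric random walk on `ℤ`: `S 0 = 0` and the increments are
i.i.d. uniform on `{-1, 1}`. -/
structure IsSSRW {Ω : Type*} [MeasurableSpace Ω] (μ : Measure Ω) (S : ℕ → Ω → ℤ) : Prop where
  meas : ∀ n, Measurable (S n)
  init : ∀ ω, S 0 ω = 0
  indep : iIndepFun (fun n ω => S (n + 1) ω - S n ω) μ
  step_one : ∀ n, μ {ω | S (n + 1) ω - S n ω = 1} = 1 / 2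
  step_neg_one : ∀ n, μ {ω | S (n + 1) ω - S n ω = -1} = 1 / 2

/-- Stationarity of the sequence `(ξ k)_{k ∈ ℤ}`: all finite dimensional distributions
are invariant under a shift of the index. -/
def IsStationarySeq {Ω : Type*} [MeasurableSpace Ω] (μ : Measure Ω) (ξ : ℤ → Ω → ℝ) : Prop :=
  ∀ (j : ℤ) (q : ℕ) (k : Fin q → ℤ),
    Measure.map (fun ω i => ξ (k i + j) ω) μ = Measure.map (fun ω i => ξ (k i) ω) μ

/-- Covariance of two complex-valued random variables. -/
def covC {Ω : Type*} [MeasurableSpace Ω] (μ : Measure Ω) (U V : Ω → ℂ) : ℂ :=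
  ∫ ω, U ω * V ω ∂μ - (∫ ω, U ω ∂μ) * (∫ ω, V ω ∂μ)

/-- Condition (3): `(ξ k)` is stationary, centered, with finite fourth moments. -/
def Cond3 {Ω : Type*} [MeasurableSpace Ω] (μ : Measure Ω) (ξ : ℤ → Ω → ℝ) : Prop :=
  IsStationarySeq μ ξ ∧ (∀ k, ∫ ω, ξ k ω ∂μ = 0) ∧ ∀ k, Integrable (fun ω => (ξ k ω) ^ 4) μ

/-- Condition (4). -/
def Cond4 {Ω : Type*} [MeasurableSpace Ω] (μ : Measure Ω) (ξ : ℤ → Ω → ℝ) : Prop :=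
  Summable (fun p : ℕ => Real.sqrt (1 + (p : ℝ)) * |∫ ω, ξ 0 ω * ξ (p : ℤ) ω ∂μ|) ∧
  ∃ B : ℝ, ∀ N : ℕ, 1 ≤ N →
    ∑ k₁ ∈ Finset.range N, ∑ k₂ ∈ Finset.range N, ∑ k₃ ∈ Finset.range N,
      ∑ k₄ ∈ Finset.range N,
        |∫ ω, ξ (k₁ : ℤ) ω * ξ (k₂ : ℤ) ω * ξ (k₃ : ℤ) ω * ξ (k₄ : ℤ) ω ∂μ| ≤ B * (N : ℝ) ^ 2

/-- The covariance inequality of condition (5), for a given constant `C` and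
family `φ`. -/
def Cond5Bound {Ω : Type*} [MeasurableSpace Ω] (μ : Measure Ω) (ξ : ℤ → Ω → ℝ)
    (C : ℝ) (φ : ℕ → ℕ → ℝ) : Prop :=
  ∀ n₁ n₂ n₃ n₄ : ℕ, n₁ ≤ n₂ → n₂ ≤ n₃ → n₃ ≤ n₄ → ∀ α β : ℕ → ℝ,
    ‖covC μ
        (fun ω => Complex.exp (Complex.I * ((∑ k ∈ Finset.Icc n₁ n₂, α k * ξ (k : ℤ) ω : ℝ) : ℂ)))
        (fun ω => Complex.exp (Complex.I * ((∑ k ∈ Finset.Icc n₃ n₄, β k * ξ (k : ℤ) ω : ℝ) : ℂ)))‖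
      ≤ C * (1 + ∑ k ∈ Finset.Icc n₁ n₂, |α k| + ∑ k ∈ Finset.Icc n₃ n₄, |β k|) *
          φ (n₃ - n₂) (n₄ - n₃)

/-- Condition (5). -/
def Cond5 {Ω : Type*} [MeasurableSpace Ω] (μ : Measure Ω) (ξ : ℤ → Ω → ℝ) : Prop :=
  ∃ C : ℝ, 0 < C ∧ ∃ (φ : ℕ → ℕ → ℝ) (r : ℕ), 1 ≤ r ∧
    (∀ p s, 0 ≤ φ p s) ∧ (∀ p s, φ (p + 1) s ≤ φ p s) ∧
    Tendsto (fun s : ℕ => Real.sqrt s * φ (r * s) s) atTop (nhds 0) ∧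
    Cond5Bound μ ξ C φ

/-- The unit complex number `exp (i x)`. -/
def expI (x : ℝ) : ℂ := Complex.exp (Complex.I * (x : ℂ))

lemma expI_zero : expI 0 = 1 := by simp [expI]

lemma expI_add (x y : ℝ) : expI (x + y) = expI x * expI y := by
  simp [expI, mul_add, Complex.exp_add]

lemma norm_expI (x : ℝ) : ‖expI x‖ = 1 := by
  rw [expI, mul_comm]; exact Complex.norm_exp_ofReal_mul_I x

lemma measurable_expI : Measurable expI := by
  unfold expI; fun_prop

lemma norm_expI_sub_one_le (x : ℝ) : ‖expI x - 1‖ ≤ |x| :=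
  Real.norm_exp_I_mul_ofReal_sub_one_le

lemma norm_expI_sub_expI_le (x y : ℝ) : ‖expI x - expI y‖ ≤ |x - y| := by
  have h : expI x - expI y = expI y * (expI (x - y) - 1) := by
    rw [mul_sub, ← expI_add]; simp
  rw [h, norm_mul, norm_expI, one_mul]
  exact norm_expI_sub_one_le _

/-- Second order Taylor remainder of `exp (i x)`. -/
def expIRem (x : ℝ) : ℂ := expI x - 1 - Complex.I * x + (x : ℂ) ^ 2 / 2

lemma measurable_expIRem : Measurable expIRem := by
  unfold expIRem
  have := measurable_expI
  fun_prop

lemma norm_expIRem_le (x : ℝ) : ‖expIRem x‖ ≤ 3 * |x| ^ 3 := by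
  rcases le_or_gt |x| 1 with hx | hx
  · have h := Complex.exp_bound (x := Complex.I * x) (by simpa using hx) (n := 3) (by norm_num)
    have e : expIRem x =
        Complex.exp (Complex.I * x) - ∑ m ∈ Finset.range 3, (Complex.I * x) ^ m / m.factorial := by
      simp only [expIRem, expI, Finset.sum_range_succ, Finset.sum_range_zero, mul_pow,
        Complex.I_sq]
      norm_num [Nat.factorial]
      ring
    rw [e]
    refine h.trans ?_
    have : ‖Complex.I * (x : ℂ)‖ = |x| := by simp
    rw [this]
    norm_num [Nat.factorial]
    nlinarith [pow_nonneg (abs_nonneg x) 3]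
  · have h1 : ‖expIRem x‖ ≤ |x| + |x| + |x| ^ 2 / 2 := by
      unfold expIRem
      refine (norm_add_le _ _).trans (add_le_add ((norm_sub_le _ _).trans
        (add_le_add (norm_expI_sub_one_le x) ?_)) ?_)
      · simp
      · simp
    have h2 : |x| ≤ |x| ^ 3 := le_self_pow₀ hx.le (by norm_num)
    have h3 : |x| ^ 2 ≤ |x| ^ 3 := pow_le_pow_right₀ hx.le (by norm_num)
    linarith [pow_nonneg (abs_nonneg x) 3]

lemma abs_pow_le_add_div {η : ℝ} (hη : 0 < η) (x : ℝ) {k : ℕ} (hk : k ≤ 4) :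
    |x| ^ k ≤ η ^ k + x ^ 4 / η ^ (4 - k) := by
  have h4 : 0 ≤ x ^ 4 := by positivity
  rcases le_or_gt |x| η with h | h
  · have := pow_le_pow_left₀ (abs_nonneg x) h k
    have : 0 ≤ x ^ 4 / η ^ (4 - k) := by positivity
    linarith
  · have h1 : |x| ^ k ≤ x ^ 4 / η ^ (4 - k) := by
      rw [le_div_iff₀ (by positivity)]
      calc |x| ^ k * η ^ (4 - k) ≤ |x| ^ k * |x| ^ (4 - k) := by gcongr
        _ = x ^ 4 := by
          rw [← pow_add, Nat.add_sub_cancel' hk]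
          exact Even.pow_abs (by decide) x
    have : 0 < η ^ k := by positivity
    linarith

section Moments

variable {Ω : Type*} [MeasurableSpace Ω] {μ : Measure Ω}

lemma MeasureTheory.MemLp.integrable_pow_four {V : Ω → ℝ} (hV : MemLp V 4 μ) :
    Integrable (fun ω => V ω ^ 4) μ := by
  have := hV.integrable_norm_pow (p := 4) (by norm_num)
  refine this.congr (ae_of_all _ fun ω => ?_)
  simp only [Real.norm_eq_abs]
  exact Even.pow_abs (by decide) _

lemma integrable_expI_mul {X : Ω → ℝ} (hX : AEMeasurable X μ) {f : Ω → ℂ} (hf : Integrable f μ) :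
    Integrable (fun ω => expI (X ω) * f ω) μ :=
  hf.bdd_mul (c := 1) (measurable_expI.comp_aemeasurable hX).aestronglyMeasurable
    (ae_of_all _ fun _ => (norm_expI _).le)

variable [IsProbabilityMeasure μ]

lemma MeasureTheory.MemLp.integrable_abs_pow {V : Ω → ℝ} (hV : MemLp V 4 μ) {k : ℕ} (hk : k ≤ 4) :
    Integrable (fun ω => |V ω| ^ k) μ := by
  refine Integrable.mono' ((integrable_const (1 : ℝ)).add hV.integrable_pow_four)
    ((hV.aestronglyMeasurable.norm).pow k) (ae_of_all _ fun ω => ?_)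
  have := abs_pow_le_add_div one_pos (V ω) hk
  simpa using this

lemma MeasureTheory.MemLp.integrable_of_four {V : Ω → ℝ} (hV : MemLp V 4 μ) : Integrable V μ := by
  refine Integrable.mono' (hV.integrable_abs_pow (k := 1) (by norm_num))
    hV.aestronglyMeasurable (ae_of_all _ fun ω => ?_)
  simp

lemma MeasureTheory.MemLp.integrable_sq_of_four {V : Ω → ℝ} (hV : MemLp V 4 μ) :
    Integrable (fun ω => V ω ^ 2) μ := by
  simpa using hV.integrable_abs_pow (k := 2) (by norm_num)

lemma MeasureTheory.MemLp.integrable_mul_of_four {V W : Ω → ℝ} (hV : MemLp V 4 μ) (hW : MemLp W 4 μ) :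
    Integrable (fun ω => V ω * W ω) μ := by
  refine Integrable.mono' (hV.integrable_sq_of_four.add hW.integrable_sq_of_four)
    (hV.aestronglyMeasurable.mul hW.aestronglyMeasurable) (ae_of_all _ fun ω => ?_)
  simp only [Pi.add_apply, Real.norm_eq_abs, abs_mul]
  nlinarith [sq_nonneg (|V ω| - |W ω|), sq_abs (V ω), sq_abs (W ω), sq_nonneg (V ω),
    sq_nonneg (W ω)]

lemma integral_abs_pow_le {V : Ω → ℝ} (hV : MemLp V 4 μ) {η c : ℝ} (hη : 0 < η)
    (h4 : ∫ ω, V ω ^ 4 ∂μ ≤ c * η ^ 4) {k : ℕ} (hk : k ≤ 4) :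
    ∫ ω, |V ω| ^ k ∂μ ≤ (1 + c) * η ^ k := by
  have hi := hV.integrable_pow_four
  calc ∫ ω, |V ω| ^ k ∂μ ≤ ∫ ω, (η ^ k + V ω ^ 4 / η ^ (4 - k)) ∂μ :=
        integral_mono (hV.integrable_abs_pow hk)
          ((integrable_const _).add (hi.div_const _)) fun ω => abs_pow_le_add_div hη _ hk
    _ = η ^ k + (∫ ω, V ω ^ 4 ∂μ) / η ^ (4 - k) := by
        rw [integral_add (integrable_const _) (hi.div_const _), integral_div]; simp
    _ ≤ η ^ k + c * η ^ 4 / η ^ (4 - k) := by gcongr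
    _ = (1 + c) * η ^ k := by
        have : η ^ 4 = η ^ k * η ^ (4 - k) := by rw [← pow_add, Nat.add_sub_cancel' hk]
        rw [this]; field_simp

lemma abs_mul_sq_le_add_div {η : ℝ} (hη : 0 < η) (x y : ℝ) :
    |y| * x ^ 2 ≤ η ^ 3 + (x ^ 4 + y ^ 4) / η := by
  have hx := abs_pow_le_add_div hη x (k := 3) (by norm_num)
  have hy := abs_pow_le_add_div hη y (k := 3) (by norm_num)
  simp only [show 4 - 3 = 1 from rfl, pow_one] at hx hy
  have hx4 : 0 ≤ x ^ 4 / η := by positivity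
  have hy4 : 0 ≤ y ^ 4 / η := by positivity
  rw [add_div]
  rcases le_total |x| |y| with h | h
  · have : |y| * x ^ 2 ≤ |y| ^ 3 := by
      rw [← sq_abs x]
      calc |y| * |x| ^ 2 ≤ |y| * |y| ^ 2 := by gcongr
        _ = |y| ^ 3 := by ring
    linarith
  · have : |y| * x ^ 2 ≤ |x| ^ 3 := by
      rw [← sq_abs x]
      calc |y| * |x| ^ 2 ≤ |x| * |x| ^ 2 := by gcongr
        _ = |x| ^ 3 := by ring
    linarith

lemma MeasureTheory.MemLp.integrable_abs_mul_sq {V Y : Ω → ℝ} (hV : MemLp V 4 μ) (hY : MemLp Y 4 μ) :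
    Integrable (fun ω => |Y ω| * V ω ^ 2) μ := by
  refine Integrable.mono' ((integrable_const (1 : ℝ)).add
    (hV.integrable_pow_four.add hY.integrable_pow_four))
    ((hY.aestronglyMeasurable.norm).mul (hV.aestronglyMeasurable.pow 2))
    (ae_of_all _ fun ω => ?_)
  have := abs_mul_sq_le_add_div one_pos (V ω) (Y ω)
  rw [Real.norm_of_nonneg (by positivity)]
  simpa using this

lemma integral_abs_mul_sq_le {V Y : Ω → ℝ} (hV : MemLp V 4 μ) (hY : MemLp Y 4 μ) {η c : ℝ}
    (hη : 0 < η) (hV4 : ∫ ω, V ω ^ 4 ∂μ ≤ c * η ^ 4) (hY4 : ∫ ω, Y ω ^ 4 ∂μ ≤ c * η ^ 4) :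
    ∫ ω, |Y ω| * V ω ^ 2 ∂μ ≤ (1 + 2 * c) * η ^ 3 := by
  have hi := hV.integrable_pow_four
  have hj := hY.integrable_pow_four
  have hij : Integrable (fun ω => V ω ^ 4 + Y ω ^ 4) μ := hi.add hj
  calc ∫ ω, |Y ω| * V ω ^ 2 ∂μ ≤ ∫ ω, (η ^ 3 + (V ω ^ 4 + Y ω ^ 4) / η) ∂μ :=
        integral_mono (hV.integrable_abs_mul_sq hY)
          ((integrable_const _).add (hij.div_const _))
          fun ω => abs_mul_sq_le_add_div hη _ _
    _ = η ^ 3 + (∫ ω, V ω ^ 4 ∂μ + ∫ ω, Y ω ^ 4 ∂μ) / η := by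
        rw [integral_add (integrable_const _) (hij.div_const _), integral_div,
          integral_add hi hj]; simp
    _ ≤ η ^ 3 + (c * η ^ 4 + c * η ^ 4) / η := by gcongr
    _ = (1 + 2 * c) * η ^ 3 := by field_simp; ring

lemma integrable_expI {X : Ω → ℝ} (hX : AEMeasurable X μ) :
    Integrable (fun ω => expI (X ω)) μ := by
  simpa using integrable_expI_mul hX (integrable_const (1 : ℂ))

lemma norm_integral_expI_le_one (X : Ω → ℝ) : ‖∫ ω, expI (X ω) ∂μ‖ ≤ 1 := by
  have h := norm_integral_le_of_norm_le_const (μ := μ) (C := 1)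
    (ae_of_all μ fun ω => (norm_expI (X ω)).le)
  simpa using h

end Moments

section Covariance

variable {Ω : Type*} [MeasurableSpace Ω] {μ : Measure Ω}

lemma covC_add {X : Ω → ℝ} (hX : AEMeasurable X μ) {f g : Ω → ℂ} (hf : Integrable f μ)
    (hg : Integrable g μ) :
    covC μ (fun ω => expI (X ω)) (fun ω => f ω + g ω) =
      covC μ (fun ω => expI (X ω)) f + covC μ (fun ω => expI (X ω)) g := by
  simp only [covC, mul_add]
  rw [integral_add (integrable_expI_mul hX hf) (integrable_expI_mul hX hg), integral_add hf hg]
  ring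

lemma covC_const_mul (U : Ω → ℂ) (c : ℂ) (f : Ω → ℂ) :
    covC μ U (fun ω => c * f ω) = c * covC μ U f := by
  simp only [covC, mul_left_comm _ c, integral_const_mul]
  ring

variable [IsProbabilityMeasure μ]

lemma covC_const (U : Ω → ℂ) (c : ℂ) : covC μ U (fun _ => c) = 0 := by
  simp [covC, integral_mul_const]

lemma norm_covC_le (X : Ω → ℝ) {f : Ω → ℂ} :
    ‖covC μ (fun ω => expI (X ω)) f‖ ≤ 2 * ∫ ω, ‖f ω‖ ∂μ := by
  have h1 : ‖∫ ω, expI (X ω) * f ω ∂μ‖ ≤ ∫ ω, ‖f ω‖ ∂μ := by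
    refine (norm_integral_le_integral_norm _).trans (le_of_eq ?_)
    simp only [norm_mul, norm_expI, one_mul]
  have h2 : ‖(∫ ω, expI (X ω) ∂μ) * ∫ ω, f ω ∂μ‖ ≤ ∫ ω, ‖f ω‖ ∂μ := by
    rw [norm_mul]
    calc _ ≤ 1 * ∫ ω, ‖f ω‖ ∂μ := by
          gcongr
          · exact norm_integral_expI_le_one X
          · exact norm_integral_le_integral_norm _
      _ = _ := one_mul _
  calc _ ≤ _ := norm_sub_le _ _
    _ ≤ _ := by linarith

lemma integrable_expIRem {V : Ω → ℝ} (hV : MemLp V 4 μ) (h : ℝ) :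
    Integrable (fun ω => expIRem (h * V ω)) μ := by
  have hm : AEMeasurable (fun ω => h * V ω) μ := hV.aestronglyMeasurable.aemeasurable.const_mul h
  refine Integrable.mono' ((hV.integrable_abs_pow (k := 3) (by norm_num)).const_mul (3 * |h| ^ 3))
    (measurable_expIRem.comp_aemeasurable hm).aestronglyMeasurable (ae_of_all _ fun ω => ?_)
  refine (norm_expIRem_le _).trans (le_of_eq ?_)
  rw [abs_mul]; ring

lemma integral_norm_expIRem_le {V : Ω → ℝ} (hV : MemLp V 4 μ) (h : ℝ) :
    ∫ ω, ‖expIRem (h * V ω)‖ ∂μ ≤ 3 * |h| ^ 3 * ∫ ω, |V ω| ^ 3 ∂μ := by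
  rw [← integral_const_mul]
  refine integral_mono (integrable_expIRem hV h).norm
    ((hV.integrable_abs_pow (k := 3) (by norm_num)).const_mul _) fun ω => ?_
  refine (norm_expIRem_le _).trans (le_of_eq ?_)
  simp only [abs_mul]; ring

/-- Bounds on covariances with `exp (± i h V)` control the covariance with `V`. -/
lemma norm_covC_self_le {X V : Ω → ℝ} (hX : AEMeasurable X μ) (hV : MemLp V 4 μ) {h e : ℝ}
    (hh : 0 < h)
    (hp : ‖covC μ (fun ω => expI (X ω)) (fun ω => expI (h * V ω))‖ ≤ e)
    (hn : ‖covC μ (fun ω => expI (X ω)) (fun ω => expI (-h * V ω))‖ ≤ e) :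
    ‖covC μ (fun ω => expI (X ω)) (fun ω => (V ω : ℂ))‖
      ≤ e / h + 6 * h ^ 2 * ∫ ω, |V ω| ^ 3 ∂μ := by
  have hVm := hV.aestronglyMeasurable.aemeasurable
  have i1 := integrable_expI (μ := μ) (hVm.const_mul h)
  have i2 := integrable_expI (μ := μ) (hVm.const_mul (-h))
  have r1 := integrable_expIRem hV h
  have r2 := integrable_expIRem hV (-h)
  have b1 := norm_covC_le (μ := μ) X (f := fun ω => expIRem (h * V ω))
  have b2 := norm_covC_le (μ := μ) X (f := fun ω => expIRem (-h * V ω))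
  have c1 := integral_norm_expIRem_le hV h
  have c2 := integral_norm_expIRem_le hV (-h)
  rw [abs_neg] at c2
  rw [abs_of_pos hh] at c1 c2
  have hid : (fun ω => 2 * Complex.I * h * (V ω : ℂ)) = fun ω =>
      (expI (h * V ω) + (-1) * expI (-h * V ω)) +
        ((-1) * expIRem (h * V ω) + expIRem (-h * V ω)) := by
    funext ω
    simp only [expIRem]; push_cast; ring
  have key := congrArg (covC μ (fun ω => expI (X ω))) hid
  rw [covC_const_mul, covC_add hX (i1.fun_add (i2.const_mul _)) ((r1.const_mul _).fun_add r2),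
    covC_add hX i1 (i2.const_mul _), covC_add hX (r1.const_mul _) r2, covC_const_mul,
    covC_const_mul] at key
  have hN := congrArg norm key
  rw [norm_mul] at hN
  have hnorm : ‖2 * Complex.I * (h : ℂ)‖ = 2 * h := by simp [abs_of_pos hh]
  rw [hnorm] at hN
  have tri : 2 * h * ‖covC μ (fun ω => expI (X ω)) (fun ω => (V ω : ℂ))‖ ≤
      (e + e) + (2 * (3 * h ^ 3 * ∫ ω, |V ω| ^ 3 ∂μ) + 2 * (3 * h ^ 3 * ∫ ω, |V ω| ^ 3 ∂μ)) := by
    rw [hN]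
    refine (norm_add_le _ _).trans (add_le_add ((norm_add_le _ _).trans ?_)
      ((norm_add_le _ _).trans ?_))
    · rw [norm_mul]; simp only [norm_neg, norm_one, one_mul]; linarith
    · rw [norm_mul]; simp only [norm_neg, norm_one, one_mul]; linarith
  have : ‖covC μ (fun ω => expI (X ω)) (fun ω => (V ω : ℂ))‖ * (2 * h) ≤
      (e / h + 6 * h ^ 2 * ∫ ω, |V ω| ^ 3 ∂μ) * (2 * h) := by
    have : (e / h + 6 * h ^ 2 * ∫ ω, |V ω| ^ 3 ∂μ) * (2 * h) =
      2 * e + 12 * h ^ 3 * ∫ ω, |V ω| ^ 3 ∂μ := by field_simp; ring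
    linarith
  exact le_of_mul_le_mul_right this (by positivity)

/-- Bounds on covariances with `exp (± i h V)` control the covariance with `V ^ 2`. -/
lemma norm_covC_sq_le {X V : Ω → ℝ} (hX : AEMeasurable X μ) (hV : MemLp V 4 μ) {h e : ℝ}
    (hh : 0 < h)
    (hp : ‖covC μ (fun ω => expI (X ω)) (fun ω => expI (h * V ω))‖ ≤ e)
    (hn : ‖covC μ (fun ω => expI (X ω)) (fun ω => expI (-h * V ω))‖ ≤ e) :
    ‖covC μ (fun ω => expI (X ω)) (fun ω => (V ω : ℂ) ^ 2)‖
      ≤ 2 * e / h ^ 2 + 12 * h * ∫ ω, |V ω| ^ 3 ∂μ := by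
  have hVm := hV.aestronglyMeasurable.aemeasurable
  have i1 := integrable_expI (μ := μ) (hVm.const_mul h)
  have i2 := integrable_expI (μ := μ) (hVm.const_mul (-h))
  have r1 := integrable_expIRem hV h
  have r2 := integrable_expIRem hV (-h)
  have b1 := norm_covC_le (μ := μ) X (f := fun ω => expIRem (h * V ω))
  have b2 := norm_covC_le (μ := μ) X (f := fun ω => expIRem (-h * V ω))
  have c1 := integral_norm_expIRem_le hV h
  have c2 := integral_norm_expIRem_le hV (-h)
  rw [abs_neg] at c2
  rw [abs_of_pos hh] at c1 c2
  have hid : (fun ω => -(h : ℂ) ^ 2 * (V ω : ℂ) ^ 2) = fun ω =>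
      (expI (h * V ω) + expI (-h * V ω)) +
        (((-1) * expIRem (h * V ω) + (-1) * expIRem (-h * V ω)) + (-2)) := by
    funext ω
    simp only [expIRem]; push_cast; ring
  have key := congrArg (covC μ (fun ω => expI (X ω))) hid
  rw [covC_const_mul, covC_add hX (i1.fun_add i2)
      (((r1.const_mul _).fun_add (r2.const_mul _)).fun_add (integrable_const _)),
    covC_add hX i1 i2, covC_add hX ((r1.const_mul _).fun_add (r2.const_mul _)) (integrable_const _),
    covC_add hX (r1.const_mul _) (r2.const_mul _), covC_const_mul,
    covC_const_mul, covC_const, add_zero] at key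
  have hN := congrArg norm key
  rw [norm_mul] at hN
  have hnorm : ‖-(h : ℂ) ^ 2‖ = h ^ 2 := by simp
  rw [hnorm] at hN
  have tri : h ^ 2 * ‖covC μ (fun ω => expI (X ω)) (fun ω => (V ω : ℂ) ^ 2)‖ ≤
      (e + e) + (2 * (3 * h ^ 3 * ∫ ω, |V ω| ^ 3 ∂μ) + 2 * (3 * h ^ 3 * ∫ ω, |V ω| ^ 3 ∂μ)) := by
    rw [hN]
    refine (norm_add_le _ _).trans (add_le_add ((norm_add_le _ _).trans ?_)
      ((norm_add_le _ _).trans ?_))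
    · linarith
    · rw [norm_mul, norm_mul]; simp only [norm_neg, norm_one, one_mul]; linarith
  have : ‖covC μ (fun ω => expI (X ω)) (fun ω => (V ω : ℂ) ^ 2)‖ * h ^ 2 ≤
      (2 * e / h ^ 2 + 12 * h * ∫ ω, |V ω| ^ 3 ∂μ) * h ^ 2 := by
    have : (2 * e / h ^ 2 + 12 * h * ∫ ω, |V ω| ^ 3 ∂μ) * h ^ 2 =
      2 * e + 12 * h ^ 3 * ∫ ω, |V ω| ^ 3 ∂μ := by field_simp
    linarith
  exact le_of_mul_le_mul_right this (by positivity)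

/-- One step of the block recursion: the effect of adding the block `U` to `X + Y + G`, when
`X + Y` is nearly uncorrelated with `U` and `X` nearly uncorrelated with squares of `G + U`
and `G`. -/
lemma norm_integral_expI_step_le {X Y G U : Ω → ℝ} (hX : MemLp X 4 μ) (hY : MemLp Y 4 μ)
    (hG : MemLp G 4 μ) (hU : MemLp U 4 μ) {η c e : ℝ} (hη : 0 < η)
    (hU0 : ∫ ω, U ω ∂μ = 0)
    (mY : ∫ ω, Y ω ^ 4 ∂μ ≤ c * η ^ 4) (mYG : ∫ ω, (Y ω + G ω) ^ 4 ∂μ ≤ c * η ^ 4)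
    (mG : ∫ ω, G ω ^ 4 ∂μ ≤ c * η ^ 4) (mGU : ∫ ω, (G ω + U ω) ^ 4 ∂μ ≤ c * η ^ 4)
    (cU : ‖covC μ (fun ω => expI (X ω + Y ω)) (fun ω => (U ω : ℂ))‖ ≤ e)
    (cG : ‖covC μ (fun ω => expI (X ω)) (fun ω => (G ω : ℂ) ^ 2)‖ ≤ e)
    (cGU : ‖covC μ (fun ω => expI (X ω)) (fun ω => ((G ω + U ω : ℝ) : ℂ) ^ 2)‖ ≤ e) :
    ‖∫ ω, expI (X ω + Y ω + G ω + U ω) ∂μ - (∫ ω, expI (X ω + Y ω + G ω) ∂μ) *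
        (1 - ((∫ ω, (G ω + U ω) ^ 2 ∂μ - ∫ ω, G ω ^ 2 ∂μ : ℝ) : ℂ) / 2)‖
      ≤ 2 * e + (8 + 10 * c + c ^ 2) * η ^ 3 := by
  have hc : 0 ≤ c := by
    have h0 : 0 ≤ ∫ ω, Y ω ^ 4 ∂μ := integral_nonneg fun ω => by positivity
    by_contra hlt
    push Not at hlt
    nlinarith [pow_pos hη 4]
  have hGU : MemLp (fun ω => G ω + U ω) 4 μ := hG.add hU
  have hYG : MemLp (fun ω => Y ω + G ω) 4 μ := hY.add hG
  have aX := hX.aestronglyMeasurable.aemeasurable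
  have aY := hY.aestronglyMeasurable.aemeasurable
  have aG := hG.aestronglyMeasurable.aemeasurable
  have aU := hU.aestronglyMeasurable.aemeasurable
  have aXY : AEMeasurable (fun ω => X ω + Y ω) μ := aX.add aY
  have iGU2 : Integrable (fun ω => ((G ω + U ω : ℝ) : ℂ) ^ 2) μ := by
    simpa using hGU.integrable_sq_of_four.ofReal (𝕜 := ℂ)
  have iG2 : Integrable (fun ω => (G ω : ℂ) ^ 2) μ := by
    simpa using hG.integrable_sq_of_four.ofReal (𝕜 := ℂ)
  have iU : Integrable (fun ω => (U ω : ℂ)) μ := hU.integrable_of_four.ofReal (𝕜 := ℂ)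
  have iR1 : Integrable (fun ω => expIRem (G ω + U ω)) μ := by
    simpa using integrable_expIRem hGU 1
  have iR0 : Integrable (fun ω => expIRem (G ω)) μ := by
    simpa using integrable_expIRem hG 1
  have bR1 : ∫ ω, ‖expIRem (G ω + U ω)‖ ∂μ ≤ 3 * ((1 + c) * η ^ 3) := by
    have h1 := integral_norm_expIRem_le hGU 1
    have h2 := integral_abs_pow_le hGU hη mGU (k := 3) (by norm_num)
    simp only [one_mul, abs_one, one_pow, mul_one] at h1
    linarith
  have bR0 : ∫ ω, ‖expIRem (G ω)‖ ∂μ ≤ 3 * ((1 + c) * η ^ 3) := by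
    have h1 := integral_norm_expIRem_le hG 1
    have h2 := integral_abs_pow_le hG hη mG (k := 3) (by norm_num)
    simp only [one_mul, abs_one, one_pow, mul_one] at h1
    linarith
  set W : Ω → ℂ := fun ω => ((G ω + U ω : ℝ) : ℂ) ^ 2 - (G ω : ℂ) ^ 2 with hW
  have iW : Integrable W μ := iGU2.sub iG2
  set w : ℝ := ∫ ω, (G ω + U ω) ^ 2 ∂μ - ∫ ω, G ω ^ 2 ∂μ with hw
  have hWw : ∫ ω, W ω ∂μ = (w : ℂ) := by
    have e1 : ∫ ω, ((G ω + U ω : ℝ) : ℂ) ^ 2 ∂μ = ((∫ ω, (G ω + U ω) ^ 2 ∂μ : ℝ) : ℂ) := by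
      rw [← integral_complex_ofReal]; push_cast; rfl
    have e2 : ∫ ω, (G ω : ℂ) ^ 2 ∂μ = ((∫ ω, G ω ^ 2 ∂μ : ℝ) : ℂ) := by
      rw [← integral_complex_ofReal]; push_cast; rfl
    rw [hW, integral_sub iGU2 iG2, e1, e2, hw]; push_cast; rfl
  have bw : |w| ≤ (1 + c) * η ^ 2 := by
    have h1 := integral_abs_pow_le hGU hη mGU (k := 2) (by norm_num)
    have h2 := integral_abs_pow_le hG hη mG (k := 2) (by norm_num)
    simp only [sq_abs] at h1 h2
    have h3 : 0 ≤ ∫ ω, (G ω + U ω) ^ 2 ∂μ := integral_nonneg fun ω => sq_nonneg _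
    have h4 : 0 ≤ ∫ ω, G ω ^ 2 ∂μ := integral_nonneg fun ω => sq_nonneg _
    rw [abs_le]; constructor <;> linarith
  have covU : ∫ ω, expI (X ω + Y ω) * (U ω : ℂ) ∂μ =
      covC μ (fun ω => expI (X ω + Y ω)) (fun ω => (U ω : ℂ)) := by
    rw [covC, integral_complex_ofReal, hU0]; simp
  have covW : ∫ ω, expI (X ω) * W ω ∂μ = covC μ (fun ω => expI (X ω)) W +
      (∫ ω, expI (X ω) ∂μ) * w := by
    rw [covC, hWw]; ring
  have hcovW : ‖covC μ (fun ω => expI (X ω)) W‖ ≤ 2 * e := by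
    have : W = fun ω => ((G ω + U ω : ℝ) : ℂ) ^ 2 + (-1) * (G ω : ℂ) ^ 2 := by
      funext ω; simp only [hW]; ring
    rw [this, covC_add aX iGU2 (iG2.const_mul _), covC_const_mul]
    refine (norm_add_le _ _).trans ?_
    rw [norm_mul]; simp only [norm_neg, norm_one, one_mul]; linarith
  set D : Ω → ℂ := fun ω => (expI (X ω + Y ω) - expI (X ω)) * W ω with hD
  have iD : Integrable D μ := by
    have := (integrable_expI_mul aXY iW).sub (integrable_expI_mul aX iW)
    refine this.congr (ae_of_all _ fun ω => ?_)
    simp only [Pi.sub_apply, hD]; ring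
  have bD : ‖∫ ω, D ω ∂μ‖ ≤ 2 * ((1 + 2 * c) * η ^ 3) := by
    have h1 := integral_abs_mul_sq_le hGU hY hη mGU mY
    have h2 := integral_abs_mul_sq_le hG hY hη mG mY
    refine (norm_integral_le_integral_norm _).trans ?_
    calc ∫ ω, ‖D ω‖ ∂μ ≤ ∫ ω, (|Y ω| * (G ω + U ω) ^ 2 + |Y ω| * G ω ^ 2) ∂μ := by
          refine integral_mono iD.norm
            ((hGU.integrable_abs_mul_sq hY).add (hG.integrable_abs_mul_sq hY)) fun ω => ?_
          simp only [hD, norm_mul, ← mul_add]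
          gcongr
          · refine (norm_expI_sub_expI_le _ _).trans (le_of_eq ?_)
            simp
          · refine (norm_sub_le _ _).trans (le_of_eq ?_)
            rw [norm_pow, norm_pow, Complex.norm_real, Complex.norm_real, Real.norm_eq_abs,
              Real.norm_eq_abs, sq_abs, sq_abs]
      _ = _ := integral_add (hGU.integrable_abs_mul_sq hY) (hG.integrable_abs_mul_sq hY)
      _ ≤ _ := by linarith
  have bR : ‖∫ ω, expI (X ω + Y ω) * (expIRem (G ω + U ω) - expIRem (G ω)) ∂μ‖ ≤
      6 * ((1 + c) * η ^ 3) := by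
    refine (norm_integral_le_integral_norm _).trans ?_
    calc _ ≤ ∫ ω, (‖expIRem (G ω + U ω)‖ + ‖expIRem (G ω)‖) ∂μ := by
          refine integral_mono (integrable_expI_mul aXY (iR1.sub iR0)).norm
            (iR1.norm.add iR0.norm) fun ω => ?_
          simp only [norm_mul, norm_expI, one_mul]
          exact norm_sub_le _ _
      _ = _ := integral_add iR1.norm iR0.norm
      _ ≤ _ := by linarith
  have iXYG : Integrable (fun ω => expI (X ω + Y ω + G ω)) μ := integrable_expI (aXY.add aG)
  have bz : ‖∫ ω, expI (X ω + Y ω + G ω) ∂μ - ∫ ω, expI (X ω) ∂μ‖ ≤ (1 + c) * η := by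
    have h1 := integral_abs_pow_le hYG hη mYG (k := 1) (by norm_num)
    simp only [pow_one] at h1
    rw [← integral_sub iXYG (integrable_expI aX)]
    refine (norm_integral_le_integral_norm _).trans (le_trans ?_ h1)
    refine integral_mono (iXYG.sub (integrable_expI aX)).norm
      hYG.integrable_of_four.abs fun ω => ?_
    refine (norm_expI_sub_expI_le _ _).trans (le_of_eq ?_)
    congr 1; ring
  have main : ∫ ω, expI (X ω + Y ω + G ω + U ω) ∂μ = ∫ ω, expI (X ω + Y ω + G ω) ∂μ +
      (Complex.I * ∫ ω, expI (X ω + Y ω) * (U ω : ℂ) ∂μ +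
        ((-1 / 2) * ∫ ω, expI (X ω) * W ω ∂μ + ((-1 / 2) * ∫ ω, D ω ∂μ +
          ∫ ω, expI (X ω + Y ω) * (expIRem (G ω + U ω) - expIRem (G ω)) ∂μ))) := by
    have j1 := (integrable_expI_mul aXY iU).const_mul Complex.I
    have j2 := (integrable_expI_mul aX iW).const_mul (-1 / 2)
    have j3 := iD.const_mul (-1 / 2)
    have j4 := integrable_expI_mul aXY (iR1.sub iR0)
    have j34 := j3.fun_add j4
    have j234 := j2.fun_add j34
    have j1234 := j1.fun_add j234
    rw [← integral_const_mul, ← integral_const_mul, ← integral_const_mul]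
    simp only [Pi.sub_apply] at j1234 j234 j34 j4
    rw [← integral_add j3 j4, ← integral_add j2 j34, ← integral_add j1 j234,
      ← integral_add iXYG j1234]
    refine integral_congr_ae (ae_of_all _ fun ω => ?_)
    simp only [hD, hW, expIRem, expI_add]
    push_cast
    ring
  have fin : ∫ ω, expI (X ω + Y ω + G ω + U ω) ∂μ - (∫ ω, expI (X ω + Y ω + G ω) ∂μ) *
      (1 - (w : ℂ) / 2) =
      Complex.I * covC μ (fun ω => expI (X ω + Y ω)) (fun ω => (U ω : ℂ)) +
      ((-1 / 2) * covC μ (fun ω => expI (X ω)) W +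
      ((1 / 2) * ((∫ ω, expI (X ω + Y ω + G ω) ∂μ - ∫ ω, expI (X ω) ∂μ) * w) +
      ((-1 / 2) * ∫ ω, D ω ∂μ +
          ∫ ω, expI (X ω + Y ω) * (expIRem (G ω + U ω) - expIRem (G ω)) ∂μ))) := by
    rw [main, covW, covU]; ring
  rw [fin]
  have n3 : ‖(∫ ω, expI (X ω + Y ω + G ω) ∂μ - ∫ ω, expI (X ω) ∂μ) * (w : ℂ)‖ ≤
      ((1 + c) * η) * ((1 + c) * η ^ 2) := by
    rw [norm_mul, Complex.norm_real, Real.norm_eq_abs]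
    gcongr
  have half : ‖(-1 / 2 : ℂ)‖ = 1 / 2 := by norm_num
  have half' : ‖(1 / 2 : ℂ)‖ = 1 / 2 := by norm_num
  calc _ ≤ e + ((1 / 2) * (2 * e) + ((1 / 2) * (((1 + c) * η) * ((1 + c) * η ^ 2)) +
        ((1 / 2) * (2 * ((1 + 2 * c) * η ^ 3)) + 6 * ((1 + c) * η ^ 3)))) := by
        refine (norm_add_le _ _).trans (add_le_add ?_ ((norm_add_le _ _).trans (add_le_add ?_
          ((norm_add_le _ _).trans (add_le_add ?_ ((norm_add_le _ _).trans
            (add_le_add ?_ bR)))))))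
        · rw [norm_mul, Complex.norm_I, one_mul]; exact cU
        · rw [norm_mul, half]; gcongr
        · rw [norm_mul, half']; gcongr
        · rw [norm_mul, half]; gcongr
    _ ≤ _ := by
        have h3 := pow_pos hη 3
        nlinarith [mul_nonneg hc h3.le, mul_nonneg (mul_nonneg hc hc) h3.le]

end Covariance

section Scenery

variable {Ω : Type*} [MeasurableSpace Ω] {μ : Measure Ω} {ξ : ℤ → Ω → ℝ}

lemma Cond3.memLp (h3 : Cond3 μ ξ) (hm : ∀ k, Measurable (ξ k)) (k : ℤ) : MemLp (ξ k) 4 μ := by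
  rw [← integrable_norm_rpow_iff (hm k).aestronglyMeasurable (by norm_num) (by norm_num)]
  refine (h3.2.2 k).congr (ae_of_all _ fun ω => ?_)
  have : (ENNReal.toReal 4) = ((4 : ℕ) : ℝ) := by norm_num
  simp only [this, Real.rpow_natCast, Real.norm_eq_abs]
  exact (Even.pow_abs (by decide) _).symm

lemma IsStationarySeq.integral_comp {E : Type*} [NormedAddCommGroup E] [NormedSpace ℝ E]
    (hs : IsStationarySeq μ ξ) (hm : ∀ k, Measurable (ξ k)) {q : ℕ} (k : Fin q → ℤ) (j : ℤ)
    {f : (Fin q → ℝ) → E} (hf : StronglyMeasurable f) :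
    ∫ ω, f (fun i => ξ (k i + j) ω) ∂μ = ∫ ω, f (fun i => ξ (k i) ω) ∂μ := by
  have h1 : Measurable (fun ω (i : Fin q) => ξ (k i + j) ω) := measurable_pi_lambda _ fun i => hm _
  have h2 : Measurable (fun ω (i : Fin q) => ξ (k i) ω) := measurable_pi_lambda _ fun i => hm _
  rw [← integral_map h1.aemeasurable hf.aestronglyMeasurable,
    ← integral_map h2.aemeasurable hf.aestronglyMeasurable, hs j q k]

/-- Autocovariance function of the scenery. -/
def autocov (μ : Measure Ω) (ξ : ℤ → Ω → ℝ) (p : ℤ) : ℝ := ∫ ω, ξ 0 ω * ξ p ω ∂μ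

lemma IsStationarySeq.integral_mul_eq_autocov (hs : IsStationarySeq μ ξ)
    (hm : ∀ k, Measurable (ξ k)) (k l : ℤ) :
    ∫ ω, ξ k ω * ξ l ω ∂μ = autocov μ ξ (l - k) := by
  have := hs.integral_comp hm ![0, l - k] k (f := fun x => x 0 * x 1)
    (by fun_prop : Measurable fun x : Fin 2 → ℝ => x 0 * x 1).stronglyMeasurable
  simpa [autocov] using this

lemma IsStationarySeq.autocov_neg (hs : IsStationarySeq μ ξ)
    (hm : ∀ k, Measurable (ξ k)) (p : ℤ) : autocov μ ξ (-p) = autocov μ ξ p := by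
  have h := hs.integral_mul_eq_autocov hm p 0
  rw [zero_sub] at h
  rw [← h, autocov]
  simp only [mul_comm]

lemma summable_sqrt_mul_autocov (hs : IsStationarySeq μ ξ) (hm : ∀ k, Measurable (ξ k))
    (h4 : Cond4 μ ξ) : Summable fun p : ℤ => √(1 + |(p : ℝ)|) * |autocov μ ξ p| := by
  have h1 : Summable fun p : ℕ => √(1 + |((p : ℤ) : ℝ)|) * |autocov μ ξ (p : ℤ)| := by
    simpa [autocov] using h4.1
  refine Summable.of_nat_of_neg h1 ?_
  simpa [hs.autocov_neg hm] using h1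

lemma summable_abs_autocov (hs : IsStationarySeq μ ξ) (hm : ∀ k, Measurable (ξ k))
    (h4 : Cond4 μ ξ) : Summable fun p : ℤ => |autocov μ ξ p| := by
  refine Summable.of_nonneg_of_le (fun p => abs_nonneg _) (fun p => ?_)
    (summable_sqrt_mul_autocov hs hm h4)
  refine le_mul_of_one_le_left (abs_nonneg _) ?_
  rw [Real.one_le_sqrt]
  linarith [abs_nonneg (p : ℝ)]

/-- Fourth moment bound for weighted sums over a window of length `w`. -/
lemma integral_weightedSum_pow_four_le [IsProbabilityMeasure μ] (hm : ∀ k, Measurable (ξ k))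
    (h3 : Cond3 μ ξ) {B : ℝ}
    (hB : ∀ N : ℕ, 1 ≤ N →
      ∑ k₁ ∈ Finset.range N, ∑ k₂ ∈ Finset.range N, ∑ k₃ ∈ Finset.range N,
        ∑ k₄ ∈ Finset.range N,
          |∫ ω, ξ (k₁ : ℤ) ω * ξ (k₂ : ℤ) ω * ξ (k₃ : ℤ) ω * ξ (k₄ : ℤ) ω ∂μ| ≤ B * (N : ℝ) ^ 2)
    {β : ℕ → ℝ} {c : ℝ} (hβ : ∀ k, |β k| ≤ c) (m w : ℕ) :
    ∫ ω, (∑ i ∈ Finset.range w, β i * ξ ((i : ℤ) + m) ω) ^ 4 ∂μ ≤ c ^ 4 * (B * (w : ℝ) ^ 2) := by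
  have hc : 0 ≤ c := (abs_nonneg _).trans (hβ 0)
  rcases Nat.eq_zero_or_pos w with rfl | hw
  · simp
  have hex : ∀ x : ℕ → ℝ, (∑ i ∈ Finset.range w, x i) ^ 4 = ∑ k₁ ∈ Finset.range w,
      ∑ k₂ ∈ Finset.range w, ∑ k₃ ∈ Finset.range w, ∑ k₄ ∈ Finset.range w,
        x k₁ * x k₂ * x k₃ * x k₄ := by
    intro x
    simp only [← Finset.mul_sum, ← Finset.sum_mul]
    ring
  have hint : ∀ k₁ k₂ k₃ k₄ : ℕ, Integrable (fun ω => (β k₁ * ξ ((k₁ : ℤ) + m) ω) *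
      (β k₂ * ξ ((k₂ : ℤ) + m) ω) * (β k₃ * ξ ((k₃ : ℤ) + m) ω) *
        (β k₄ * ξ ((k₄ : ℤ) + m) ω)) μ := by
    intro k₁ k₂ k₃ k₄
    have hp : ∀ k : ℕ, MemLp (fun ω => β k * ξ ((k : ℤ) + m) ω) 4 μ := fun k =>
      (h3.memLp hm _).const_mul _
    refine Integrable.mono' ((((hp k₁).integrable_pow_four.add (hp k₂).integrable_pow_four).add
      (hp k₃).integrable_pow_four).add (hp k₄).integrable_pow_four)
      ((((hp k₁).aestronglyMeasurable.mul (hp k₂).aestronglyMeasurable).mul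
      (hp k₃).aestronglyMeasurable).mul (hp k₄).aestronglyMeasurable) (ae_of_all _ fun ω => ?_)
    simp only [Pi.add_apply, Real.norm_eq_abs]
    generalize β k₁ * ξ ((k₁ : ℤ) + m) ω = x
    generalize β k₂ * ξ ((k₂ : ℤ) + m) ω = y
    generalize β k₃ * ξ ((k₃ : ℤ) + m) ω = z
    generalize β k₄ * ξ ((k₄ : ℤ) + m) ω = u
    have h1 : |x * y * z * u| ≤ ((x * y) ^ 2 + (z * u) ^ 2) / 2 := by
      rw [abs_le]; constructor <;> nlinarith [sq_nonneg (x * y - z * u), sq_nonneg (x * y + z * u)]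
    have h2 : (x * y) ^ 2 ≤ (x ^ 4 + y ^ 4) / 2 := by nlinarith [sq_nonneg (x ^ 2 - y ^ 2)]
    have h3 : (z * u) ^ 2 ≤ (z ^ 4 + u ^ 4) / 2 := by nlinarith [sq_nonneg (z ^ 2 - u ^ 2)]
    have : 0 ≤ x ^ 4 + y ^ 4 + z ^ 4 + u ^ 4 := by positivity
    linarith
  simp only [hex]
  rw [integral_finsetSum _ fun k₁ _ => integrable_finsetSum _ fun k₂ _ =>
    integrable_finsetSum _ fun k₃ _ => integrable_finsetSum _ fun k₄ _ => hint k₁ k₂ k₃ k₄]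
  calc _ ≤ ∑ k₁ ∈ Finset.range w, ∑ k₂ ∈ Finset.range w, ∑ k₃ ∈ Finset.range w,
        ∑ k₄ ∈ Finset.range w, c ^ 4 *
          |∫ ω, ξ (k₁ : ℤ) ω * ξ (k₂ : ℤ) ω * ξ (k₃ : ℤ) ω * ξ (k₄ : ℤ) ω ∂μ| := by
        refine Finset.sum_le_sum fun k₁ _ => ?_
        rw [integral_finsetSum _ fun k₂ _ => integrable_finsetSum _ fun k₃ _ =>
          integrable_finsetSum _ fun k₄ _ => hint k₁ k₂ k₃ k₄]
        refine Finset.sum_le_sum fun k₂ _ => ?_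
        rw [integral_finsetSum _ fun k₃ _ => integrable_finsetSum _ fun k₄ _ => hint k₁ k₂ k₃ k₄]
        refine Finset.sum_le_sum fun k₃ _ => ?_
        rw [integral_finsetSum _ fun k₄ _ => hint k₁ k₂ k₃ k₄]
        refine Finset.sum_le_sum fun k₄ _ => ?_
        have hst := h3.1.integral_comp hm ![(k₁ : ℤ), k₂, k₃, k₄] m
          (f := fun x => x 0 * x 1 * x 2 * x 3)
          (by fun_prop : Measurable fun x : Fin 4 → ℝ => x 0 * x 1 * x 2 * x 3).stronglyMeasurable
        simp only [Matrix.cons_val] at hst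
        rw [← hst]
        have : ∀ ω, (β k₁ * ξ ((k₁ : ℤ) + m) ω) *
          (β k₂ * ξ ((k₂ : ℤ) + m) ω) * (β k₃ * ξ ((k₃ : ℤ) + m) ω) *
          (β k₄ * ξ ((k₄ : ℤ) + m) ω) = (β k₁ * β k₂ * β k₃ * β k₄) *
          (ξ ((k₁ : ℤ) + m) ω * ξ ((k₂ : ℤ) + m) ω * ξ ((k₃ : ℤ) + m) ω * ξ ((k₄ : ℤ) + m) ω) :=
          fun ω => by ring
        simp only [this]
        rw [integral_const_mul]
        refine (le_abs_self _).trans ?_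
        rw [abs_mul]
        gcongr
        rw [abs_mul, abs_mul, abs_mul]
        calc _ ≤ c * c * c * c := by gcongr <;> exact hβ _
          _ = c ^ 4 := by ring
    _ ≤ _ := by
        simp only [← Finset.mul_sum]
        gcongr
        exact hB w hw

/-- Weighted partial sums of the scenery. -/
def weightedSum {Ω : Type*} (ξ : ℤ → Ω → ℝ) (b : ℕ → ℝ) (m : ℕ) (ω : Ω) : ℝ :=
  ∑ k ∈ Finset.range m, b k * ξ k ω

lemma memLp_weightedSum (hm : ∀ k, Measurable (ξ k)) (h3 : Cond3 μ ξ) (b : ℕ → ℝ) (m : ℕ) :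
    MemLp (weightedSum ξ b m) 4 μ := by
  unfold weightedSum
  exact memLp_finsetSum _ fun k _ => (h3.memLp hm _).const_mul _

lemma weightedSum_sub {Ω : Type*} {ξ : ℤ → Ω → ℝ} (b : ℕ → ℝ) {m m' : ℕ} (h : m ≤ m') (ω : Ω) :
    weightedSum ξ b m' ω - weightedSum ξ b m ω = ∑ k ∈ Finset.Ico m m', b k * ξ k ω :=
  (Finset.sum_Ico_eq_sub _ h).symm

lemma integral_weightedSum_sub_pow_four_le [IsProbabilityMeasure μ] (hm : ∀ k, Measurable (ξ k))
    (h3 : Cond3 μ ξ) {B : ℝ}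
    (hB : ∀ N : ℕ, 1 ≤ N →
      ∑ k₁ ∈ Finset.range N, ∑ k₂ ∈ Finset.range N, ∑ k₃ ∈ Finset.range N,
        ∑ k₄ ∈ Finset.range N,
          |∫ ω, ξ (k₁ : ℤ) ω * ξ (k₂ : ℤ) ω * ξ (k₃ : ℤ) ω * ξ (k₄ : ℤ) ω ∂μ| ≤ B * (N : ℝ) ^ 2)
    {b : ℕ → ℝ} {c : ℝ} (hb : ∀ k, |b k| ≤ c) {m m' w : ℕ} (h : m ≤ m') (hw : m' ≤ m + w) :
    ∫ ω, (weightedSum ξ b m' ω - weightedSum ξ b m ω) ^ 4 ∂μ ≤ c ^ 4 * (B * (w : ℝ) ^ 2) := by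
  have hB0 : 0 ≤ B := by
    have h1 := hB 1 le_rfl
    have : (0 : ℝ) ≤ B * ((1 : ℕ) : ℝ) ^ 2 := by
      refine le_trans ?_ h1
      positivity
    simpa using this
  have h4 := integral_weightedSum_pow_four_le hm h3 hB (β := fun i => b (m + i))
    (fun k => hb _) m (m' - m)
  simp only [weightedSum_sub b h, Finset.sum_Ico_eq_sum_range]
  have hcast : ∀ i : ℕ, ((m + i : ℕ) : ℤ) = (i : ℤ) + m := fun i => by push_cast; ring
  simp only [hcast]
  refine h4.trans ?_
  have : ((m' - m : ℕ) : ℝ) ≤ w := by exact_mod_cast (by omega : m' - m ≤ w)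
  gcongr

end Scenery

section Blocks

variable {Ω : Type*} [MeasurableSpace Ω] {μ : Measure Ω} [IsProbabilityMeasure μ]
  {ξ : ℤ → Ω → ℝ}

lemma norm_covC_weightedSum_le {C : ℝ} {φ : ℕ → ℕ → ℝ} {r : ℕ} (hC : 0 < C)
    (hφ : ∀ p s, 0 ≤ φ p s) (hbd : Cond5Bound μ ξ C φ) {b : ℕ → ℝ} {c : ℝ}
    (hb : ∀ k, |b k| ≤ c) {m₂ m₃ w m m' : ℕ} (hgap : m₂ = 0 ∨ m₂ + r * w ≤ m₃)
    (h₁ : m₃ ≤ m) (h₂ : m ≤ m') (h₃ : m' ≤ m₃ + w) (h : ℝ) :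
    ‖covC μ (fun ω => expI (weightedSum ξ b m₂ ω))
        (fun ω => expI (h * (weightedSum ξ b m' ω - weightedSum ξ b m ω)))‖
      ≤ C * (1 + m₂ * c + |h| * (w * c)) * φ (r * w) w := by
  have hc : 0 ≤ c := (abs_nonneg _).trans (hb 0)
  rcases hgap with rfl | hgap
  · have : covC μ (fun ω => expI (weightedSum ξ b 0 ω))
        (fun ω => expI (h * (weightedSum ξ b m' ω - weightedSum ξ b m ω))) = 0 := by
      simp [covC, weightedSum, expI_zero]
    rw [this, norm_zero]
    have := hφ (r * w) w
    positivity
  have key : ∀ {T S : Finset ℕ} (_ : T ⊆ S) (β x : ℕ → ℝ),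
      ∑ k ∈ S, (if k ∈ T then β k else 0) * x k = ∑ k ∈ T, β k * x k := by
    intro T S hTS β x
    simp only [ite_mul, zero_mul, Finset.sum_ite_mem, Finset.inter_eq_right.2 hTS]
  have keyabs : ∀ {T S : Finset ℕ} (_ : T ⊆ S) (β : ℕ → ℝ),
      ∑ k ∈ S, |if k ∈ T then β k else 0| = ∑ k ∈ T, |β k| := by
    intro T S hTS β
    simp only [apply_ite abs, abs_zero, Finset.sum_ite_mem, Finset.inter_eq_right.2 hTS]
  have hT₁ : Finset.range m₂ ⊆ Finset.Icc 0 (m₃ - r * w) := by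
    intro k; simp only [Finset.mem_range, Finset.mem_Icc]; omega
  have hT₂ : Finset.Ico m m' ⊆ Finset.Icc m₃ (m₃ + w) := by
    intro k; simp only [Finset.mem_Ico, Finset.mem_Icc]; omega
  have hcov := hbd 0 (m₃ - r * w) m₃ (m₃ + w) (Nat.zero_le _) (Nat.sub_le _ _)
    (Nat.le_add_right _ _) (fun k => if k ∈ Finset.range m₂ then b k else 0)
    (fun k => if k ∈ Finset.Ico m m' then h * b k else 0)
  have e1 : ∀ ω, ∑ k ∈ Finset.Icc 0 (m₃ - r * w), (if k ∈ Finset.range m₂ then b k else 0) *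
      ξ (k : ℤ) ω = weightedSum ξ b m₂ ω := fun ω => key hT₁ b fun k => ξ (k : ℤ) ω
  have e2 : ∀ ω, ∑ k ∈ Finset.Icc m₃ (m₃ + w), (if k ∈ Finset.Ico m m' then h * b k else 0) *
      ξ (k : ℤ) ω = h * (weightedSum ξ b m' ω - weightedSum ξ b m ω) := fun ω => by
    rw [key hT₂ (fun k => h * b k) fun k => ξ (k : ℤ) ω, weightedSum_sub b h₂, Finset.mul_sum]
    simp only [mul_assoc]
  simp only [e1, e2, keyabs hT₁ b, keyabs hT₂ (fun k => h * b k)] at hcov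
  rw [show m₃ - (m₃ - r * w) = r * w by omega, show m₃ + w - m₃ = w by omega] at hcov
  refine hcov.trans ?_
  have s1 : ∑ k ∈ Finset.range m₂, |b k| ≤ m₂ * c := by
    refine (Finset.sum_le_sum fun k _ => hb k).trans (le_of_eq ?_)
    simp
  have s2 : ∑ k ∈ Finset.Ico m m', |h * b k| ≤ |h| * (w * c) := by
    simp only [abs_mul, ← Finset.mul_sum]
    gcongr
    refine (Finset.sum_le_sum fun k _ => hb k).trans ?_
    simp only [Finset.sum_const, Nat.card_Ico, nsmul_eq_mul]
    have : ((m' - m : ℕ) : ℝ) ≤ w := by exact_mod_cast (by omega : m' - m ≤ w)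
    gcongr
  have := hφ (r * w) w
  gcongr

/-- The correlation of a block with the sums stopped `g` sites before it. -/
lemma abs_integral_mul_weightedSum_le (hm : ∀ k, Measurable (ξ k)) (h3 : Cond3 μ ξ)
    (hsum : Summable fun p : ℕ => |autocov μ ξ p|) {b : ℕ → ℝ} {c : ℝ}
    (hb : ∀ k, |b k| ≤ c) {m₂ m m' g : ℕ} (hgap : m₂ = 0 ∨ m₂ + g ≤ m) (hmm : m ≤ m') :
    |∫ ω, (weightedSum ξ b m' ω - weightedSum ξ b m ω) * weightedSum ξ b m₂ ω ∂μ| ≤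
      c ^ 2 * ((m' - m : ℕ) * ∑' p : ℕ, |autocov μ ξ ((p + g : ℕ) : ℤ)|) := by
  have hc : 0 ≤ c := (abs_nonneg _).trans (hb 0)
  have hsum' : Summable fun p : ℕ => |autocov μ ξ ((p + g : ℕ) : ℤ)| :=
    (summable_nat_add_iff g).2 hsum
  rcases hgap with rfl | hgap
  · simp only [weightedSum, Finset.range_zero, Finset.sum_empty, mul_zero, integral_zero, abs_zero]
    have : 0 ≤ ∑' p : ℕ, |autocov μ ξ ((p + g : ℕ) : ℤ)| := tsum_nonneg fun p => abs_nonneg _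
    positivity
  have hint : ∀ k l : ℕ, Integrable (fun ω => (b k * ξ k ω) * (b l * ξ l ω)) μ := fun k l =>
    ((h3.memLp hm _).const_mul (b k)).integrable_mul_of_four ((h3.memLp hm _).const_mul (b l))
  simp only [weightedSum_sub b hmm]
  simp only [weightedSum, Finset.sum_mul_sum]
  rw [integral_finsetSum _ fun k _ => integrable_finsetSum _ fun l _ => hint k l]
  have inner : ∀ k ∈ Finset.Ico m m',
      |∫ ω, ∑ l ∈ Finset.range m₂, (b k * ξ k ω) * (b l * ξ l ω) ∂μ| ≤
        c ^ 2 * ∑' p : ℕ, |autocov μ ξ ((p + g : ℕ) : ℤ)| := by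
    intro k hk
    rw [Finset.mem_Ico] at hk
    rw [integral_finsetSum _ fun l _ => hint k l]
    have term : ∀ l ∈ Finset.range m₂, |∫ ω, (b k * ξ k ω) * (b l * ξ l ω) ∂μ| ≤
        c ^ 2 * |autocov μ ξ ((k - l - g + g : ℕ) : ℤ)| := by
      intro l hl
      rw [Finset.mem_range] at hl
      have : ∀ ω, (b k * ξ k ω) * (b l * ξ l ω) = (b k * b l) * (ξ l ω * ξ k ω) := fun ω => by ring
      simp only [this]
      rw [integral_const_mul, h3.1.integral_mul_eq_autocov hm, abs_mul, abs_mul]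
      rw [show ((k - l - g + g : ℕ) : ℤ) = (k : ℤ) - l by omega, sq]
      gcongr <;> exact hb _
    refine (Finset.abs_sum_le_sum_abs _ _).trans ((Finset.sum_le_sum term).trans ?_)
    rw [← Finset.mul_sum]
    gcongr
    have hinj : Set.InjOn (fun l => k - l - g) (Finset.range m₂) := by
      intro x hx y hy hxy
      simp only [Finset.coe_range, Set.mem_Iio] at hx hy hxy
      omega
    rw [← Finset.sum_image (f := fun p : ℕ => |autocov μ ξ ((p + g : ℕ) : ℤ)|) hinj]
    exact hsum'.sum_le_tsum _ fun _ _ => abs_nonneg _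
  refine (Finset.abs_sum_le_sum_abs _ _).trans ((Finset.sum_le_sum inner).trans (le_of_eq ?_))
  simp only [Finset.sum_const, Nat.card_Ico, nsmul_eq_mul]
  ring

/-- Discrete Grönwall comparison of a perturbed multiplicative recursion with a Gaussian
characteristic function. -/
lemma norm_sub_exp_le_of_recursion {z : ℕ → ℂ} {q : ℕ → ℝ} {J : ℕ} {d e : ℝ} (hd : 0 ≤ d)
    (hd1 : d ≤ 1) (he : 0 ≤ e) (z0 : z 0 = 1) (q0 : q 0 = 0) (hq : ∀ j, 0 ≤ q j)
    (hv : ∀ j < J, |q (j + 1) - q j| ≤ d)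
    (hz : ∀ j < J, ‖z (j + 1) - z j * (1 - ((q (j + 1) - q j : ℝ) : ℂ) / 2)‖ ≤ e) :
    ‖z J - (Real.exp (-q J / 2) : ℂ)‖ ≤ J * ((1 + d) ^ J * (e + d ^ 2)) := by
  have main : ∀ j ≤ J, ‖z j - (Real.exp (-q j / 2) : ℂ)‖ ≤ j * ((1 + d) ^ j * (e + d ^ 2)) := by
    intro j
    induction j with
    | zero => intro _; simp [z0, q0]
    | succ j ih =>
      intro hj
      have ih := ih (by omega)
      set v := q (j + 1) - q j with hvdef
      have hvj : |v| ≤ d := hv j (by omega)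
      have hzj := hz j (by omega)
      have hexp : Real.exp (-q (j + 1) / 2) = Real.exp (-q j / 2) * Real.exp (-v / 2) := by
        rw [← Real.exp_add]; congr 1; rw [hvdef]; ring
      have hrem : |(1 - v / 2) - Real.exp (-v / 2)| ≤ d ^ 2 := by
        have habs : |-v / 2| ≤ d / 2 := by rw [abs_div, abs_neg, abs_two]; linarith
        have := Real.abs_exp_sub_one_sub_id_le (x := -v / 2) (by linarith)
        rw [abs_sub_comm]
        have e1 : Real.exp (-v / 2) - (1 - v / 2) = Real.exp (-v / 2) - 1 - -v / 2 := by ring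
        rw [e1]
        refine this.trans ?_
        rw [← sq_abs]
        have : |-v / 2| ^ 2 ≤ (d / 2) ^ 2 := by gcongr
        nlinarith
      have hle1 : Real.exp (-q j / 2) ≤ 1 := Real.exp_le_one_iff.2 (by linarith [hq j])
      have split : z (j + 1) - (Real.exp (-q (j + 1) / 2) : ℂ) =
          (z (j + 1) - z j * (1 - ((v : ℝ) : ℂ) / 2)) +
          ((z j - (Real.exp (-q j / 2) : ℂ)) * ((1 - v / 2 : ℝ) : ℂ) +
          ((Real.exp (-q j / 2) * ((1 - v / 2) - Real.exp (-v / 2)) : ℝ) : ℂ)) := by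
        rw [hexp]; push_cast; ring
      have n1 : ‖(z j - (Real.exp (-q j / 2) : ℂ)) * ((1 - v / 2 : ℝ) : ℂ)‖ ≤
          (j * ((1 + d) ^ j * (e + d ^ 2))) * (1 + d) := by
        rw [norm_mul, Complex.norm_real, Real.norm_eq_abs]
        gcongr
        rw [abs_le] at hvj ⊢
        constructor <;> linarith
      have n2 : ‖((Real.exp (-q j / 2) * ((1 - v / 2) - Real.exp (-v / 2)) : ℝ) : ℂ)‖ ≤ d ^ 2 := by
        rw [Complex.norm_real, Real.norm_eq_abs, abs_mul, abs_of_pos (Real.exp_pos _)]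
        calc _ ≤ 1 * d ^ 2 := by gcongr
          _ = _ := one_mul _
      rw [split]
      refine (norm_add_le _ _).trans ?_
      have n12 := (norm_add_le ((z j - (Real.exp (-q j / 2) : ℂ)) * ((1 - v / 2 : ℝ) : ℂ))
        ((Real.exp (-q j / 2) * ((1 - v / 2) - Real.exp (-v / 2)) : ℝ) : ℂ)).trans
          (add_le_add n1 n2)
      have hpow : (1 : ℝ) ≤ (1 + d) ^ (j + 1) := one_le_pow₀ (by linarith)
      have hed : 0 ≤ e + d ^ 2 := by positivity
      calc _ ≤ e + ((j * ((1 + d) ^ j * (e + d ^ 2))) * (1 + d) + d ^ 2) := add_le_add hzj n12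
        _ = j * ((1 + d) ^ (j + 1) * (e + d ^ 2)) + 1 * (e + d ^ 2) := by ring
        _ ≤ j * ((1 + d) ^ (j + 1) * (e + d ^ 2)) + (1 + d) ^ (j + 1) * (e + d ^ 2) := by gcongr
        _ = _ := by push_cast; ring
  exact main J le_rfl

end Blocks

section CentralLimit

variable {Ω : Type*} [MeasurableSpace Ω] {μ : Measure Ω} [IsProbabilityMeasure μ]
  {ξ : ℤ → Ω → ℝ}

lemma Cond3.integral_weightedSum (h3 : Cond3 μ ξ) (hm : ∀ k, Measurable (ξ k)) (b : ℕ → ℝ)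
    (m : ℕ) : ∫ ω, weightedSum ξ b m ω ∂μ = 0 := by
  unfold weightedSum
  rw [integral_finsetSum _ fun k _ => ((h3.memLp hm _).const_mul _).integrable_of_four]
  simp [integral_const_mul, h3.2.1]

lemma Nat.sub_mul_eq_zero_or_add_le (j a s : ℕ) : (j - a) * s = 0 ∨ (j - a) * s + a * s ≤ j * s := by
  rcases le_total j a with h | h
  · left; rw [Nat.sub_eq_zero_of_le h, zero_mul]
  · right; rw [← add_mul, Nat.sub_add_cancel h]

/-- One step of the recursion satisfied by the characteristic functions of the block sums. -/
lemma norm_integral_expI_weightedSum_succ_le {C : ℝ} {φ : ℕ → ℕ → ℝ} {r : ℕ} (hC : 0 < C)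
    (hφ : ∀ p s, 0 ≤ φ p s) (hbd : Cond5Bound μ ξ C φ) (hm : ∀ k, Measurable (ξ k))
    (h3 : Cond3 μ ξ) (hsum : Summable fun p : ℕ => |autocov μ ξ p|) {B : ℝ}
    (hB : ∀ N : ℕ, 1 ≤ N →
      ∑ k₁ ∈ Finset.range N, ∑ k₂ ∈ Finset.range N, ∑ k₃ ∈ Finset.range N,
        ∑ k₄ ∈ Finset.range N,
          |∫ ω, ξ (k₁ : ℤ) ω * ξ (k₂ : ℤ) ω * ξ (k₃ : ℤ) ω * ξ (k₄ : ℤ) ω ∂μ| ≤ B * (N : ℝ) ^ 2)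
    {b : ℕ → ℝ} {c : ℝ} (hb : ∀ k, |b k| ≤ c) {s J j : ℕ} (hj : j < J) {η M e ε : ℝ} (hη : 0 < η)
    (hM : c ^ 4 * (B * (((r + 1) ^ 2 * s : ℕ) : ℝ) ^ 2) ≤ M * η ^ 4)
    (he₁ : C * (1 + (J * s : ℕ) * c + (s : ℕ) * c) * φ (r * s) s ≤ e)
    (he₂ : C * (1 + (J * s : ℕ) * c + ((r + 1) * s : ℕ) * c) *
      φ (r * ((r + 1) * s)) ((r + 1) * s) ≤ e)
    (hε : c ^ 2 * (s * ∑' p : ℕ, |autocov μ ξ ((p + r * s : ℕ) : ℤ)|) ≤ ε) :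
    ‖∫ ω, expI (weightedSum ξ b ((j + 1) * s) ω) ∂μ -
        (∫ ω, expI (weightedSum ξ b (j * s) ω) ∂μ) *
        (1 - ((∫ ω, weightedSum ξ b ((j + 1) * s) ω ^ 2 ∂μ -
          ∫ ω, weightedSum ξ b (j * s) ω ^ 2 ∂μ : ℝ) : ℂ) / 2)‖ ≤
      4 * e + (32 + 34 * M + M ^ 2) * η ^ 3 + ε := by
  have hc : 0 ≤ c := (abs_nonneg _).trans (hb 0)
  have hp : ∀ m, MemLp (weightedSum ξ b m) 4 μ := memLp_weightedSum hm h3 b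
  set i₁ := (j - r) * s with hi₁
  set i₂ := (j - r - r * (r + 1)) * s with hi₂
  have gU := Nat.sub_mul_eq_zero_or_add_le j r s
  have gG := Nat.sub_mul_eq_zero_or_add_le (j - r) (r * (r + 1)) s
  rw [← hi₁] at gU gG
  rw [← hi₂, mul_assoc] at gG
  have l21 : i₂ ≤ i₁ := Nat.mul_le_mul_right _ (Nat.sub_le _ _)
  have l1j : i₁ ≤ j * s := Nat.mul_le_mul_right _ (Nat.sub_le _ _)
  have ljj : j * s ≤ (j + 1) * s := Nat.mul_le_mul_right _ (Nat.le_succ _)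
  have ljJ : j * s ≤ J * s := Nat.mul_le_mul_right _ hj.le
  have w1 : (j + 1) * s ≤ j * s + s := by rw [add_mul, one_mul]
  have w2 : (j + 1) * s ≤ i₁ + (r + 1) * s := by
    rw [hi₁, ← add_mul]; exact Nat.mul_le_mul_right _ (by omega)
  have w3 : j * s ≤ i₂ + (r + 1) ^ 2 * s := by
    rw [hi₂, ← add_mul]; refine Nat.mul_le_mul_right _ ?_
    have : (r + 1) ^ 2 = r + r * (r + 1) + 1 := by ring
    omega
  have w4 : (r + 1) * s ≤ (r + 1) ^ 2 * s := Nat.mul_le_mul_right _ (by nlinarith)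
  set A := weightedSum ξ b with hA
  have four : ∀ {m m' : ℕ}, m ≤ m' → m' ≤ m + (r + 1) ^ 2 * s →
      ∫ ω, (A m' ω - A m ω) ^ 4 ∂μ ≤ M * η ^ 4 := fun h h' =>
    (integral_weightedSum_sub_pow_four_le hm h3 hB hb h h').trans hM
  have cube : ∀ {m m' : ℕ}, m ≤ m' → m' ≤ m + (r + 1) ^ 2 * s →
      ∫ ω, |A m' ω - A m ω| ^ 3 ∂μ ≤ (1 + M) * η ^ 3 := fun h h' =>
    integral_abs_pow_le ((hp _).sub (hp _)) hη (four h h') (by norm_num)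
  have cov : ∀ {m₂ m₃ w m m' : ℕ}, m₂ ≤ J * s → (m₂ = 0 ∨ m₂ + r * w ≤ m₃) → m₃ ≤ m → m ≤ m' →
      m' ≤ m₃ + w → C * (1 + (J * s : ℕ) * c + w * c) * φ (r * w) w ≤ e → ∀ h : ℝ, |h| = 1 →
      ‖covC μ (fun ω => expI (A m₂ ω)) (fun ω => expI (h * (A m' ω - A m ω)))‖ ≤ e := by
    intro m₂ m₃ w m m' hJ hgap h₁ h₂ h₃ hle h hh
    refine (norm_covC_weightedSum_le hC hφ hbd hb hgap h₁ h₂ h₃ h).trans (le_trans ?_ hle)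
    rw [hh, one_mul]
    have := hφ (r * w) w
    have : (m₂ : ℝ) ≤ (J * s : ℕ) := by exact_mod_cast hJ
    gcongr
  have he0 : 0 ≤ e := (norm_nonneg _).trans
    (cov (m₂ := 0) (m₃ := j * s) (w := s) (Nat.zero_le _) (Or.inl rfl) le_rfl ljj w1 he₁ 1 abs_one)
  have covsq : ∀ {m m' : ℕ}, i₁ ≤ m → m ≤ m' → m' ≤ (j + 1) * s →
      ‖covC μ (fun ω => expI (A i₂ ω)) (fun ω => ((A m' ω - A m ω : ℝ) : ℂ) ^ 2)‖ ≤
        2 * e + 12 * ((1 + M) * η ^ 3) := by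
    intro m m' h₁ h₂ h₃
    have := norm_covC_sq_le (hp i₂).aestronglyMeasurable.aemeasurable ((hp m').sub (hp m))
      one_pos (cov (by omega) gG h₁ h₂ (by omega) he₂ 1 abs_one)
      (cov (by omega) gG h₁ h₂ (by omega) he₂ (-1) (by norm_num))
    refine this.trans ?_
    have := cube h₂ (by omega)
    simp only [Pi.sub_apply]
    linarith
  have covU : ‖covC μ (fun ω => expI (A i₁ ω))
      (fun ω => ((A ((j + 1) * s) ω - A (j * s) ω : ℝ) : ℂ))‖ ≤
        2 * e + 12 * ((1 + M) * η ^ 3) := by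
    have := norm_covC_self_le (hp i₁).aestronglyMeasurable.aemeasurable
      ((hp ((j + 1) * s)).sub (hp (j * s)))
      one_pos (cov (by omega) gU le_rfl ljj w1 he₁ 1 abs_one)
      (cov (by omega) gU le_rfl ljj w1 he₁ (-1) (by norm_num))
    refine this.trans ?_
    have h3' := cube ljj (by omega)
    have : 0 ≤ ∫ ω, |A ((j + 1) * s) ω - A (j * s) ω| ^ 3 ∂μ :=
      integral_nonneg fun ω => by positivity
    simp only [Pi.sub_apply]
    linarith
  have hU0 : ∫ ω, (A ((j + 1) * s) ω - A (j * s) ω) ∂μ = 0 := by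
    rw [integral_sub (hp _).integrable_of_four (hp _).integrable_of_four, hA,
      h3.integral_weightedSum hm, h3.integral_weightedSum hm, sub_zero]
  have tel : ∀ x y z : ℝ, (y - x) + (z - y) = z - x := fun x y z => by ring
  have tel' : ∀ x y : ℝ, x + (y - x) = y := fun x y => by ring
  have step := norm_integral_expI_step_le (hp i₂) ((hp i₁).sub (hp i₂)) ((hp (j * s)).sub (hp i₁))
    ((hp ((j + 1) * s)).sub (hp (j * s))) (c := M) (e := 2 * e + 12 * ((1 + M) * η ^ 3)) hη hU0
    (four l21 (by omega))
    (by simpa only [Pi.sub_apply, tel] using four (l21.trans l1j) w3)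
    (four l1j (by omega))
    (by simpa only [Pi.sub_apply, tel] using four (l1j.trans ljj) (by omega))
    (by simpa only [Pi.sub_apply, tel'] using covU)
    (covsq le_rfl l1j ljj)
    (by simpa only [Pi.sub_apply, tel] using covsq le_rfl (l1j.trans ljj) le_rfl)
  simp only [Pi.sub_apply, tel, tel'] at step
  -- comparison of the two variance increments
  have far := abs_integral_mul_weightedSum_le hm h3 hsum hb gU ljj
  rw [show (j + 1) * s - j * s = s by rw [add_mul, one_mul]; omega] at far
  replace far := far.trans hε
  rw [← hA] at far
  have isq : ∀ m, Integrable (fun ω => A m ω ^ 2) μ := fun m => (hp m).integrable_sq_of_four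
  have isub : ∀ m m', Integrable (fun ω => (A m' ω - A m ω) ^ 2) μ := fun m m' =>
    ((hp m').sub (hp m)).integrable_sq_of_four
  have hvar : ∫ ω, A ((j + 1) * s) ω ^ 2 ∂μ - ∫ ω, A (j * s) ω ^ 2 ∂μ =
      (∫ ω, (A ((j + 1) * s) ω - A i₁ ω) ^ 2 ∂μ - ∫ ω, (A (j * s) ω - A i₁ ω) ^ 2 ∂μ) +
      2 * ∫ ω, (A ((j + 1) * s) ω - A (j * s) ω) * A i₁ ω ∂μ := by
    have i1 : Integrable (fun ω => (A ((j + 1) * s) ω - A i₁ ω) ^ 2 - (A (j * s) ω - A i₁ ω) ^ 2) μ :=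
      (isub _ _).sub (isub _ _)
    have i2 : Integrable (fun ω => 2 * ((A ((j + 1) * s) ω - A (j * s) ω) * A i₁ ω)) μ :=
      (((hp _).sub (hp _)).integrable_mul_of_four (hp _)).const_mul 2
    rw [← integral_sub (isq _) (isq _), ← integral_sub (isub _ _) (isub _ _),
      ← integral_const_mul, ← integral_add i1 i2]
    refine integral_congr_ae (ae_of_all _ fun ω => ?_)
    ring
  set v := ∫ ω, A ((j + 1) * s) ω ^ 2 ∂μ - ∫ ω, A (j * s) ω ^ 2 ∂μ with hv
  set v' := ∫ ω, (A ((j + 1) * s) ω - A i₁ ω) ^ 2 ∂μ - ∫ ω, (A (j * s) ω - A i₁ ω) ^ 2 ∂μ with hv'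
  set f := ∫ ω, (A ((j + 1) * s) ω - A (j * s) ω) * A i₁ ω ∂μ with hf
  set z := ∫ ω, expI (A (j * s) ω) ∂μ with hz
  have hz1 : ‖z‖ ≤ 1 := norm_integral_expI_le_one _
  have split : ∫ ω, expI (A ((j + 1) * s) ω) ∂μ - z * (1 - (v : ℂ) / 2) =
      (∫ ω, expI (A ((j + 1) * s) ω) ∂μ - z * (1 - (v' : ℂ) / 2)) + z * (f : ℂ) := by
    rw [hvar]; push_cast; ring
  rw [split]
  have hzf : ‖z * (f : ℂ)‖ ≤ ε := by
    rw [norm_mul, Complex.norm_real, Real.norm_eq_abs]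
    calc _ ≤ 1 * ε := by gcongr
      _ = ε := one_mul _
  refine (norm_add_le _ _).trans ((add_le_add step hzf).trans (le_of_eq ?_))
  ring

/-- Variance increments of the block sums. -/
lemma abs_integral_sq_weightedSum_succ_sub_le (hm : ∀ k, Measurable (ξ k))
    (h3 : Cond3 μ ξ) (hsum : Summable fun p : ℕ => |autocov μ ξ p|)
    {b : ℕ → ℝ} {c : ℝ} (hb : ∀ k, |b k| ≤ c) {s j : ℕ} {D : ℝ}
    (hU : ∫ ω, (weightedSum ξ b ((j + 1) * s) ω - weightedSum ξ b (j * s) ω) ^ 2 ∂μ ≤ D) :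
    |∫ ω, weightedSum ξ b ((j + 1) * s) ω ^ 2 ∂μ - ∫ ω, weightedSum ξ b (j * s) ω ^ 2 ∂μ| ≤
      D + 2 * (c ^ 2 * (s * ∑' p : ℕ, |autocov μ ξ p|)) := by
  have hp : ∀ m, MemLp (weightedSum ξ b m) 4 μ := memLp_weightedSum hm h3 b
  have far := abs_integral_mul_weightedSum_le hm h3 hsum hb (m₂ := j * s) (m := j * s)
    (m' := (j + 1) * s) (g := 0) (Or.inr le_rfl) (Nat.mul_le_mul_right s (Nat.le_succ j))
  rw [show (j + 1) * s - j * s = s by rw [add_mul, one_mul]; omega] at far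
  simp only [add_zero] at far
  set A := weightedSum ξ b with hA
  have hvar : ∫ ω, A ((j + 1) * s) ω ^ 2 ∂μ - ∫ ω, A (j * s) ω ^ 2 ∂μ =
      (∫ ω, (A ((j + 1) * s) ω - A (j * s) ω) ^ 2 ∂μ) +
      2 * ∫ ω, (A ((j + 1) * s) ω - A (j * s) ω) * A (j * s) ω ∂μ := by
    have i1 : Integrable (fun ω => (A ((j + 1) * s) ω - A (j * s) ω) ^ 2) μ :=
      ((hp _).sub (hp _)).integrable_sq_of_four
    have i2 : Integrable (fun ω => 2 * ((A ((j + 1) * s) ω - A (j * s) ω) * A (j * s) ω)) μ :=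
      (((hp _).sub (hp _)).integrable_mul_of_four (hp _)).const_mul 2
    rw [← integral_sub (hp _).integrable_sq_of_four (hp _).integrable_sq_of_four,
      ← integral_const_mul, ← integral_add i1 i2]
    refine integral_congr_ae (ae_of_all _ fun ω => ?_)
    ring
  have hpos : 0 ≤ ∫ ω, (A ((j + 1) * s) ω - A (j * s) ω) ^ 2 ∂μ :=
    integral_nonneg fun ω => by positivity
  rw [hvar]
  refine (abs_add_le _ _).trans ?_
  rw [abs_of_nonneg hpos, abs_mul, abs_two]
  gcongr

/-- Characteristic functions of sums of `J` long blocks are close to Gaussian ones, uniformly in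
the weights. -/
lemma exists_norm_integral_expI_weightedSum_mul_sub_le (hm : ∀ k, Measurable (ξ k))
    (h3 : Cond3 μ ξ) (h4 : Cond4 μ ξ) (h5 : Cond5 μ ξ) {K δ : ℝ} (hK : 0 < K) (hδ : 0 < δ) :
    ∃ J : ℕ, 0 < J ∧ ∃ s₀ : ℕ, ∀ s ≥ s₀, ∀ b : ℕ → ℝ, (∀ k, |b k| ≤ K / √((J : ℝ) * s)) →
      ‖∫ ω, expI (weightedSum ξ b (J * s) ω) ∂μ -
        (Real.exp (-(∫ ω, weightedSum ξ b (J * s) ω ^ 2 ∂μ) / 2) : ℂ)‖ ≤ δ := by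
  obtain ⟨C, hC, φ, r, hr, hφ, -, hlim, hbd⟩ := h5
  have hsum : Summable fun p : ℕ => |autocov μ ξ p| :=
    (summable_abs_autocov h3.1 hm h4).comp_injective Nat.cast_injective
  obtain ⟨B, hB⟩ := h4.2
  have hB0 : 0 ≤ B := by
    have : (0 : ℝ) ≤ B * ((1 : ℕ) : ℝ) ^ 2 := le_trans (by positivity) (hB 1 le_rfl)
    simpa using this
  set M : ℝ := B * K ^ 4 * ((r : ℝ) + 1) ^ 4 with hM
  have hM0 : 0 ≤ M := by positivity
  set Γ : ℝ := ∑' p : ℕ, |autocov μ ξ p| with hΓ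
  have hΓ0 : 0 ≤ Γ := tsum_nonneg fun p => abs_nonneg _
  set D : ℝ := 1 + M + 2 * (K ^ 2 * Γ) with hD
  have hD0 : 0 < D := by positivity
  set L : ℝ := 37 + 34 * M + M ^ 2 with hL
  -- choice of the number of blocks
  have hinv : Tendsto (fun J : ℕ => (√(J : ℝ))⁻¹) atTop (nhds 0) :=
    tendsto_inv_atTop_zero.comp (Real.tendsto_sqrt_atTop.comp tendsto_natCast_atTop_atTop)
  have hJlim : Tendsto (fun J : ℕ => Real.exp D * (L * (√(J : ℝ))⁻¹ + D ^ 2 * (√(J : ℝ))⁻¹ ^ 2))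
      atTop (nhds 0) := by
    have := ((hinv.const_mul L).add ((hinv.pow 2).const_mul (D ^ 2))).const_mul (Real.exp D)
    simpa using this
  obtain ⟨J, hJ1, hJD, hJδ⟩ := ((eventually_ge_atTop 1).and
    (((tendsto_natCast_atTop_atTop (R := ℝ)).eventually (eventually_ge_atTop D)).and
      (hJlim.eventually (gt_mem_nhds hδ)))).exists
  have hJ0 : (0 : ℝ) < J := by exact_mod_cast hJ1
  set η : ℝ := (√(J : ℝ))⁻¹ with hη
  have hη0 : 0 < η := by positivity
  have hη2 : η ^ 2 = (J : ℝ)⁻¹ := by rw [hη, inv_pow, Real.sq_sqrt hJ0.le]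
  have hη3 : 0 < η ^ 3 := by positivity
  -- choice of the length of the blocks
  set E : ℝ := C * (1 + (J + (r + 1)) * K) with hE
  have hE0 : 0 < E := by positivity
  have ev1 : ∀ᶠ s : ℕ in atTop, √(s : ℝ) * φ (r * s) s < η ^ 3 / E :=
    hlim.eventually (gt_mem_nhds (by positivity))
  have ev2 : ∀ᶠ s : ℕ in atTop, √(((r + 1) * s : ℕ) : ℝ) *
      φ (r * ((r + 1) * s)) ((r + 1) * s) < η ^ 3 / E :=
    (hlim.comp (tendsto_id.const_mul_atTop' (Nat.succ_pos r))).eventually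
      (gt_mem_nhds (by positivity))
  have ev3 : ∀ᶠ s : ℕ in atTop, K ^ 2 / J *
      ∑' p : ℕ, |autocov μ ξ ((p + r * s : ℕ) : ℤ)| < η ^ 3 := by
    have h1 := tendsto_sum_nat_add (fun p : ℕ => |autocov μ ξ p|)
    have h2 := (h1.comp (tendsto_id.const_mul_atTop' hr)).const_mul (K ^ 2 / J)
    rw [mul_zero] at h2
    exact h2.eventually (gt_mem_nhds hη3)
  obtain ⟨s₀, hs₀⟩ := eventually_atTop.1 ((eventually_ge_atTop 1).and (ev1.and (ev2.and ev3)))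
  refine ⟨J, hJ1, s₀, fun s hs b hb => ?_⟩
  obtain ⟨hs1, h1, h2, h3'⟩ := hs₀ s hs
  have hs0 : (0 : ℝ) < s := by exact_mod_cast hs1
  set c : ℝ := K / √((J : ℝ) * s) with hc
  have hc0 : 0 < c := by positivity
  have hc2 : c ^ 2 = K ^ 2 / (J * s) := by rw [hc, div_pow, Real.sq_sqrt (by positivity)]
  have hc2s : c ^ 2 * s = K ^ 2 / J := by rw [hc2]; field_simp
  have hsc : s * c ≤ K * √(s : ℝ) := by
    refine abs_le_of_sq_le_sq' ?_ (by positivity) |>.2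
    have : (s * c) ^ 2 = K ^ 2 / J * s := by rw [mul_pow, hc2]; field_simp
    rw [this, mul_pow, Real.sq_sqrt hs0.le]
    gcongr
    exact div_le_self (by positivity) (by exact_mod_cast hJ1)
  have hcov : ∀ a : ℕ, 1 ≤ a → a ≤ r + 1 → √((a * s : ℕ) : ℝ) * φ (r * (a * s)) (a * s) < η ^ 3 / E →
      C * (1 + (J * s : ℕ) * c + (a * s : ℕ) * c) * φ (r * (a * s)) (a * s) ≤ η ^ 3 := by
    intro a ha har hlt
    have hs1' : 1 ≤ √((a * s : ℕ) : ℝ) := by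
      rw [Real.one_le_sqrt]; exact_mod_cast Nat.one_le_iff_ne_zero.2 (by positivity)
    have hss : √(s : ℝ) ≤ √((a * s : ℕ) : ℝ) :=
      Real.sqrt_le_sqrt (by exact_mod_cast Nat.le_mul_of_pos_left s ha)
    have hsc' : s * c ≤ K * √((a * s : ℕ) : ℝ) := hsc.trans (by gcongr)
    have har' : (a : ℝ) ≤ r + 1 := by exact_mod_cast har
    have hφ0 := hφ (r * (a * s)) (a * s)
    have hfac : C * (1 + (J * s : ℕ) * c + (a * s : ℕ) * c) ≤ E * √((a * s : ℕ) : ℝ) := by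
      have : 1 + (J * s : ℕ) * c + (a * s : ℕ) * c = 1 + (J + a) * (s * c) := by
        push_cast; ring
      rw [this, hE, mul_assoc]
      gcongr
      calc 1 + (J + a) * (s * c) ≤ √((a * s : ℕ) : ℝ) +
            (J + (r + 1)) * (K * √((a * s : ℕ) : ℝ)) := by gcongr
        _ = _ := by ring
    calc _ ≤ E * √((a * s : ℕ) : ℝ) * φ (r * (a * s)) (a * s) := by gcongr
      _ = E * (√((a * s : ℕ) : ℝ) * φ (r * (a * s)) (a * s)) := by ring
      _ ≤ E * (η ^ 3 / E) := by gcongr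
      _ = η ^ 3 := by field_simp
  have hMc : c ^ 4 * (B * (((r + 1) ^ 2 * s : ℕ) : ℝ) ^ 2) ≤ M * η ^ 4 := by
    refine le_of_eq ?_
    have e1 : η ^ 4 = (J : ℝ)⁻¹ ^ 2 := by rw [← hη2]; ring
    calc _ = (c ^ 2 * s) ^ 2 * (B * ((r : ℝ) + 1) ^ 4) := by push_cast; ring
      _ = _ := by rw [hc2s, e1, hM]; field_simp
  have hstep : ∀ j < J, _ := fun j hj => norm_integral_expI_weightedSum_succ_le hC hφ hbd hm h3
    hsum hB hb (s := s) hj hη0 hMc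
    (by have := hcov 1 le_rfl (by omega) (by simpa using h1); simpa using this)
    (hcov (r + 1) (by omega) le_rfl h2) (ε := η ^ 3)
    (by rw [← mul_assoc, hc2s]; exact h3'.le)
  have hvar : ∀ j < J, _ := fun j (_ : j < J) => abs_integral_sq_weightedSum_succ_sub_le hm h3 hsum
    hb (s := s) (j := j) (D := (1 + M) * η ^ 2) (by
      have h4' := (integral_weightedSum_sub_pow_four_le hm h3 hB hb
        (Nat.mul_le_mul_right s (Nat.le_succ j)) (w := (r + 1) ^ 2 * s) (by
          rw [Nat.succ_eq_add_one, add_mul, one_mul]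
          exact Nat.add_le_add_left (Nat.le_mul_of_pos_left s (by positivity)) _)).trans hMc
      have := integral_abs_pow_le ((memLp_weightedSum hm h3 b _).sub
        (memLp_weightedSum hm h3 b _)) hη0 h4' (k := 2) (by norm_num)
      simpa only [Pi.sub_apply, sq_abs] using this)
  have hd : (1 + M) * η ^ 2 + 2 * (c ^ 2 * (s * Γ)) = D / J := by
    rw [← mul_assoc (c ^ 2), hc2s, hη2, hD]; field_simp
  rw [← hΓ, hd] at hvar
  have := norm_sub_exp_le_of_recursion (z := fun j => ∫ ω, expI (weightedSum ξ b (j * s) ω) ∂μ)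
    (q := fun j => ∫ ω, weightedSum ξ b (j * s) ω ^ 2 ∂μ) (J := J) (d := D / J)
    (e := L * η ^ 3) (by positivity) ((div_le_one hJ0).2 hJD) (by positivity)
    (by simp [weightedSum, expI_zero]) (by simp [weightedSum])
    (fun j => integral_nonneg fun ω => by positivity) hvar
    (fun j hj => (hstep j hj).trans (le_of_eq (by rw [hL]; ring)))
  refine this.trans (le_trans ?_ hJδ.le)
  have hexp : (1 + D / J) ^ J ≤ Real.exp D := by
    calc (1 + D / J) ^ J ≤ Real.exp (D / J) ^ J := by
          gcongr; rw [add_comm]; exact Real.add_one_le_exp _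
      _ = Real.exp D := by rw [← Real.exp_nat_mul]; congr 1; field_simp
  have hJη : (J : ℝ) * η ^ 2 = 1 := by rw [hη2]; field_simp
  calc (J : ℝ) * ((1 + D / J) ^ J * (L * η ^ 3 + (D / J) ^ 2))
      ≤ J * (Real.exp D * (L * η ^ 3 + (D / J) ^ 2)) := by gcongr
    _ = J * (Real.exp D * (L * η ^ 3 + D ^ 2 * (η ^ 2) ^ 2)) := by rw [hη2]; ring
    _ = (J * η ^ 2) * (Real.exp D * (L * η + D ^ 2 * η ^ 2)) := by ring
    _ = _ := by rw [hJη, one_mul]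

/-- Uniform Gaussian approximation for sums with small weights supported in `[0, N)`. -/
lemma exists_norm_integral_expI_weightedSum_sub_le (hm : ∀ k, Measurable (ξ k))
    (h3 : Cond3 μ ξ) (h4 : Cond4 μ ξ) (h5 : Cond5 μ ξ) {K δ : ℝ} (hK : 0 < K) (hδ : 0 < δ) :
    ∃ N₀ : ℕ, ∀ N ≥ N₀, ∀ b : ℕ → ℝ, (∀ k, |b k| ≤ K / √(N : ℝ)) → (∀ k ≥ N, b k = 0) →
      ‖∫ ω, expI (weightedSum ξ b N ω) ∂μ -
        (Real.exp (-(∫ ω, weightedSum ξ b N ω ^ 2 ∂μ) / 2) : ℂ)‖ ≤ δ := by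
  obtain ⟨J, hJ, s₀, hs₀⟩ := exists_norm_integral_expI_weightedSum_mul_sub_le hm h3 h4 h5
    (K := K * √2) (by positivity) hδ
  refine ⟨J * (s₀ + 1), fun N hN b hb hb0 => ?_⟩
  set s := N / J + 1 with hs
  have hlow : N ≤ J * s := by
    rw [hs]; exact (Nat.lt_mul_div_succ N hJ).le
  have hJN : J ≤ N := le_trans (Nat.le_mul_of_pos_right J (Nat.succ_pos _)) hN
  have hup : J * s ≤ 2 * N := by
    rw [hs, mul_add, mul_one]
    have := Nat.mul_div_le N J
    omega
  have hss : s₀ ≤ s := by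
    have : s₀ + 1 ≤ N / J := (Nat.le_div_iff_mul_le hJ).2 (by rw [mul_comm]; exact hN)
    omega
  have hW : weightedSum ξ b (J * s) = weightedSum ξ b N := by
    funext ω
    rw [← sub_eq_zero, weightedSum_sub b hlow]
    exact Finset.sum_eq_zero fun k hk => by rw [hb0 k (Finset.mem_Ico.1 hk).1, zero_mul]
  have hN0 : (0 : ℝ) < N := by exact_mod_cast hJ.trans_le hJN
  have := hs₀ s hss b fun k => (hb k).trans ?_
  · rwa [hW] at this
  have hJs : (0 : ℝ) < (J : ℝ) * s := by positivity
  rw [div_le_div_iff₀ (by positivity) (by positivity), mul_assoc, ← Real.sqrt_mul (by norm_num)]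
  exact mul_le_mul_of_nonneg_left (Real.sqrt_le_sqrt (by exact_mod_cast hup)) hK.le

end CentralLimit

section QuadraticForm

lemma sum_comp_add_le {f : ℤ → ℝ} {T : ℝ} (hT : ∀ F : Finset ℤ, ∑ k ∈ F, f k ≤ T)
    (F : Finset ℤ) (p : ℤ) : ∑ k ∈ F, f (k + p) ≤ T := by
  have := hT (F.map (addRightEmbedding p))
  rwa [Finset.sum_map] at this

lemma sum_sq_shift_sub_le {a : ℤ → ℝ} {A T : ℝ} (hA : ∀ F : Finset ℤ, ∑ k ∈ F, a k ^ 2 ≤ A)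
    (hT : ∀ F : Finset ℤ, ∑ k ∈ F, (a (k + 1) - a k) ^ 2 ≤ T) (F : Finset ℤ) (p : ℤ) :
    ∑ k ∈ F, (a (k + p) - a k) ^ 2 ≤ min ((p : ℝ) ^ 2 * T) (4 * A) := by
  have hnat : ∀ (F : Finset ℤ) (p : ℕ), ∑ k ∈ F, (a (k + p) - a k) ^ 2 ≤ (p : ℝ) ^ 2 * T := by
    intro F p
    have hpt : ∀ k ∈ F, (a (k + p) - a k) ^ 2 ≤
        p * ∑ i ∈ Finset.range p, (a (k + i + 1) - a (k + i)) ^ 2 := by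
      intro k _
      have htel : a (k + p) - a k = ∑ i ∈ Finset.range p, (a (k + i + 1) - a (k + i)) := by
        have := Finset.sum_range_sub (fun i : ℕ => a (k + i)) p
        simp only [Nat.cast_zero, add_zero, Nat.cast_add, Nat.cast_one, ← add_assoc] at this
        exact this.symm
      rw [htel]
      have := sq_sum_le_card_mul_sum_sq (s := Finset.range p)
        (f := fun i : ℕ => a (k + i + 1) - a (k + i))
      rwa [Finset.card_range] at this
    refine (Finset.sum_le_sum hpt).trans ?_
    rw [← Finset.mul_sum, Finset.sum_comm]
    have : ∑ i ∈ Finset.range p, ∑ k ∈ F, (a (k + i + 1) - a (k + i)) ^ 2 ≤ p * T := by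
      refine (Finset.sum_le_sum fun (i : ℕ) _ => sum_comp_add_le hT F (i : ℤ)).trans (le_of_eq ?_)
      simp
    calc _ ≤ (p : ℝ) * (p * T) := by gcongr
      _ = _ := by ring
  refine le_min ?_ ?_
  · rcases Int.eq_nat_or_neg p with ⟨q, rfl | rfl⟩
    · exact_mod_cast hnat F q
    · have := hnat (F.map (addRightEmbedding (-(q : ℤ)))) q
      rw [Finset.sum_map] at this
      simp only [addRightEmbedding_apply, neg_add_cancel_right] at this
      push_cast
      rw [neg_sq]
      refine le_trans (le_of_eq (Finset.sum_congr rfl fun k _ => ?_)) this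
      ring
  · have hpt : ∀ k ∈ F, (a (k + p) - a k) ^ 2 ≤ 2 * a (k + p) ^ 2 + 2 * a k ^ 2 := fun k _ => by
      nlinarith [sq_nonneg (a (k + p) + a k)]
    refine (Finset.sum_le_sum hpt).trans ?_
    rw [Finset.sum_add_distrib, ← Finset.mul_sum, ← Finset.mul_sum]
    have := sum_comp_add_le hA F p
    have := hA F
    linarith

lemma sum_abs_mul_abs_shift_sub_le {a : ℤ → ℝ} {A T : ℝ}
    (hA : ∀ F : Finset ℤ, ∑ k ∈ F, a k ^ 2 ≤ A)
    (hT : ∀ F : Finset ℤ, ∑ k ∈ F, (a (k + 1) - a k) ^ 2 ≤ T) (F : Finset ℤ) (p : ℤ) {η κ : ℝ}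
    (hη : 0 < η) (hκ : 0 < κ) :
    ∑ k ∈ F, |a k| * |a (k + p) - a k| ≤
      √(1 + |(p : ℝ)|) * (η * A + (T / κ + 4 * κ * A) / η) := by
  have hA0 : 0 ≤ A := by simpa using hA ∅
  have hT0 : 0 ≤ T := by simpa using hT ∅
  set x := √(1 + |(p : ℝ)|) with hx
  have hx0 : 0 < x := by positivity
  have hx2 : x ^ 2 = 1 + |(p : ℝ)| := Real.sq_sqrt (by positivity)
  have hsq : ∑ k ∈ F, (a (k + p) - a k) ^ 2 ≤ x ^ 2 * (T / κ + 4 * κ * A) := by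
    refine (sum_sq_shift_sub_le hA hT F p).trans ?_
    have hp : |(p : ℝ)| * (T / κ + 4 * κ * A) ≤ x ^ 2 * (T / κ + 4 * κ * A) := by
      gcongr; rw [hx2]; linarith
    refine le_trans ?_ hp
    rcases le_total (|(p : ℝ)|) κ⁻¹ with h | h
    · refine (min_le_left _ _).trans ?_
      rw [← sq_abs, sq, mul_assoc]
      gcongr
      calc |(p : ℝ)| * T ≤ κ⁻¹ * T := by gcongr
        _ = T / κ := by ring
        _ ≤ _ := by have : 0 ≤ 4 * κ * A := by positivity
                    linarith
    · refine (min_le_right _ _).trans ?_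
      have h1 : 1 ≤ |(p : ℝ)| * κ := by
        have := mul_le_mul_of_nonneg_right h hκ.le
        rwa [inv_mul_cancel₀ hκ.ne'] at this
      have h2 : 0 ≤ |(p : ℝ)| * (T / κ) := by positivity
      nlinarith
  have hpt : ∀ k ∈ F, |a k| * |a (k + p) - a k| ≤
      (η * x) * a k ^ 2 + (η * x)⁻¹ * (a (k + p) - a k) ^ 2 := by
    intro k _
    have hy : 0 < η * x := by positivity
    rw [← sq_abs (a k), ← sq_abs (a (k + p) - a k)]
    generalize |a k| = u
    generalize |a (k + p) - a k| = v
    have : (η * x) * u ^ 2 + (η * x)⁻¹ * v ^ 2 - u * v =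
      (η * x)⁻¹ * ((η * x * u - v / 2) ^ 2 + 3 / 4 * v ^ 2) := by field_simp; ring
    have : 0 ≤ (η * x)⁻¹ * ((η * x * u - v / 2) ^ 2 + 3 / 4 * v ^ 2) := by positivity
    linarith
  refine (Finset.sum_le_sum hpt).trans ?_
  rw [Finset.sum_add_distrib, ← Finset.mul_sum, ← Finset.mul_sum]
  calc _ ≤ (η * x) * A + (η * x)⁻¹ * (x ^ 2 * (T / κ + 4 * κ * A)) := by gcongr; exact hA F
    _ = _ := by field_simp

variable {Ω : Type*} [MeasurableSpace Ω] {μ : Measure Ω} {ξ : ℤ → Ω → ℝ}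

lemma IsStationarySeq.tsum_integral_mul (hs : IsStationarySeq μ ξ) (hm : ∀ k, Measurable (ξ k))
    (k : ℤ) : ∑' m : ℤ, ∫ ω, ξ k ω * ξ m ω ∂μ = ∑' p : ℤ, autocov μ ξ p := by
  simp only [hs.integral_mul_eq_autocov hm]
  exact (Equiv.subRight k).tsum_eq (autocov μ ξ)

lemma Cond3.memLp_sum (h3 : Cond3 μ ξ) (hm : ∀ k, Measurable (ξ k)) (a : ℤ → ℝ) (I : Finset ℤ) :
    MemLp (fun ω => ∑ k ∈ I, a k * ξ k ω) 4 μ :=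
  memLp_finsetSum _ fun _ _ => (h3.memLp hm _).const_mul _

variable [IsProbabilityMeasure μ]

lemma Cond3.integral_sum_sq (h3 : Cond3 μ ξ) (hm : ∀ k, Measurable (ξ k)) (a : ℤ → ℝ)
    (I : Finset ℤ) :
    ∫ ω, (∑ k ∈ I, a k * ξ k ω) ^ 2 ∂μ = ∑ k ∈ I, ∑ l ∈ I, a k * a l * autocov μ ξ (l - k) := by
  have hint : ∀ k l : ℤ, Integrable (fun ω => (a k * ξ k ω) * (a l * ξ l ω)) μ := fun k l =>
    ((h3.memLp hm _).const_mul (a k)).integrable_mul_of_four ((h3.memLp hm _).const_mul (a l))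
  simp only [sq, Finset.sum_mul_sum]
  rw [integral_finsetSum _ fun k _ => integrable_finsetSum _ fun l _ => hint k l]
  refine Finset.sum_congr rfl fun k _ => ?_
  rw [integral_finsetSum _ fun l _ => hint k l]
  refine Finset.sum_congr rfl fun l _ => ?_
  rw [← h3.1.integral_mul_eq_autocov hm, ← integral_const_mul]
  exact integral_congr_ae (ae_of_all _ fun ω => by ring)

lemma Cond3.integral_sum_sq_le (h3 : Cond3 μ ξ) (hm : ∀ k, Measurable (ξ k))
    (h4 : Cond4 μ ξ) (a : ℤ → ℝ) (I : Finset ℤ) :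
    ∫ ω, (∑ k ∈ I, a k * ξ k ω) ^ 2 ∂μ ≤ (∑' p : ℤ, |autocov μ ξ p|) * ∑ k ∈ I, a k ^ 2 := by
  have hsum := summable_abs_autocov h3.1 hm h4
  rw [h3.integral_sum_sq hm]
  have row : ∀ k, ∑ l ∈ I, |autocov μ ξ (l - k)| ≤ ∑' p : ℤ, |autocov μ ξ p| := by
    intro k
    rw [← (Equiv.subRight k).tsum_eq fun p => |autocov μ ξ p|]
    exact ((Equiv.subRight k).summable_iff.2 hsum).sum_le_tsum I fun _ _ => abs_nonneg _
  have hpt : ∀ k l : ℤ, a k * a l * autocov μ ξ (l - k) ≤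
      a k ^ 2 / 2 * |autocov μ ξ (l - k)| + a l ^ 2 / 2 * |autocov μ ξ (k - l)| := by
    intro k l
    rw [← h3.1.autocov_neg hm (k - l), neg_sub]
    refine (le_abs_self _).trans ?_
    rw [abs_mul, ← add_mul]
    gcongr
    rw [abs_le]
    constructor <;> nlinarith [sq_nonneg (a k - a l), sq_nonneg (a k + a l)]
  have half : ∑ k ∈ I, ∑ l ∈ I, a k ^ 2 / 2 * |autocov μ ξ (l - k)| ≤
      (∑' p : ℤ, |autocov μ ξ p|) * (∑ k ∈ I, a k ^ 2) / 2 := by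
    rw [Finset.mul_sum, Finset.sum_div]
    refine Finset.sum_le_sum fun k _ => ?_
    rw [← Finset.mul_sum]
    calc _ ≤ a k ^ 2 / 2 * ∑' p : ℤ, |autocov μ ξ p| := by gcongr; exact row k
      _ = _ := by ring
  refine (Finset.sum_le_sum fun k _ => Finset.sum_le_sum fun l _ => hpt k l).trans ?_
  simp only [Finset.sum_add_distrib]
  rw [Finset.sum_comm (f := fun k l => a l ^ 2 / 2 * |autocov μ ξ (k - l)|)]
  linarith

/-- Slowly varying weights: the variance of a weighted sum is close to the asymptotic variance
times the squared norm of the weights. -/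
lemma Cond3.abs_integral_sum_sq_sub_le (h3 : Cond3 μ ξ) (hm : ∀ k, Measurable (ξ k))
    (h4 : Cond4 μ ξ) {a : ℤ → ℝ} {I : Finset ℤ} (hI : ∀ k ∉ I, a k = 0) {T : ℝ}
    (hT : ∀ F : Finset ℤ, ∑ k ∈ F, (a (k + 1) - a k) ^ 2 ≤ T) {η κ : ℝ}
    (hη : 0 < η) (hκ : 0 < κ) :
    |∫ ω, (∑ k ∈ I, a k * ξ k ω) ^ 2 ∂μ - (∑' p : ℤ, autocov μ ξ p) * ∑ k ∈ I, a k ^ 2| ≤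
      (∑' p : ℤ, √(1 + |(p : ℝ)|) * |autocov μ ξ p|) *
        (η * (∑ k ∈ I, a k ^ 2) + (T / κ + 4 * κ * ∑ k ∈ I, a k ^ 2) / η) := by
  set A := ∑ k ∈ I, a k ^ 2 with hAdef
  have hA : ∀ F : Finset ℤ, ∑ k ∈ F, a k ^ 2 ≤ A := by
    intro F
    calc _ ≤ ∑ k ∈ F ∪ I, a k ^ 2 :=
          Finset.sum_le_sum_of_subset_of_nonneg Finset.subset_union_left fun _ _ _ => sq_nonneg _
      _ = A := (Finset.sum_subset Finset.subset_union_right fun k _ hk => by simp [hI k hk]).symm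
  have hsum := (summable_abs_autocov h3.1 hm h4).of_abs
  have hsqrt := summable_sqrt_mul_autocov h3.1 hm h4
  have hfin : ∀ k, Summable fun p : ℤ => a k * a (k + p) * autocov μ ξ p := by
    intro k
    refine summable_of_hasFiniteSupport ((I.map (addRightEmbedding (-k))).finite_toSet.subset ?_)
    intro p hp
    simp only [Finset.coe_map, addRightEmbedding_apply, Set.mem_image, Finset.mem_coe]
    refine ⟨k + p, ?_, by ring⟩
    by_contra h
    exact hp (by simp [hI _ h])
  have hrow : ∀ k, ∑ l ∈ I, a k * a l * autocov μ ξ (l - k) =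
      ∑' p : ℤ, a k * a (k + p) * autocov μ ξ p := by
    intro k
    rw [← (Equiv.subRight k).tsum_eq, tsum_eq_sum (s := I)]
    · simp
    · intro l hl
      simp [hI l hl]
  have hdiff : ∀ k, Summable fun p : ℤ => a k * (a (k + p) - a k) * autocov μ ξ p := by
    intro k
    refine ((hfin k).sub (hsum.mul_left (a k ^ 2))).congr fun p => ?_
    ring
  have hQ : ∫ ω, (∑ k ∈ I, a k * ξ k ω) ^ 2 ∂μ - (∑' p : ℤ, autocov μ ξ p) * A =
      ∑' p : ℤ, ∑ k ∈ I, a k * (a (k + p) - a k) * autocov μ ξ p := by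
    rw [h3.integral_sum_sq hm, hAdef, Finset.mul_sum, ← Finset.sum_sub_distrib,
      Summable.tsum_finsetSum fun k _ => hdiff k]
    refine Finset.sum_congr rfl fun k _ => ?_
    rw [hrow, mul_comm, ← tsum_mul_left, ← (hfin k).tsum_sub (hsum.mul_left _)]
    exact tsum_congr fun p => by ring
  rw [hQ, ← tsum_mul_right, ← Real.norm_eq_abs]
  refine tsum_of_norm_bounded (hsqrt.mul_right _).hasSum fun p => ?_
  rw [← Finset.sum_mul, norm_mul, Real.norm_eq_abs, Real.norm_eq_abs, mul_right_comm]
  gcongr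
  refine (Finset.abs_sum_le_sum_abs _ _).trans ?_
  simp only [abs_mul]
  exact sum_abs_mul_abs_shift_sub_le hA hT I p hη hκ

lemma Cond3.tsum_autocov_nonneg (h3 : Cond3 μ ξ) (hm : ∀ k, Measurable (ξ k))
    (h4 : Cond4 μ ξ) : 0 ≤ ∑' p : ℤ, autocov μ ξ p := by
  set σ := ∑' p : ℤ, autocov μ ξ p with hσ
  set Γ := ∑' p : ℤ, √(1 + |(p : ℝ)|) * |autocov μ ξ p| with hΓ
  have key : ∀ η > 0, ∀ N : ℕ, 0 < N → 0 ≤ σ + Γ * (5 * η + 2 / η ^ 3 * (N : ℝ)⁻¹) := by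
    intro η hη N hN
    have hN0 : (0 : ℝ) < N := by exact_mod_cast hN
    have hsub := h3.abs_integral_sum_sq_sub_le hm h4 (I := Finset.Ico 0 (N : ℤ))
      (a := fun k => if k ∈ Finset.Ico 0 (N : ℤ) then 1 else 0) (by simp +contextual) (T := 2)
      (fun F => ?_) hη (pow_pos hη 2)
    · have hpos : 0 ≤ ∫ ω, (∑ k ∈ Finset.Ico 0 (N : ℤ),
        (if k ∈ Finset.Ico 0 (N : ℤ) then (1 : ℝ) else 0) * ξ k ω) ^ 2 ∂μ :=
        integral_nonneg fun ω => sq_nonneg _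
      have hcard : ∑ k ∈ Finset.Ico 0 (N : ℤ),
          (if k ∈ Finset.Ico 0 (N : ℤ) then (1 : ℝ) else 0) ^ 2 = N := by
        rw [Finset.sum_congr rfl fun k hk => by rw [if_pos hk]]
        simp
      rw [hcard, abs_le] at hsub
      have h0 : 0 ≤ σ * N + Γ * (η * N + (2 / η ^ 2 + 4 * η ^ 2 * N) / η) := by linarith [hsub.2]
      have := mul_nonneg h0 (inv_nonneg.2 hN0.le)
      refine this.trans (le_of_eq ?_)
      field_simp
      ring
    · have hle : ∀ k ∈ F, ((if k + 1 ∈ Finset.Ico 0 (N : ℤ) then (1 : ℝ) else 0) -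
          if k ∈ Finset.Ico 0 (N : ℤ) then 1 else 0) ^ 2 ≤
          (if k = -1 then 1 else 0) + if k = (N : ℤ) - 1 then 1 else 0 := by
        intro k _
        simp only [Finset.mem_Ico]
        split_ifs <;> first | omega | norm_num
      refine (Finset.sum_le_sum hle).trans ?_
      rw [Finset.sum_add_distrib, Finset.sum_ite_eq', Finset.sum_ite_eq']
      split_ifs <;> norm_num
  have lim1 : ∀ η > 0, 0 ≤ σ + Γ * (5 * η) := by
    intro η hη
    have h1 := (tendsto_inv_atTop_nhds_zero_nat (𝕜 := ℝ)).const_mul (2 / η ^ 3)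
    have h2 := ((h1.const_add (5 * η)).const_mul Γ).const_add σ
    rw [mul_zero, add_zero] at h2
    exact ge_of_tendsto h2 ((eventually_gt_atTop 0).mono fun N hN => key η hη N hN)
  have h2 : Tendsto (fun η : ℝ => σ + Γ * (5 * η)) (nhdsWithin 0 (Set.Ioi 0)) (nhds σ) := by
    have : Continuous fun η : ℝ => σ + Γ * (5 * η) := by fun_prop
    have h := this.tendsto 0
    rw [mul_zero, mul_zero, add_zero] at h
    exact h.mono_left nhdsWithin_le_nhds
  exact ge_of_tendsto h2 (eventually_mem_nhdsWithin.mono fun η hη => lim1 η hη)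

end QuadraticForm

section Walk

variable {Ω : Type*} {S : ℕ → Ω → ℤ}

/-- `G` is a function of the first `n` steps of the walk. -/
def PathDep (S : ℕ → Ω → ℤ) (n : ℕ) (G : Ω → ℝ) : Prop :=
  ∀ ω ω', (∀ i ≤ n, S i ω = S i ω') → G ω = G ω'

/-- The walk up to time `n`. -/
def walkPath (S : ℕ → Ω → ℤ) (n : ℕ) (ω : Ω) (i : Fin (n + 1)) : ℤ := S i ω

lemma PathDep.exists_eq {n : ℕ} {G : Ω → ℝ} (h : PathDep S n G) :
    ∃ f : (Fin (n + 1) → ℤ) → ℝ, ∀ ω, G ω = f (walkPath S n ω) := by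
  have hf : Function.FactorsThrough G (walkPath S n) := fun ω ω' hω =>
    h ω ω' fun i hi => congrFun hω ⟨i, Nat.lt_succ_of_le hi⟩
  exact ⟨Function.extend (walkPath S n) G 0, fun ω => (hf.extend_apply 0 ω).symm⟩

variable [MeasurableSpace Ω] {μ : Measure Ω}

lemma IsSSRW.measurable_walkPath (hS : IsSSRW μ S) (n : ℕ) : Measurable (walkPath S n) :=
  measurable_pi_lambda _ fun i => hS.meas i

lemma IsSSRW.indepFun_walkPath (hS : IsSSRW μ S) (n : ℕ) :
    IndepFun (walkPath S n) (fun ω => S (n + 1) ω - S n ω) μ := by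
  have hmeas : ∀ l, Measurable fun ω => S (l + 1) ω - S l ω := fun l =>
    (hS.meas _).sub (hS.meas _)
  have h := hS.indep.indepFun_finset (Finset.range n) {n} (by simp) hmeas
  have hsum : ∀ i ω, S i ω = ∑ l ∈ Finset.range i, (S (l + 1) ω - S l ω) := fun i ω => by
    rw [Finset.sum_range_sub (fun l => S l ω), hS.init, sub_zero]
  let φ : ((l : Finset.range n) → ℤ) → Fin (n + 1) → ℤ := fun x i =>
    ∑ l ∈ Finset.range i, if h : l ∈ Finset.range n then x ⟨l, h⟩ else 0
  have := h.comp (φ := φ) (ψ := fun x => x ⟨n, by simp⟩) (measurable_of_countable _)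
    (measurable_of_countable _)
  have hpath : walkPath S n = φ ∘ fun ω (l : Finset.range n) => S (l + 1) ω - S l ω := ?_
  · rw [hpath]
    exact this
  funext ω i
  simp only [walkPath, Function.comp, φ]
  rw [hsum]
  refine Finset.sum_congr rfl fun l hl => ?_
  have : l ∈ Finset.range n := by
    rw [Finset.mem_range] at hl ⊢
    have := i.2
    omega
  rw [dif_pos this]

variable [IsProbabilityMeasure μ]

lemma IsSSRW.step_ae (hS : IsSSRW μ S) (n : ℕ) :
    ∀ᵐ ω ∂μ, S (n + 1) ω = S n ω + 1 ∨ S (n + 1) ω = S n ω - 1 := by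
  have hX : Measurable fun ω => S (n + 1) ω - S n ω := (hS.meas _).sub (hS.meas _)
  have hm1 : MeasurableSet {ω | S (n + 1) ω - S n ω = 1} := hX (measurableSet_singleton 1)
  have hm2 : MeasurableSet {ω | S (n + 1) ω - S n ω = -1} := hX (measurableSet_singleton (-1))
  have hdisj : Disjoint {ω | S (n + 1) ω - S n ω = 1} {ω | S (n + 1) ω - S n ω = -1} := by
    rw [Set.disjoint_left]
    intro ω h1 h2
    simp only [Set.mem_ofPred_eq] at h1 h2
    omega
  have hone : μ ({ω | S (n + 1) ω - S n ω = 1} ∪ {ω | S (n + 1) ω - S n ω = -1}) = 1 := by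
    rw [measure_union hdisj hm2, hS.step_one, hS.step_neg_one, ENNReal.add_halves]
  have hae := (prob_compl_eq_zero_iff (hm1.union hm2)).2 hone
  refine (measure_eq_zero_iff_ae_notMem.1 hae).mono fun ω hω => ?_
  simp only [Set.mem_compl_iff, Set.mem_union, Set.mem_ofPred_eq, not_not] at hω
  omega

lemma IsSSRW.abs_le_ae (hS : IsSSRW μ S) : ∀ᵐ ω ∂μ, ∀ n : ℕ, |S n ω| ≤ n := by
  filter_upwards [ae_all_iff.2 hS.step_ae] with ω hω n
  induction n with
  | zero => simp [hS.init]
  | succ n ih =>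
    rw [abs_le] at ih ⊢
    push_cast
    rcases hω n with h | h <;> omega

lemma IsSSRW.integrable_of_pathDep (hS : IsSSRW μ S) {n : ℕ} {G : Ω → ℝ} (hG : PathDep S n G) :
    Integrable G μ := by
  obtain ⟨f, hf⟩ := hG.exists_eq
  have hmeas : Measurable G := by
    rw [show G = fun ω => f (walkPath S n ω) from funext hf]
    exact (measurable_of_countable f).comp (hS.measurable_walkPath n)
  set B := Fintype.piFinset fun _ : Fin (n + 1) => Finset.Icc (-(n : ℤ)) n with hB
  refine Integrable.mono' (integrable_const (∑ p ∈ B, |f p|)) hmeas.aestronglyMeasurable ?_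
  filter_upwards [hS.abs_le_ae] with ω hω
  rw [hf, Real.norm_eq_abs]
  refine Finset.single_le_sum (f := fun p => |f p|) (fun _ _ => abs_nonneg _) ?_
  rw [hB, Fintype.mem_piFinset]
  intro i
  rw [Finset.mem_Icc, ← abs_le]
  refine (hω i).trans ?_
  have := i.2
  omega

/-- One-step averaging for the simple random walk. -/
lemma IsSSRW.integral_step (hS : IsSSRW μ S) {n : ℕ} {Φ : ℤ → Ω → ℝ}
    (hΦ : ∀ x, PathDep S n (Φ x)) :
    ∫ ω, Φ (S (n + 1) ω) ω ∂μ =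
      (∫ ω, Φ (S n ω + 1) ω ∂μ + ∫ ω, Φ (S n ω - 1) ω ∂μ) / 2 := by
  have hdep : ∀ d : ℤ, PathDep S n fun ω => Φ (S n ω + d) ω := fun d ω ω' h => by
    simp only [h n le_rfl]
    exact hΦ _ ω ω' h
  have hX : Measurable fun ω => S (n + 1) ω - S n ω := (hS.meas _).sub (hS.meas _)
  set ind : ℤ → ℤ → ℝ := fun d x => if x = d then 1 else 0 with hind
  have hprod : ∀ d : ℤ, μ {ω | S (n + 1) ω - S n ω = d} = 1 / 2 →
      Integrable (fun ω => Φ (S n ω + d) ω * ind d (S (n + 1) ω - S n ω)) μ ∧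
      ∫ ω, Φ (S n ω + d) ω * ind d (S (n + 1) ω - S n ω) ∂μ = (∫ ω, Φ (S n ω + d) ω ∂μ) / 2 := by
    intro d hd
    have hi := hS.integrable_of_pathDep (hdep d)
    obtain ⟨f, hf⟩ := (hdep d).exists_eq
    have hindm : Measurable fun ω => ind d (S (n + 1) ω - S n ω) :=
      (measurable_of_countable (ind d)).comp hX
    have hindep : IndepFun (fun ω => Φ (S n ω + d) ω)
        (fun ω => ind d (S (n + 1) ω - S n ω)) μ := by
      rw [show (fun ω => Φ (S n ω + d) ω) = fun ω => f (walkPath S n ω) from funext hf]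
      exact (hS.indepFun_walkPath n).comp (measurable_of_countable f)
        (measurable_of_countable (ind d))
    have hindi : ∫ ω, ind d (S (n + 1) ω - S n ω) ∂μ = 1 / 2 := by
      have : (fun ω => ind d (S (n + 1) ω - S n ω)) =
          Set.indicator {ω | S (n + 1) ω - S n ω = d} 1 := by
        funext ω
        simp [hind, Set.indicator_apply]
      have hset : MeasurableSet {ω | S (n + 1) ω - S n ω = d} := hX (measurableSet_singleton d)
      rw [this, integral_indicator_one hset, measureReal_def, hd]
      simp
    constructor
    · refine Integrable.mono' hi.norm (hi.aestronglyMeasurable.mul hindm.aestronglyMeasurable)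
        (ae_of_all _ fun ω => ?_)
      rw [norm_mul]
      refine mul_le_of_le_one_right (norm_nonneg _) ?_
      simp only [hind]
      split_ifs <;> simp
    · rw [hindep.integral_fun_mul_eq_mul_integral hi.aestronglyMeasurable
        hindm.aestronglyMeasurable, hindi]
      ring
  obtain ⟨i1, e1⟩ := hprod 1 (hS.step_one n)
  obtain ⟨i2, e2⟩ := hprod (-1) (hS.step_neg_one n)
  simp only [← sub_eq_add_neg] at e2 i2
  rw [add_div, ← e1, ← e2, ← integral_add i1 i2]
  refine integral_congr_ae ?_
  filter_upwards [hS.step_ae n] with ω hω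
  simp only [hind]
  rcases hω with h | h
  · rw [h]; simp
  · rw [h]; norm_num

end Walk

section LocalTime

variable {Ω : Type*} {S : ℕ → Ω → ℤ}

/-- The indicator of the event that the walk is at the same site at times `m` and `j`. -/
def sameSite (S : ℕ → Ω → ℤ) (m j : ℕ) (ω : Ω) : ℝ := if S m ω = S j ω then 1 else 0

lemma sameSite_nonneg (m j : ℕ) (ω : Ω) : 0 ≤ sameSite S m j ω := by
  unfold sameSite; split_ifs <;> norm_num

lemma localTime_nonneg (n : ℕ) (k : ℤ) (ω : Ω) : 0 ≤ localTime S n k ω := Nat.cast_nonneg _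

lemma localTime_zero (k : ℤ) (ω : Ω) : localTime S 0 k ω = 0 := by simp [localTime]

lemma localTime_eq_sum (n : ℕ) (k : ℤ) (ω : Ω) :
    localTime S n k ω = ∑ j ∈ Finset.Icc 1 n, if S j ω = k then (1 : ℝ) else 0 := by
  simp [localTime]

lemma localTime_succ (n : ℕ) (k : ℤ) (ω : Ω) :
    localTime S (n + 1) k ω = localTime S n k ω + if S (n + 1) ω = k then 1 else 0 := by
  rw [localTime_eq_sum, localTime_eq_sum, Finset.sum_Icc_succ_top (by omega)]

lemma localTime_self (m : ℕ) (ω : Ω) :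
    localTime S m (S m ω) ω = ∑ j ∈ Finset.Icc 1 m, sameSite S m j ω := by
  rw [localTime_eq_sum]
  exact Finset.sum_congr rfl fun j _ => by simp only [sameSite, eq_comm]

lemma pathDep_localTime (n : ℕ) (k : ℤ) : PathDep S n (localTime S n k) := fun ω ω' h => by
  rw [localTime_eq_sum, localTime_eq_sum]
  exact Finset.sum_congr rfl fun j hj => by rw [h j (Finset.mem_Icc.1 hj).2]

lemma pathDep_sameSite {m j : ℕ} (hj : j ≤ m) : PathDep S m (sameSite S m j) := fun ω ω' h => by
  rw [sameSite, sameSite, h m le_rfl, h j hj]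

lemma pathDep_sum_sameSite (j : ℕ) :
    PathDep S j fun ω => ∑ i ∈ Finset.Icc 1 j, sameSite S j i ω := fun ω ω' h =>
  Finset.sum_congr rfl fun _ hi => pathDep_sameSite (Finset.mem_Icc.1 hi).2 ω ω' h

/-- Weighted sums of powers of local times grow by a term at the last visited site only. -/
lemma sum_mul_localTime_pow_succ_le (p n : ℕ) (F : Finset ℤ) {w : ℤ → ℝ} (hw : ∀ k, 0 ≤ w k)
    (ω : Ω) :
    ∑ k ∈ F, w k * localTime S (n + 1) k ω ^ p ≤ ∑ k ∈ F, w k * localTime S n k ω ^ p +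
      w (S (n + 1) ω) * (localTime S (n + 1) (S (n + 1) ω) ω ^ p -
        localTime S n (S (n + 1) ω) ω ^ p) := by
  set D : ℤ → ℝ := fun k => localTime S (n + 1) k ω ^ p - localTime S n k ω ^ p with hD
  have hD0 : ∀ k, 0 ≤ D k := fun k => by
    refine sub_nonneg.2 (pow_le_pow_left₀ (localTime_nonneg _ _ _) ?_ p)
    rw [localTime_succ]
    split_ifs <;> linarith
  have hsum : ∑ k ∈ F, w k * localTime S (n + 1) k ω ^ p - ∑ k ∈ F, w k * localTime S n k ω ^ p =
      ∑ k ∈ F, w k * D k := by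
    rw [← Finset.sum_sub_distrib]
    exact Finset.sum_congr rfl fun k _ => by simp only [hD]; ring
  have hle : ∑ k ∈ F, w k * D k ≤ w (S (n + 1) ω) * D (S (n + 1) ω) := by
    have e : ∀ k ∈ F, w k * D k = if k = S (n + 1) ω then w k * D k else 0 := fun k _ => by
      split_ifs with h
      · rfl
      · simp only [hD]
        rw [localTime_succ, if_neg (fun h' => h h'.symm)]
        ring
    rw [Finset.sum_congr rfl e, Finset.sum_ite_eq']
    split_ifs
    · exact le_rfl
    · exact mul_nonneg (hw _) (hD0 _)
  linarith

lemma sum_mul_localTime_sq_le (n : ℕ) (F : Finset ℤ) {w : ℤ → ℝ} (hw : ∀ k, 0 ≤ w k) (ω : Ω) :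
    ∑ k ∈ F, w k * localTime S n k ω ^ 2 ≤
      2 * ∑ m ∈ Finset.Icc 1 n, ∑ j ∈ Finset.Icc 1 m, w (S j ω) * sameSite S m j ω := by
  induction n with
  | zero => simp [localTime_zero]
  | succ n ih =>
    refine (sum_mul_localTime_pow_succ_le 2 n F hw ω).trans ?_
    rw [Finset.sum_Icc_succ_top (by omega)]
    have e : ∑ j ∈ Finset.Icc 1 (n + 1), w (S j ω) * sameSite S (n + 1) j ω =
        w (S (n + 1) ω) * localTime S (n + 1) (S (n + 1) ω) ω := by
      rw [localTime_self, Finset.mul_sum]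
      refine Finset.sum_congr rfl fun j _ => ?_
      unfold sameSite
      split_ifs with h
      · rw [h]
      · simp
    rw [e]
    have h1 : localTime S (n + 1) (S (n + 1) ω) ω = localTime S n (S (n + 1) ω) ω + 1 := by
      rw [localTime_succ, if_pos rfl]
    have h0 := localTime_nonneg (S := S) n (S (n + 1) ω) ω
    have := mul_le_mul_of_nonneg_left (a := w (S (n + 1) ω))
      (b := localTime S (n + 1) (S (n + 1) ω) ω ^ 2 - localTime S n (S (n + 1) ω) ω ^ 2)
      (c := 2 * localTime S (n + 1) (S (n + 1) ω) ω) (by rw [h1]; nlinarith) (hw _)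
    linarith

lemma sum_localTime_pow_three_le (n : ℕ) (F : Finset ℤ) (ω : Ω) :
    ∑ k ∈ F, localTime S n k ω ^ 3 ≤
      6 * ∑ m ∈ Finset.Icc 1 n, ∑ j ∈ Finset.Icc 1 m,
        (∑ i ∈ Finset.Icc 1 j, sameSite S j i ω) * sameSite S m j ω := by
  induction n with
  | zero => simp [localTime_zero]
  | succ n ih =>
    have hstep := sum_mul_localTime_pow_succ_le (S := S) 3 n F (w := fun _ => 1)
      (fun _ => zero_le_one) ω
    simp only [one_mul] at hstep
    refine hstep.trans ?_
    rw [Finset.sum_Icc_succ_top (by omega)]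
    have h1 : localTime S (n + 1) (S (n + 1) ω) ω = localTime S n (S (n + 1) ω) ω + 1 := by
      rw [localTime_succ, if_pos rfl]
    have h0 := localTime_nonneg (S := S) n (S (n + 1) ω) ω
    have hsq := sum_mul_localTime_sq_le (S := S) (n + 1) {S (n + 1) ω}
      (w := fun k => if S (n + 1) ω = k then 1 else 0) (fun k => by split_ifs <;> norm_num) ω
    simp only [Finset.sum_singleton, if_true, one_mul] at hsq
    have e : ∀ m, ∑ j ∈ Finset.Icc 1 m, (if S (n + 1) ω = S j ω then (1 : ℝ) else 0) *
        sameSite S m j ω = (∑ j ∈ Finset.Icc 1 m, sameSite S m j ω) * sameSite S (n + 1) m ω := by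
      intro m
      rw [Finset.sum_mul]
      refine Finset.sum_congr rfl fun j _ => ?_
      unfold sameSite
      split_ifs <;> simp_all
    rw [Finset.sum_congr rfl fun m _ => e m] at hsq
    have hcube : localTime S (n + 1) (S (n + 1) ω) ω ^ 3 - localTime S n (S (n + 1) ω) ω ^ 3 ≤
        3 * localTime S (n + 1) (S (n + 1) ω) ω ^ 2 := by
      rw [h1]
      nlinarith
    linarith

/-- The squared `ℓ²` norm of the gradient of the local time, computed along the walk. -/
def gradEnergy (S : ℕ → Ω → ℤ) : ℕ → Ω → ℝ
  | 0, _ => 0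
  | n + 1, ω => gradEnergy S n ω + 2 * (2 * localTime S n (S (n + 1) ω) ω -
      localTime S n (S (n + 1) ω - 1) ω - localTime S n (S (n + 1) ω + 1) ω) + 2

lemma pathDep_gradEnergy (n : ℕ) : PathDep S n (gradEnergy S n) := by
  induction n with
  | zero => exact fun _ _ _ => rfl
  | succ n ih =>
    intro ω ω' h
    have h' : ∀ i ≤ n, S i ω = S i ω' := fun i hi => h i (by omega)
    simp only [gradEnergy, h _ le_rfl, ih ω ω' h', pathDep_localTime _ _ ω ω' h']

lemma exists_sum_sq_sub_localTime_eq (n : ℕ) (ω : Ω) : ∃ I : Finset ℤ, ∀ F, I ⊆ F →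
    ∑ k ∈ F, (localTime S n (k + 1) ω - localTime S n k ω) ^ 2 = gradEnergy S n ω := by
  induction n with
  | zero => exact ⟨∅, fun F _ => by simp [localTime_zero, gradEnergy]⟩
  | succ n ih =>
    obtain ⟨I, hI⟩ := ih
    set x := S (n + 1) ω with hx
    refine ⟨I ∪ {x, x - 1}, fun F hF => ?_⟩
    have hxF : x ∈ F := hF (by simp)
    have hxF' : x - 1 ∈ F := hF (by simp)
    set L := fun k => localTime S n k ω with hL
    have e : ∀ k, (localTime S (n + 1) (k + 1) ω - localTime S (n + 1) k ω) ^ 2 =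
        (L (k + 1) - L k) ^ 2 + ((if k = x - 1 then 2 * (L (k + 1) - L k) + 1 else 0) +
          (if k = x then -2 * (L (k + 1) - L k) + 1 else 0)) := by
      intro k
      rw [localTime_succ, localTime_succ]
      by_cases h1 : k = x
      · rw [if_neg (by omega), if_pos h1.symm, if_neg (by omega), if_pos h1]
        simp only [hL]; ring
      · by_cases h2 : k = x - 1
        · rw [if_pos (by omega), if_neg (by omega), if_pos h2, if_neg h1]
          simp only [hL]; ring
        · rw [if_neg (by omega), if_neg (by omega), if_neg h2, if_neg h1]
          simp only [hL]; ring
    rw [Finset.sum_congr rfl fun k _ => e k, Finset.sum_add_distrib, Finset.sum_add_distrib,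
      hI F (fun k hk => hF (Finset.mem_union_left _ hk)), Finset.sum_ite_eq', Finset.sum_ite_eq',
      if_pos hxF, if_pos hxF', gradEnergy]
    simp only [hL, ← hx, sub_add_cancel]
    ring

lemma sum_sq_sub_localTime_le (n : ℕ) (F : Finset ℤ) (ω : Ω) :
    ∑ k ∈ F, (localTime S n (k + 1) ω - localTime S n k ω) ^ 2 ≤ gradEnergy S n ω := by
  obtain ⟨I, hI⟩ := exists_sum_sq_sub_localTime_eq (S := S) n ω
  rw [← hI (F ∪ I) Finset.subset_union_right]
  exact Finset.sum_le_sum_of_subset_of_nonneg Finset.subset_union_left fun _ _ _ => sq_nonneg _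

/-- A weighted count of the self-intersections of the walk. -/
def weightedReturns (S : ℕ → Ω → ℤ) (H : ℕ → Ω → ℝ) (n : ℕ) (ω : Ω) : ℝ :=
  ∑ m ∈ Finset.Icc 1 n, ∑ j ∈ Finset.Icc 1 m, H j ω * sameSite S m j ω

lemma pathDep_weightedReturns {H : ℕ → Ω → ℝ} (hH : ∀ j, PathDep S j (H j)) (n : ℕ) :
    PathDep S n (weightedReturns S H n) := fun ω ω' h => by
  refine Finset.sum_congr rfl fun m hm => Finset.sum_congr rfl fun j hj => ?_
  rw [Finset.mem_Icc] at hm hj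
  rw [hH j ω ω' fun i hi => h i (by omega),
    pathDep_sameSite hj.2 ω ω' fun i hi => h i (by omega)]

/-- The sites visited by the walk at times `1, …, n`. -/
def visitedSites (S : ℕ → Ω → ℤ) (n : ℕ) (ω : Ω) : Finset ℤ :=
  (Finset.Icc 1 n).image fun j => S j ω

lemma localTime_eq_zero {n : ℕ} {k : ℤ} {ω : Ω} (hk : k ∉ visitedSites S n ω) :
    localTime S n k ω = 0 := by
  rw [localTime_eq_sum]
  refine Finset.sum_eq_zero fun j hj => if_neg fun h => hk ?_
  exact Finset.mem_image.2 ⟨j, hj, h⟩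

lemma sum_comp_walk_eq {n : ℕ} {ω : Ω} {J : Finset ℤ} (hJ : visitedSites S n ω ⊆ J)
    (y : ℤ → ℝ) : ∑ j ∈ Finset.Icc 1 n, y (S j ω) = ∑ k ∈ J, localTime S n k ω * y k := by
  simp only [localTime_eq_sum, Finset.sum_mul]
  rw [Finset.sum_comm]
  refine Finset.sum_congr rfl fun j hj => ?_
  simp only [ite_mul, one_mul, zero_mul]
  rw [Finset.sum_ite_eq, if_pos (hJ (Finset.mem_image.2 ⟨j, hj, rfl⟩))]

/-- The error made by cutting off large local times and remote sites. -/
lemma sum_sq_cutoff_sub_le {n : ℕ} (θ : ℝ) {L : ℝ} (hL : 0 < L) (J : Finset ℤ) (ω : Ω)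
    {P : ℤ → Prop} [DecidablePred P]
    (hP : ∀ k, ¬ P k → L ≤ localTime S n k ω ∨ L ≤ |(k : ℝ)|) :
    ∑ k ∈ J, ((if P k then θ * localTime S n k ω else 0) - θ * localTime S n k ω) ^ 2 ≤
      θ ^ 2 * (6 / L * weightedReturns S (fun j ω => ∑ i ∈ Finset.Icc 1 j, sameSite S j i ω) n ω +
        2 / L ^ 2 * weightedReturns S (fun j ω => (S j ω : ℝ) ^ 2) n ω) := by
  have h3 := sum_localTime_pow_three_le (S := S) n J ω
  have h2 := sum_mul_localTime_sq_le (S := S) n J (w := fun k => (k : ℝ) ^ 2)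
    (fun k => sq_nonneg _) ω
  have hk : ∀ k ∈ J, ((if P k then θ * localTime S n k ω else 0) - θ * localTime S n k ω) ^ 2 ≤
      θ ^ 2 * (1 / L * localTime S n k ω ^ 3 + 1 / L ^ 2 * ((k : ℝ) ^ 2 * localTime S n k ω ^ 2)) := by
    intro k _
    have h0 := localTime_nonneg (S := S) n k ω
    split_ifs with h
    · rw [sub_self, zero_pow two_ne_zero]
      positivity
    · rw [show (0 - θ * localTime S n k ω) ^ 2 = θ ^ 2 * localTime S n k ω ^ 2 by ring]
      refine mul_le_mul_of_nonneg_left ?_ (sq_nonneg θ)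
      rcases hP k h with h | h
      · have : localTime S n k ω ^ 2 ≤ 1 / L * localTime S n k ω ^ 3 := by
          rw [one_div_mul_eq_div, le_div_iff₀ hL, pow_succ _ 2]
          exact mul_le_mul_of_nonneg_left h (sq_nonneg _)
        have h' : 0 ≤ 1 / L ^ 2 * ((k : ℝ) ^ 2 * localTime S n k ω ^ 2) := by positivity
        linarith
      · have : localTime S n k ω ^ 2 ≤ 1 / L ^ 2 * ((k : ℝ) ^ 2 * localTime S n k ω ^ 2) := by
          rw [one_div_mul_eq_div, le_div_iff₀ (by positivity), mul_comm]
          refine mul_le_mul_of_nonneg_right ?_ (sq_nonneg _)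
          rw [← sq_abs (k : ℝ)]
          exact pow_le_pow_left₀ hL.le h 2
        have h' : 0 ≤ 1 / L * localTime S n k ω ^ 3 := by positivity
        linarith
  refine (Finset.sum_le_sum hk).trans ?_
  rw [← Finset.mul_sum, Finset.sum_add_distrib, ← Finset.mul_sum, ← Finset.mul_sum]
  refine mul_le_mul_of_nonneg_left ?_ (sq_nonneg θ)
  have h3' := mul_le_mul_of_nonneg_left h3 (by positivity : 0 ≤ 1 / L)
  have h2' := mul_le_mul_of_nonneg_left h2 (by positivity : 0 ≤ 1 / L ^ 2)
  unfold weightedReturns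
  have e1 : ∀ x : ℝ, 1 / L * (6 * x) = 6 / L * x := fun x => by ring
  have e2 : ∀ x : ℝ, 1 / L ^ 2 * (2 * x) = 2 / L ^ 2 * x := fun x => by ring
  rw [e1] at h3'
  rw [e2] at h2'
  exact add_le_add h3' h2'

variable [MeasurableSpace Ω] {μ : Measure Ω} [IsProbabilityMeasure μ]

lemma IsSSRW.integral_mul_abs (hS : IsSSRW μ S) {i : ℕ} {H : Ω → ℝ} (hH : PathDep S i H) (d : ℕ) :
    ∫ ω, H ω * |((S (i + d) ω - S i ω : ℤ) : ℝ)| ∂μ =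
      ∑ l ∈ Finset.range d, ∫ ω, H ω * sameSite S (i + l) i ω ∂μ := by
  induction d with
  | zero => simp
  | succ d ih =>
    rw [Finset.sum_range_succ, ← ih]
    have hd : ∀ f : ℤ → ℝ, ∀ x : ℤ, PathDep S (i + d) fun ω => H ω * f (x - S i ω) :=
      fun f x ω ω' h => by
        simp only [hH ω ω' fun j hj => h j (by omega), h i (by omega)]
    have hd' : ∀ f : ℤ → ℝ, PathDep S (i + d) fun ω => H ω * f (S (i + d) ω - S i ω) :=
      fun f ω ω' h => by
        simp only [hH ω ω' fun j hj => h j (by omega), h i (by omega), h (i + d) le_rfl]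
    have := hS.integral_step (n := i + d)
      (Φ := fun x ω => H ω * |((x - S i ω : ℤ) : ℝ)|) (hd fun y => |(y : ℝ)|)
    rw [← add_assoc, this]
    rw [← integral_add, ← integral_add, ← integral_div]
    · refine integral_congr_ae (ae_of_all _ fun ω => ?_)
      simp only [sameSite]
      set y := S (i + d) ω - S i ω with hy
      rw [show S (i + d) ω + 1 - S i ω = y + 1 by omega,
        show S (i + d) ω - 1 - S i ω = y - 1 by omega]
      have : |((y + 1 : ℤ) : ℝ)| + |((y - 1 : ℤ) : ℝ)| =
          2 * |(y : ℝ)| + 2 * if S (i + d) ω = S i ω then 1 else 0 := by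
        rw [← Int.cast_abs, ← Int.cast_abs, ← Int.cast_abs]
        split_ifs with h
        · have hy0 : y = 0 := by omega
          rw [hy0]; norm_num
        · have hy0 : y ≠ 0 := by omega
          have : |y + 1| + |y - 1| = 2 * |y| := by
            rcases lt_or_gt_of_ne hy0 with h | h
            · rw [abs_of_nonpos (by omega), abs_of_nonpos (by omega), abs_of_neg h]; ring
            · rw [abs_of_nonneg (by omega), abs_of_nonneg (by omega), abs_of_pos h]; ring
          rw [mul_zero, add_zero]
          exact_mod_cast this
      linear_combination H ω / 2 * this
    · exact hS.integrable_of_pathDep (hd' fun y => |(y : ℝ)|)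
    · refine hS.integrable_of_pathDep (n := i + d) fun ω ω' h => ?_
      rw [hH ω ω' fun j hj => h j (by omega), pathDep_sameSite (by omega) ω ω' h]
    · refine hS.integrable_of_pathDep (n := i + d) fun ω ω' h => ?_
      rw [hH ω ω' fun j hj => h j (by omega), h i (by omega), h (i + d) le_rfl]
    · refine hS.integrable_of_pathDep (n := i + d) fun ω ω' h => ?_
      rw [hH ω ω' fun j hj => h j (by omega), h i (by omega), h (i + d) le_rfl]

lemma IsSSRW.integral_mul_sq (hS : IsSSRW μ S) {i : ℕ} {H : Ω → ℝ} (hH : PathDep S i H) (d : ℕ) :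
    ∫ ω, H ω * ((S (i + d) ω - S i ω : ℤ) : ℝ) ^ 2 ∂μ = d * ∫ ω, H ω ∂μ := by
  induction d with
  | zero => simp
  | succ d ih =>
    have hdep : ∀ c : ℤ, PathDep S (i + d)
        fun ω => H ω * ((S (i + d) ω + c - S i ω : ℤ) : ℝ) ^ 2 := fun c ω ω' h => by
      simp only [hH ω ω' fun j hj => h j (by omega), h i (by omega), h (i + d) le_rfl]
    have := hS.integral_step (n := i + d)
      (Φ := fun x ω => H ω * ((x - S i ω : ℤ) : ℝ) ^ 2) fun x ω ω' h => by
        simp only [hH ω ω' fun j hj => h j (by omega), h i (by omega)]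
    rw [← add_assoc, this, Nat.cast_succ, add_mul, ← ih, one_mul, ← integral_add, ← integral_add,
      ← integral_div]
    · refine integral_congr_ae (ae_of_all _ fun ω => ?_)
      push_cast
      ring
    · simpa using hS.integrable_of_pathDep (hdep 0)
    · exact hS.integrable_of_pathDep hH
    · exact hS.integrable_of_pathDep (hdep 1)
    · simpa [sub_eq_add_neg] using hS.integrable_of_pathDep (hdep (-1))

lemma IsSSRW.sum_integral_mul_sameSite_le (hS : IsSSRW μ S) {i : ℕ} {H : Ω → ℝ}
    (hH : PathDep S i H) (hH0 : ∀ ω, 0 ≤ H ω) (d : ℕ) :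
    ∑ l ∈ Finset.range d, ∫ ω, H ω * sameSite S (i + l) i ω ∂μ ≤ √d * ∫ ω, H ω ∂μ := by
  rcases Nat.eq_zero_or_pos d with rfl | hd
  · simp
  rw [← hS.integral_mul_abs hH]
  have hc : 0 < √(d : ℝ) := Real.sqrt_pos.2 (by exact_mod_cast hd)
  have hcc : √(d : ℝ) * √(d : ℝ) = d := Real.mul_self_sqrt (Nat.cast_nonneg d)
  have hi1 := hS.integrable_of_pathDep hH
  have hi2 : Integrable (fun ω => H ω * ((S (i + d) ω - S i ω : ℤ) : ℝ) ^ 2) μ :=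
    hS.integrable_of_pathDep (n := i + d) fun ω ω' h => by
      rw [hH ω ω' fun j hj => h j (by omega), h i (by omega), h (i + d) le_rfl]
  have hi3 : Integrable (fun ω => H ω * |((S (i + d) ω - S i ω : ℤ) : ℝ)|) μ :=
    hS.integrable_of_pathDep (n := i + d) fun ω ω' h => by
      rw [hH ω ω' fun j hj => h j (by omega), h i (by omega), h (i + d) le_rfl]
  calc ∫ ω, H ω * |((S (i + d) ω - S i ω : ℤ) : ℝ)| ∂μ
      ≤ ∫ ω, (√d / 2 * H ω + 1 / (2 * √d) * (H ω * ((S (i + d) ω - S i ω : ℤ) : ℝ) ^ 2)) ∂μ := by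
        refine integral_mono hi3 ((hi1.const_mul _).add (hi2.const_mul _)) fun ω => ?_
        set y : ℝ := ((S (i + d) ω - S i ω : ℤ) : ℝ)
        have : |y| ≤ √d / 2 + 1 / (2 * √d) * y ^ 2 := by
          rw [← sub_nonneg]
          have : √(d : ℝ) / 2 + 1 / (2 * √d) * y ^ 2 - |y| = (√d - |y|) ^ 2 / (2 * √d) := by
            rw [← sq_abs y]
            field_simp
            ring
          rw [this]
          positivity
        have := mul_le_mul_of_nonneg_left this (hH0 ω)
        simp only
        linarith
    _ = √d / 2 * ∫ ω, H ω ∂μ + 1 / (2 * √d) * (d * ∫ ω, H ω ∂μ) := by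
        rw [integral_add (hi1.const_mul _) (hi2.const_mul _), integral_const_mul,
          integral_const_mul, hS.integral_mul_sq hH]
    _ = √d * ∫ ω, H ω ∂μ := by
        have : 1 / (2 * √(d : ℝ)) * d = √d / 2 := by
          rw [div_mul_eq_mul_div, one_mul, div_eq_div_iff (by positivity) two_ne_zero, ← mul_assoc,
            mul_right_comm, hcc, mul_comm]
        rw [← mul_assoc, this]
        ring

lemma IsSSRW.integral_weightedReturns_le (hS : IsSSRW μ S) {H : ℕ → Ω → ℝ}
    (hH : ∀ j, PathDep S j (H j)) (hH0 : ∀ j ω, 0 ≤ H j ω) (n : ℕ) :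
    ∫ ω, weightedReturns S H n ω ∂μ ≤ √n * ∑ j ∈ Finset.Icc 1 n, ∫ ω, H j ω ∂μ := by
  have hint : ∀ m j, j ≤ m → Integrable (fun ω => H j ω * sameSite S m j ω) μ := fun m j hj =>
    hS.integrable_of_pathDep (n := m) fun ω ω' h => by
      rw [hH j ω ω' fun i hi => h i (by omega), pathDep_sameSite hj ω ω' h]
  have hswap : ∫ ω, weightedReturns S H n ω ∂μ =
      ∑ j ∈ Finset.Icc 1 n, ∑ m ∈ Finset.Icc j n, ∫ ω, H j ω * sameSite S m j ω ∂μ := by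
    unfold weightedReturns
    rw [integral_finsetSum _ fun m _ => integrable_finsetSum _ fun j hj =>
      hint m j (Finset.mem_Icc.1 hj).2]
    rw [Finset.sum_congr rfl fun m _ => integral_finsetSum _ fun j hj =>
      hint m j (Finset.mem_Icc.1 hj).2]
    refine Finset.sum_comm' fun m j => ?_
    simp only [Finset.mem_Icc]
    omega
  rw [hswap, Finset.mul_sum]
  refine Finset.sum_le_sum fun j hj => ?_
  rw [Finset.mem_Icc] at hj
  have := hS.sum_integral_mul_sameSite_le (hH j) (hH0 j) (n + 1 - j)
  rw [← Finset.sum_Ico_eq_sum_range (fun m => ∫ ω, H j ω * sameSite S m j ω ∂μ)] at this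
  refine this.trans (mul_le_mul_of_nonneg_right ?_ (integral_nonneg (hH0 j)))
  exact Real.sqrt_le_sqrt (by exact_mod_cast (by omega : n + 1 - j ≤ n))

lemma IsSSRW.integral_weightedReturns_one_le (hS : IsSSRW μ S) (n : ℕ) :
    ∫ ω, weightedReturns S (fun _ _ => 1) n ω ∂μ ≤ √n * n := by
  refine (hS.integral_weightedReturns_le (fun _ _ _ _ => rfl) (fun _ _ => zero_le_one) n).trans ?_
  simp

lemma IsSSRW.integral_weightedReturns_sq_le (hS : IsSSRW μ S) (n : ℕ) :
    ∫ ω, weightedReturns S (fun j ω => (S j ω : ℝ) ^ 2) n ω ∂μ ≤ √n * (n : ℝ) ^ 2 := by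
  refine (hS.integral_weightedReturns_le (fun j ω ω' h => by simp only [h j le_rfl])
    (fun _ _ => sq_nonneg _) n).trans (mul_le_mul_of_nonneg_left ?_ (Real.sqrt_nonneg _))
  have hsq : ∀ j : ℕ, ∫ ω, (S j ω : ℝ) ^ 2 ∂μ = j := fun j => by
    simpa [hS.init] using hS.integral_mul_sq (i := 0) (H := fun _ => 1) (fun _ _ _ => rfl) j
  calc ∑ j ∈ Finset.Icc 1 n, ∫ ω, (S j ω : ℝ) ^ 2 ∂μ
      ≤ ∑ j ∈ Finset.Icc 1 n, (n : ℝ) := Finset.sum_le_sum fun j hj => by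
        rw [hsq]
        exact_mod_cast (Finset.mem_Icc.1 hj).2
    _ = (n : ℝ) ^ 2 := by simp [sq]

lemma IsSSRW.integral_weightedReturns_sum_le (hS : IsSSRW μ S) (n : ℕ) :
    ∫ ω, weightedReturns S (fun j ω => ∑ i ∈ Finset.Icc 1 j, sameSite S j i ω) n ω ∂μ ≤
      (n : ℝ) ^ 2 := by
  refine (hS.integral_weightedReturns_le pathDep_sum_sameSite
    (fun _ _ => Finset.sum_nonneg fun _ _ => sameSite_nonneg _ _ _) n).trans ?_
  have h := hS.integral_weightedReturns_one_le n
  have e : ∫ ω, weightedReturns S (fun _ _ => 1) n ω ∂μ =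
      ∑ j ∈ Finset.Icc 1 n, ∫ ω, ∑ i ∈ Finset.Icc 1 j, sameSite S j i ω ∂μ := by
    simp only [weightedReturns, one_mul]
    exact integral_finsetSum _ fun j _ => hS.integrable_of_pathDep (pathDep_sum_sameSite j)
  rw [e] at h
  refine (mul_le_mul_of_nonneg_left h (Real.sqrt_nonneg _)).trans_eq ?_
  rw [← mul_assoc, Real.mul_self_sqrt (Nat.cast_nonneg n), sq]

lemma IsSSRW.integral_gradEnergy_add (hS : IsSSRW μ S) (n : ℕ) :
    ∫ ω, gradEnergy S n ω ∂μ + 4 * ∫ ω, localTime S n (S (n + 1) ω) ω ∂μ = 2 * n := by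
  induction n with
  | zero => simp [gradEnergy, localTime_zero]
  | succ n ih =>
    have hint : ∀ c : ℤ, Integrable (fun ω => localTime S n (S (n + 1) ω + c) ω) μ := fun c =>
      hS.integrable_of_pathDep (n := n + 1) fun ω ω' h => by
        rw [h _ le_rfl, pathDep_localTime n _ ω ω' fun i hi => h i (by omega)]
    have h0 := hint 0
    have h1 := hint 1
    have h2 := hint (-1)
    simp only [add_zero, ← sub_eq_add_neg] at h0 h2
    have hW := hS.integrable_of_pathDep (pathDep_gradEnergy (S := S) n)
    have hstep := hS.integral_step (n := n + 1) (Φ := fun x => localTime S (n + 1) x)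
      (fun x => pathDep_localTime (n + 1) x)
    have e1 : ∀ ω, localTime S (n + 1) (S (n + 1) ω + 1) ω =
        localTime S n (S (n + 1) ω + 1) ω := fun ω => by
      rw [localTime_succ, if_neg (by omega), add_zero]
    have e2 : ∀ ω, localTime S (n + 1) (S (n + 1) ω - 1) ω =
        localTime S n (S (n + 1) ω - 1) ω := fun ω => by
      rw [localTime_succ, if_neg (by omega), add_zero]
    simp only [e1, e2] at hstep
    rw [hstep]
    have hE : ∫ ω, gradEnergy S (n + 1) ω ∂μ = ∫ ω, gradEnergy S n ω ∂μ +
        2 * (2 * ∫ ω, localTime S n (S (n + 1) ω) ω ∂μ -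
          ∫ ω, localTime S n (S (n + 1) ω - 1) ω ∂μ -
          ∫ ω, localTime S n (S (n + 1) ω + 1) ω ∂μ) + 2 := by
      simp only [gradEnergy]
      have h3 : Integrable (fun ω => 2 * localTime S n (S (n + 1) ω) ω) μ := h0.const_mul 2
      have h4 : Integrable (fun ω => 2 * localTime S n (S (n + 1) ω) ω -
        localTime S n (S (n + 1) ω - 1) ω) μ := h3.sub h2
      have h5 : Integrable (fun ω => 2 * (2 * localTime S n (S (n + 1) ω) ω -
        localTime S n (S (n + 1) ω - 1) ω - localTime S n (S (n + 1) ω + 1) ω)) μ :=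
        (h4.sub h1).const_mul 2
      have h6 : Integrable (fun ω => gradEnergy S n ω + 2 * (2 * localTime S n (S (n + 1) ω) ω -
        localTime S n (S (n + 1) ω - 1) ω - localTime S n (S (n + 1) ω + 1) ω)) μ := hW.add h5
      rw [integral_add h6 (integrable_const _), integral_add hW h5, integral_const_mul,
        integral_sub h4 h1, integral_sub h3 h2, integral_const_mul]
      simp
    rw [hE]
    push_cast
    linarith

lemma IsSSRW.integral_gradEnergy_le (hS : IsSSRW μ S) (n : ℕ) :
    ∫ ω, gradEnergy S n ω ∂μ ≤ 2 * n := by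
  have h := hS.integral_gradEnergy_add n
  have : 0 ≤ ∫ ω, localTime S n (S (n + 1) ω) ω ∂μ :=
    integral_nonneg fun ω => localTime_nonneg _ _ _
  linarith

end LocalTime

section Conclusion

variable {Ω : Type*} [MeasurableSpace Ω] {μ : Measure Ω} [IsProbabilityMeasure μ]
  {S : ℕ → Ω → ℤ} {ξ : ℤ → Ω → ℝ}

/-- The Gaussian approximation for weighted sums over a long symmetric window. -/
lemma exists_norm_integral_expI_sum_Icc_sub_le (hm : ∀ k, Measurable (ξ k)) (h3 : Cond3 μ ξ)
    (h4 : Cond4 μ ξ) (h5 : Cond5 μ ξ) {K δ : ℝ} (hK : 0 < K) (hδ : 0 < δ) :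
    ∃ R₀ : ℕ, ∀ R ≥ R₀, ∀ a : ℤ → ℝ, (∀ k, |a k| ≤ K / √(2 * R + 1 : ℝ)) →
      ‖∫ ω, expI (∑ k ∈ Finset.Icc (-(R : ℤ)) R, a k * ξ k ω) ∂μ -
        (Real.exp (-(∫ ω, (∑ k ∈ Finset.Icc (-(R : ℤ)) R, a k * ξ k ω) ^ 2 ∂μ) / 2) : ℂ)‖ ≤ δ := by
  obtain ⟨N₀, hN₀⟩ := exists_norm_integral_expI_weightedSum_sub_le hm h3 h4 h5 hK hδ
  refine ⟨N₀, fun R hR a ha => ?_⟩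
  set N := 2 * R + 1 with hN
  set b : ℕ → ℝ := fun j => if j < N then a ((j : ℤ) - R) else 0 with hb
  have hreindex : ∀ y : ℤ → ℝ, ∑ k ∈ Finset.Icc (-(R : ℤ)) R, a k * y k =
      ∑ i : Fin N, a ((i : ℤ) - R) * y ((i : ℤ) - R) := fun y => by
    rw [Fin.sum_univ_eq_sum_range (fun j => a ((j : ℤ) - R) * y ((j : ℤ) - R)) N]
    refine Finset.sum_nbij' (fun k => (k + R).toNat) (fun j => (j : ℤ) - R) ?_ ?_ ?_ ?_ ?_
    · intro k hk
      rw [Finset.mem_Icc] at hk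
      rw [Finset.mem_range]
      omega
    · intro j hj
      rw [Finset.mem_range] at hj
      rw [Finset.mem_Icc]
      omega
    · intro k hk
      rw [Finset.mem_Icc] at hk
      omega
    · intro j hj
      omega
    · intro k hk
      rw [Finset.mem_Icc] at hk
      rw [show (((k + R).toNat : ℤ)) - R = k by omega]
  have hw : ∀ ω, weightedSum ξ b N ω = ∑ i : Fin N, a ((i : ℤ) - R) * ξ ((i : ℤ) - R + R) ω := by
    intro ω
    rw [weightedSum, Finset.sum_range]
    refine Finset.sum_congr rfl fun i _ => ?_
    simp only [hb]
    rw [if_pos i.2, sub_add_cancel]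
  have hmeasF : Measurable fun x : Fin N → ℝ => ∑ i : Fin N, a ((i : ℤ) - R) * x i :=
    Finset.measurable_sum _ fun i _ => (measurable_pi_apply i).const_mul _
  have h := hN₀ N (by omega) b (fun k => ?_) (fun k hk => by simp only [hb]; rw [if_neg (by omega)])
  · simp only [hw, hreindex] at h ⊢
    rw [h3.1.integral_comp hm (fun i : Fin N => (i : ℤ) - R) R
      (f := fun x => expI (∑ i : Fin N, a ((i : ℤ) - R) * x i))
      (measurable_expI.comp hmeasF).stronglyMeasurable,
      h3.1.integral_comp hm (fun i : Fin N => (i : ℤ) - R) R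
      (f := fun x => (∑ i : Fin N, a ((i : ℤ) - R) * x i) ^ 2)
      (hmeasF.pow_const 2).stronglyMeasurable] at h
    exact h
  · simp only [hb]
    have hNR : (N : ℝ) = 2 * R + 1 := by rw [hN]; push_cast; ring
    rw [hNR]
    split_ifs
    · exact ha _
    · rw [abs_zero]
      positivity

lemma abs_exp_neg_half_sub_le {x y : ℝ} (hx : 0 ≤ x) (hy : 0 ≤ y) :
    |Real.exp (-x / 2) - Real.exp (-y / 2)| ≤ |x - y| / 2 := by
  wlog h : x ≤ y generalizing x y
  · rw [abs_sub_comm, abs_sub_comm x]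
    exact this hy hx (le_of_not_ge h)
  rw [abs_of_nonneg (sub_nonneg.2 (Real.exp_le_exp.2 (by linarith))), abs_of_nonpos (by linarith)]
  have e : Real.exp (-y / 2) = Real.exp (-x / 2) * Real.exp (-(y - x) / 2) := by
    rw [← Real.exp_add]
    ring_nf
  have h1 : Real.exp (-x / 2) ≤ 1 := Real.exp_le_one_iff.2 (by linarith)
  have h2 := Real.add_one_le_exp (-(y - x) / 2)
  have h3 := Real.exp_pos (-x / 2)
  rw [e]
  nlinarith

/-- Stability of the Gaussian approximation under a perturbation of the weights. -/
lemma Cond3.norm_integral_expI_sub_exp_le (h3 : Cond3 μ ξ) (hm : ∀ k, Measurable (ξ k))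
    (h4 : Cond4 μ ξ) {a b : ℤ → ℝ} {J : Finset ℤ} {A E T η δ : ℝ} (ha : ∀ k ∉ J, a k = 0)
    (hA : ∑ k ∈ J, a k ^ 2 ≤ A) (hE : ∑ k ∈ J, (b k - a k) ^ 2 ≤ E)
    (hT : ∀ F : Finset ℤ, ∑ k ∈ F, (a (k + 1) - a k) ^ 2 ≤ T) (hη : 0 < η) (hη1 : η ≤ 1)
    (hδ : ‖∫ ω, expI (∑ k ∈ J, b k * ξ k ω) ∂μ -
      (Real.exp (-(∫ ω, (∑ k ∈ J, b k * ξ k ω) ^ 2 ∂μ) / 2) : ℂ)‖ ≤ δ) :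
    ‖∫ ω, expI (∑ k ∈ J, a k * ξ k ω) ∂μ -
      (Real.exp (-((∑' p, autocov μ ξ p) * ∑ k ∈ J, a k ^ 2) / 2) : ℂ)‖ ≤
      η / 2 + δ + 3 / 2 * ((∑' p, |autocov μ ξ p|) * E / η) +
        η * A * ((∑' p, |autocov μ ξ p|) / 2 +
          5 / 2 * ∑' p : ℤ, √(1 + |(p : ℝ)|) * |autocov μ ξ p|) +
        (∑' p : ℤ, √(1 + |(p : ℝ)|) * |autocov μ ξ p|) * T / (2 * η ^ 3) := by
  set σ := ∑' p, autocov μ ξ p with hσ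
  set Γ := ∑' p, |autocov μ ξ p| with hΓ
  set Γ' := ∑' p : ℤ, √(1 + |(p : ℝ)|) * |autocov μ ξ p| with hΓ'
  have hΓ0 : 0 ≤ Γ := tsum_nonneg fun _ => abs_nonneg _
  have hΓ'0 : 0 ≤ Γ' := tsum_nonneg fun _ => mul_nonneg (Real.sqrt_nonneg _) (abs_nonneg _)
  have hσ0 : 0 ≤ σ := h3.tsum_autocov_nonneg hm h4
  have hA0 : 0 ≤ ∑ k ∈ J, a k ^ 2 := Finset.sum_nonneg fun _ _ => sq_nonneg _
  set X : Ω → ℝ := fun ω => ∑ k ∈ J, a k * ξ k ω with hX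
  set Y : Ω → ℝ := fun ω => ∑ k ∈ J, b k * ξ k ω with hY
  have hXm : MemLp X 4 μ := h3.memLp_sum hm a J
  have hYm : MemLp Y 4 μ := h3.memLp_sum hm b J
  have hDm : MemLp (fun ω => ∑ k ∈ J, (b k - a k) * ξ k ω) 4 μ :=
    h3.memLp_sum hm (fun k => b k - a k) J
  have hDeq : ∀ ω, ∑ k ∈ J, (b k - a k) * ξ k ω = Y ω - X ω := fun ω => by
    simp only [hX, hY, sub_mul, Finset.sum_sub_distrib]
  simp only [hDeq] at hDm
  have hX2 := hXm.integrable_sq_of_four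
  have hY2 := hYm.integrable_sq_of_four
  have hD2 := hDm.integrable_sq_of_four
  have hEX : ∫ ω, X ω ^ 2 ∂μ ≤ Γ * A :=
    (h3.integral_sum_sq_le hm h4 a J).trans (mul_le_mul_of_nonneg_left hA hΓ0)
  have hED : ∫ ω, (Y ω - X ω) ^ 2 ∂μ ≤ Γ * E := by
    have := h3.integral_sum_sq_le hm h4 (fun k => b k - a k) J
    simp only [hDeq] at this
    exact this.trans (mul_le_mul_of_nonneg_left hE hΓ0)
  have hED0 : 0 ≤ ∫ ω, (Y ω - X ω) ^ 2 ∂μ := integral_nonneg fun _ => sq_nonneg _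
  have hfirst : ‖∫ ω, expI (X ω) ∂μ - ∫ ω, expI (Y ω) ∂μ‖ ≤ η / 2 + Γ * E / η / 2 := by
    rw [← integral_sub (integrable_expI hXm.aestronglyMeasurable.aemeasurable)
      (integrable_expI hYm.aestronglyMeasurable.aemeasurable)]
    have hbd : Integrable (fun ω => η / 2 + (Y ω - X ω) ^ 2 * (1 / (2 * η))) μ :=
      (integrable_const _).add (hD2.mul_const _)
    refine (norm_integral_le_of_norm_le hbd (ae_of_all _ fun ω => ?_)).trans ?_
    · refine (norm_expI_sub_expI_le _ _).trans ?_
      rw [abs_sub_comm, ← sq_abs, ← sub_nonneg]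
      have : η / 2 + |Y ω - X ω| ^ 2 * (1 / (2 * η)) - |Y ω - X ω| =
          (η - |Y ω - X ω|) ^ 2 / (2 * η) := by
        field_simp
        ring
      rw [this]
      positivity
    · rw [integral_add (integrable_const _) (hD2.mul_const _), integral_mul_const]
      simp only [integral_const, probReal_univ, one_smul]
      have : (∫ ω, (Y ω - X ω) ^ 2 ∂μ) * (1 / (2 * η)) ≤ Γ * E * (1 / (2 * η)) :=
        mul_le_mul_of_nonneg_right hED (by positivity)
      have e : Γ * E * (1 / (2 * η)) = Γ * E / η / 2 := by field_simp
      linarith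
  have hvarXY : |∫ ω, Y ω ^ 2 ∂μ - ∫ ω, X ω ^ 2 ∂μ| ≤ 2 * (Γ * E / η) + η * (Γ * A) := by
    rw [← integral_sub hY2 hX2, ← Real.norm_eq_abs]
    have hbd : Integrable (fun ω => (Y ω - X ω) ^ 2 * (2 / η) + X ω ^ 2 * η) μ :=
      (hD2.mul_const _).add (hX2.mul_const _)
    refine (norm_integral_le_of_norm_le hbd (ae_of_all _ fun ω => ?_)).trans ?_
    · rw [Real.norm_eq_abs]
      set d := Y ω - X ω with hd
      have e : Y ω ^ 2 - X ω ^ 2 = d ^ 2 + 2 * d * X ω := by rw [hd]; ring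
      have hd2 : d ^ 2 ≤ d ^ 2 / η := le_div_self (sq_nonneg _) hη hη1
      have e2 : d ^ 2 * (2 / η) = d ^ 2 / η + d ^ 2 / η := by ring
      have hsq1 : 0 ≤ (d + η * X ω) ^ 2 / η := by positivity
      have hsq2 : 0 ≤ (d - η * X ω) ^ 2 / η := by positivity
      have e3 : (d + η * X ω) ^ 2 / η = d ^ 2 / η + 2 * d * X ω + X ω ^ 2 * η := by
        field_simp
        ring
      have e4 : (d - η * X ω) ^ 2 / η = d ^ 2 / η - 2 * d * X ω + X ω ^ 2 * η := by
        field_simp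
        ring
      have := sq_nonneg d
      rw [e, e2, abs_le]
      constructor <;> linarith
    · rw [integral_add (hD2.mul_const _) (hX2.mul_const _), integral_mul_const,
        integral_mul_const]
      have h1 : (∫ ω, (Y ω - X ω) ^ 2 ∂μ) * (2 / η) ≤ Γ * E * (2 / η) :=
        mul_le_mul_of_nonneg_right hED (by positivity)
      have h2 : (∫ ω, X ω ^ 2 ∂μ) * η ≤ Γ * A * η := mul_le_mul_of_nonneg_right hEX hη.le
      have e : Γ * E * (2 / η) = 2 * (Γ * E / η) := by ring
      linarith
  have hvarX : |∫ ω, X ω ^ 2 ∂μ - σ * ∑ k ∈ J, a k ^ 2| ≤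
      Γ' * (5 * (η * A) + T / η ^ 3) := by
    refine (h3.abs_integral_sum_sq_sub_le hm h4 ha hT hη (pow_pos hη 2)).trans
      (mul_le_mul_of_nonneg_left ?_ hΓ'0)
    have e : (T / η ^ 2 + 4 * η ^ 2 * ∑ k ∈ J, a k ^ 2) / η =
        T / η ^ 3 + 4 * (η * ∑ k ∈ J, a k ^ 2) := by
      field_simp
    rw [e]
    have := mul_le_mul_of_nonneg_left hA hη.le
    linarith
  have hexp := abs_exp_neg_half_sub_le (x := ∫ ω, Y ω ^ 2 ∂μ) (y := σ * ∑ k ∈ J, a k ^ 2)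
    (integral_nonneg fun _ => sq_nonneg _) (mul_nonneg hσ0 hA0)
  have htri : |∫ ω, Y ω ^ 2 ∂μ - σ * ∑ k ∈ J, a k ^ 2| ≤
      |∫ ω, Y ω ^ 2 ∂μ - ∫ ω, X ω ^ 2 ∂μ| + |∫ ω, X ω ^ 2 ∂μ - σ * ∑ k ∈ J, a k ^ 2| :=
    abs_sub_le _ _ _
  have hthird : ‖(Real.exp (-(∫ ω, Y ω ^ 2 ∂μ) / 2) : ℂ) -
      (Real.exp (-(σ * ∑ k ∈ J, a k ^ 2) / 2) : ℂ)‖ =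
      |Real.exp (-(∫ ω, Y ω ^ 2 ∂μ) / 2) - Real.exp (-(σ * ∑ k ∈ J, a k ^ 2) / 2)| := by
    rw [← Complex.ofReal_sub, Complex.norm_real, Real.norm_eq_abs]
  have hnorm := norm_sub_le_norm_sub_add_norm_sub (∫ ω, expI (X ω) ∂μ) (∫ ω, expI (Y ω) ∂μ)
    (Real.exp (-(σ * ∑ k ∈ J, a k ^ 2) / 2) : ℂ)
  have hnorm' := norm_sub_le_norm_sub_add_norm_sub (∫ ω, expI (Y ω) ∂μ)
    (Real.exp (-(∫ ω, Y ω ^ 2 ∂μ) / 2) : ℂ) (Real.exp (-(σ * ∑ k ∈ J, a k ^ 2) / 2) : ℂ)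
  rw [hthird] at hnorm'
  have e : η / 2 + δ + 3 / 2 * (Γ * E / η) + η * A * (Γ / 2 + 5 / 2 * Γ') +
      Γ' * T / (2 * η ^ 3) = (η / 2 + Γ * E / η / 2) + δ +
        (2 * (Γ * E / η) + η * (Γ * A) + Γ' * (5 * (η * A) + T / η ^ 3)) / 2 := by
    ring
  rw [e]
  linarith

/-- Conditionally on the walk, the characteristic function is nearly Gaussian. -/
lemma exists_norm_integral_expI_walk_sub_le (hm : ∀ k, Measurable (ξ k)) (h3 : Cond3 μ ξ)
    (h4 : Cond4 μ ξ) (h5 : Cond5 μ ξ) (t : ℝ) {K η δ : ℝ} (hK : 1 ≤ K) (hη : 0 < η) (hη1 : η ≤ 1)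
    (hδ : 0 < δ) :
    ∃ n₀ : ℕ, ∀ n ≥ n₀, ∀ θ : ℝ, θ ^ 2 * (n * √n) = t ^ 2 → ∀ ω,
      ‖∫ ω', expI (θ * ∑ j ∈ Finset.Icc 1 n, ξ (S j ω) ω') ∂μ -
        (Real.exp (-((∑' p, autocov μ ξ p) *
          ∑ k ∈ visitedSites S n ω, (θ * localTime S n k ω) ^ 2) / 2) : ℂ)‖ ≤
      η / 2 + δ + 3 / 2 * ((∑' p, |autocov μ ξ p|) * (θ ^ 2 * (6 / (K * √n) *
        weightedReturns S (fun j ω => ∑ i ∈ Finset.Icc 1 j, sameSite S j i ω) n ω +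
        2 / (K * √n) ^ 2 * weightedReturns S (fun j ω => (S j ω : ℝ) ^ 2) n ω)) / η) +
        η * (2 * θ ^ 2 * weightedReturns S (fun _ _ => 1) n ω) * ((∑' p, |autocov μ ξ p|) / 2 +
          5 / 2 * ∑' p : ℤ, √(1 + |(p : ℝ)|) * |autocov μ ξ p|) +
        (∑' p : ℤ, √(1 + |(p : ℝ)|) * |autocov μ ξ p|) * (θ ^ 2 * gradEnergy S n ω) /
          (2 * η ^ 3) := by
  have hK0 : 0 < K := by linarith
  obtain ⟨R₀, hR₀⟩ := exists_norm_integral_expI_sum_Icc_sub_le hm h3 h4 h5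
    (K := √(3 * K ^ 3 * t ^ 2 + 1)) (by positivity) hδ
  refine ⟨(R₀ + 1) ^ 2, fun n hn θ hθ ω => ?_⟩
  have hn1 : ((R₀ : ℝ) + 1) ≤ √n := by
    refine Real.le_sqrt_of_sq_le ?_
    exact_mod_cast hn
  have hR₀0 : (0 : ℝ) ≤ R₀ := Nat.cast_nonneg _
  have hsn : 1 ≤ √(n : ℝ) := by linarith
  set L := K * √(n : ℝ) with hL
  have hL1 : 1 ≤ L := by nlinarith
  have hLn : √(n : ℝ) ≤ L := by nlinarith
  set R := ⌊L⌋₊ with hR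
  have hRL : (R : ℝ) ≤ L := Nat.floor_le (by linarith)
  have hRR : R₀ ≤ R := Nat.le_floor (by linarith)
  classical
  let P : ℤ → Prop := fun k => localTime S n k ω ≤ L ∧ k ∈ Finset.Icc (-(R : ℤ)) R
  set a : ℤ → ℝ := fun k => θ * localTime S n k ω with ha
  set b : ℤ → ℝ := fun k => if P k then a k else 0 with hb
  set J := visitedSites S n ω ∪ Finset.Icc (-(R : ℤ)) R with hJ
  have hsub : visitedSites S n ω ⊆ J := Finset.subset_union_left
  have haoff : ∀ k ∉ visitedSites S n ω, a k = 0 := fun k hk => by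
    simp only [ha, localTime_eq_zero hk, mul_zero]
  have hsuma : ∑ k ∈ visitedSites S n ω, a k ^ 2 = ∑ k ∈ J, a k ^ 2 :=
    Finset.sum_subset hsub fun k _ hk => by rw [haoff k hk]; norm_num
  have hsumb : ∀ ω', ∑ k ∈ J, b k * ξ k ω' = ∑ k ∈ Finset.Icc (-(R : ℤ)) R, b k * ξ k ω' :=
    fun ω' => (Finset.sum_subset Finset.subset_union_right fun k _ hk => by
      simp only [hb]
      rw [if_neg fun h => hk h.2, zero_mul]).symm
  have hwalk : ∀ ω', θ * ∑ j ∈ Finset.Icc 1 n, ξ (S j ω) ω' = ∑ k ∈ J, a k * ξ k ω' := fun ω' => by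
    rw [sum_comp_walk_eq hsub fun k => ξ k ω', Finset.mul_sum]
    exact Finset.sum_congr rfl fun k _ => by simp only [ha]; ring
  have hP : ∀ k, ¬ P k → L ≤ localTime S n k ω ∨ L ≤ |(k : ℝ)| := by
    intro k hk
    by_contra hcon
    push Not at hcon
    refine hk ⟨hcon.1.le, ?_⟩
    have : k.natAbs ≤ R := Nat.le_floor (by rw [Nat.cast_natAbs, Int.cast_abs]; exact hcon.2.le)
    rw [Finset.mem_Icc]
    omega
  have hbound : ∀ k, |b k| ≤ √(3 * K ^ 3 * t ^ 2 + 1) / √(2 * R + 1 : ℝ) := by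
    intro k
    rw [le_div_iff₀ (by positivity)]
    refine Real.le_sqrt_of_sq_le ?_
    rw [mul_pow, Real.sq_sqrt (by positivity), sq_abs]
    simp only [hb]
    split_ifs with h
    · have h0 := localTime_nonneg (S := S) n k ω
      have h1 : a k ^ 2 ≤ θ ^ 2 * L ^ 2 := by
        simp only [ha, mul_pow]
        exact mul_le_mul_of_nonneg_left (pow_le_pow_left₀ h0 h.1 2) (sq_nonneg θ)
      have h2 : a k ^ 2 * (2 * R + 1) ≤ θ ^ 2 * L ^ 2 * (3 * L) :=
        mul_le_mul h1 (by linarith) (by positivity) (by positivity)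
      have e : θ ^ 2 * L ^ 2 * (3 * L) = 3 * K ^ 3 * t ^ 2 := by
        rw [← hθ, hL]
        have : √(n : ℝ) ^ 2 = n := Real.sq_sqrt (Nat.cast_nonneg n)
        linear_combination 3 * θ ^ 2 * K ^ 3 * √(n : ℝ) * this
      linarith
    · have : 0 ≤ 3 * K ^ 3 * t ^ 2 + 1 := by positivity
      simpa using this
  have hclt := hR₀ R hRR b hbound
  simp only [← hsumb] at hclt
  rw [show ∑ k ∈ visitedSites S n ω, (θ * localTime S n k ω) ^ 2 = ∑ k ∈ J, a k ^ 2 from hsuma]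
  simp only [hwalk]
  refine h3.norm_integral_expI_sub_exp_le hm h4 (fun k hk => haoff k fun h => hk (hsub h)) ?_ ?_ ?_
    hη hη1 hclt
  · have := sum_mul_localTime_sq_le (S := S) n J (w := fun _ => 1) (fun _ => zero_le_one) ω
    have := mul_le_mul_of_nonneg_left this (sq_nonneg θ)
    rw [Finset.mul_sum] at this
    simp only [ha, mul_pow]
    simp only [one_mul] at this
    refine this.trans_eq ?_
    simp only [weightedReturns, one_mul]
    ring
  · exact sum_sq_cutoff_sub_le θ (by linarith) J ω hP
  · intro F
    have := mul_le_mul_of_nonneg_left (sum_sq_sub_localTime_le (S := S) n F ω) (sq_nonneg θ)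
    rw [Finset.mul_sum] at this
    refine (Finset.sum_congr rfl fun k _ => ?_).trans_le this
    simp only [ha]
    ring

/-- Averaging over the scenery first. -/
lemma integral_expI_walk_eq (hmS : ∀ n, Measurable (S n)) (hm : ∀ k, Measurable (ξ k))
    (hindep : IndepFun (fun ω (n : ℕ) => S n ω) (fun ω (k : ℤ) => ξ k ω) μ) (θ : ℝ) (n : ℕ) :
    Integrable (fun ω => ∫ ω', expI (θ * ∑ j ∈ Finset.Icc 1 n, ξ (S j ω) ω') ∂μ) μ ∧
    ∫ ω, expI (θ * ∑ j ∈ Finset.Icc 1 n, ξ (S j ω) ω) ∂μ =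
      ∫ ω, ∫ ω', expI (θ * ∑ j ∈ Finset.Icc 1 n, ξ (S j ω) ω') ∂μ ∂μ := by
  have hS' : Measurable fun ω (n : ℕ) => S n ω := measurable_pi_lambda _ hmS
  have hξ' : Measurable fun ω (k : ℤ) => ξ k ω := measurable_pi_lambda _ hm
  set g : (ℕ → ℤ) × (ℤ → ℝ) → ℂ := fun p => expI (θ * ∑ j ∈ Finset.Icc 1 n, p.2 (p.1 j)) with hg
  have heval : Measurable fun q : ℤ × (ℤ → ℝ) => q.2 q.1 :=
    measurable_from_prod_countable_right fun k => measurable_pi_apply k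
  have hgm : Measurable g := by
    refine measurable_expI.comp (Measurable.const_mul ?_ θ)
    refine Finset.measurable_sum _ fun j _ => ?_
    have hpair : Measurable fun p : (ℕ → ℤ) × (ℤ → ℝ) => (p.1 j, p.2) :=
      ((measurable_pi_apply j).comp measurable_fst).prodMk measurable_snd
    exact heval.comp hpair
  have hprob1 := Measure.isProbabilityMeasure_map (μ := μ) hS'.aemeasurable
  have hprob2 := Measure.isProbabilityMeasure_map (μ := μ) hξ'.aemeasurable
  set μS := μ.map fun ω (n : ℕ) => S n ω
  set μξ := μ.map fun ω (k : ℤ) => ξ k ω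
  have hgi : Integrable g (μS.prod μξ) :=
    Integrable.of_bound hgm.aestronglyMeasurable 1 (ae_of_all _ fun p => (norm_expI _).le)
  have hinner : ∀ s : ℕ → ℤ, ∫ x, g (s, x) ∂μξ =
      ∫ ω', expI (θ * ∑ j ∈ Finset.Icc 1 n, ξ (s j) ω') ∂μ := fun s =>
    integral_map hξ'.aemeasurable
      (hgm.comp (measurable_const.prodMk measurable_id)).aestronglyMeasurable
  have hout := hgi.integral_prod_left
  simp only [hinner] at hout
  refine ⟨hout.comp_measurable hS', ?_⟩
  have hjoint := (indepFun_iff_map_prod_eq_prod_map_map hS'.aemeasurable hξ'.aemeasurable).1 hindep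
  have h1 : ∫ ω, expI (θ * ∑ j ∈ Finset.Icc 1 n, ξ (S j ω) ω) ∂μ = ∫ p, g p ∂(μS.prod μξ) := by
    rw [← hjoint, integral_map (hS'.prodMk hξ').aemeasurable hgm.aestronglyMeasurable]
  rw [h1, integral_prod _ hgi]
  simp only [hinner]
  exact integral_map hS'.aemeasurable hout.aestronglyMeasurable

lemma IsSSRW.integral_error_le (hS : IsSSRW μ S) (n : ℕ) (c₀ : ℝ) {c₁ c₂ c₃ c₄ : ℝ} (h₁ : 0 ≤ c₁)
    (h₂ : 0 ≤ c₂) (h₃ : 0 ≤ c₃) (h₄ : 0 ≤ c₄) {B : Ω → ℝ}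
    (hB : ∀ ω, B ω = c₀ + c₁ * weightedReturns S (fun _ _ => 1) n ω +
      c₂ * weightedReturns S (fun j ω => (S j ω : ℝ) ^ 2) n ω +
      c₃ * weightedReturns S (fun j ω => ∑ i ∈ Finset.Icc 1 j, sameSite S j i ω) n ω +
      c₄ * gradEnergy S n ω) :
    Integrable B μ ∧ ∫ ω, B ω ∂μ ≤ c₀ + c₁ * (√n * n) + c₂ * (√n * (n : ℝ) ^ 2) +
      c₃ * (n : ℝ) ^ 2 + c₄ * (2 * n) := by
  have i₁ := (hS.integrable_of_pathDep (pathDep_weightedReturns (S := S) (H := fun _ _ => 1)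
    (fun _ _ _ _ => rfl) n)).const_mul c₁
  have i₂ := (hS.integrable_of_pathDep (pathDep_weightedReturns (S := S)
    (H := fun j ω => (S j ω : ℝ) ^ 2) (fun j ω ω' h => by simp only [h j le_rfl]) n)).const_mul c₂
  have i₃ := (hS.integrable_of_pathDep (pathDep_weightedReturns (S := S)
    pathDep_sum_sameSite n)).const_mul c₃
  have i₄ := (hS.integrable_of_pathDep (pathDep_gradEnergy (S := S) n)).const_mul c₄
  have i₀ : Integrable (fun _ : Ω => c₀) μ := integrable_const _
  have j₁ := i₀.add i₁
  have j₂ := j₁.add i₂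
  have j₃ := j₂.add i₃
  rw [funext hB]
  refine ⟨j₃.add i₄, ?_⟩
  have e := integral_add' j₃ i₄
  rw [integral_add' j₂ i₃, integral_add' j₁ i₂, integral_add' i₀ i₁] at e
  simp only [integral_const_mul, integral_const, probReal_univ, one_smul] at e
  refine (le_of_eq e).trans ?_
  gcongr
  · exact hS.integral_weightedReturns_one_le n
  · exact hS.integral_weightedReturns_sq_le n
  · exact hS.integral_weightedReturns_sum_le n
  · exact hS.integral_gradEnergy_le n

/-- The conditional Gaussian approximation, averaged over the walk. -/
lemma IsSSRW.exists_norm_integral_sub_le (hS : IsSSRW μ S) (hm : ∀ k, Measurable (ξ k))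
    (hindep : IndepFun (fun ω (n : ℕ) => S n ω) (fun ω (k : ℤ) => ξ k ω) μ)
    (h3 : Cond3 μ ξ) (h4 : Cond4 μ ξ) (h5 : Cond5 μ ξ) (t : ℝ) {K η δ : ℝ} (hK : 1 ≤ K)
    (hη : 0 < η) (hη1 : η ≤ 1) (hδ : 0 < δ) :
    ∃ n₀ : ℕ, ∀ n ≥ n₀, ∀ θ : ℝ, θ ^ 2 * (n * √n) = t ^ 2 → 0 < n →
      ‖∫ ω, expI (θ * ∑ j ∈ Finset.Icc 1 n, ξ (S j ω) ω) ∂μ -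
        ((∫ ω, Real.exp (-((∑' p, autocov μ ξ p) *
          ∑ k ∈ visitedSites S n ω, (θ * localTime S n k ω) ^ 2) / 2) ∂μ : ℝ) : ℂ)‖ ≤
      δ + η * (1 / 2 + ((∑' p, |autocov μ ξ p|) +
          5 * ∑' p : ℤ, √(1 + |(p : ℝ)|) * |autocov μ ξ p|) * t ^ 2) +
        12 * (∑' p, |autocov μ ξ p|) * t ^ 2 / (η * K) +
        (∑' p : ℤ, √(1 + |(p : ℝ)|) * |autocov μ ξ p|) * t ^ 2 / (η ^ 3 * √n) := by
  obtain ⟨n₀, hn₀⟩ := exists_norm_integral_expI_walk_sub_le (S := S) hm h3 h4 h5 t hK hη hη1 hδ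
  refine ⟨n₀, fun n hn θ hθ hn0 => ?_⟩
  have hpt := hn₀ n hn θ hθ
  set Γ := ∑' p, |autocov μ ξ p| with hΓ
  set Γ' := ∑' p : ℤ, √(1 + |(p : ℝ)|) * |autocov μ ξ p| with hΓ'
  have hΓ0 : 0 ≤ Γ := tsum_nonneg fun _ => abs_nonneg _
  have hΓ'0 : 0 ≤ Γ' := tsum_nonneg fun _ => mul_nonneg (Real.sqrt_nonneg _) (abs_nonneg _)
  have hK0 : 0 < K := by linarith
  obtain ⟨hzi, hz⟩ := integral_expI_walk_eq hS.meas hm hindep θ n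
  have hgi : Integrable (fun ω => Real.exp (-((∑' p, autocov μ ξ p) *
      ∑ k ∈ visitedSites S n ω, (θ * localTime S n k ω) ^ 2) / 2)) μ := by
    refine hS.integrable_of_pathDep (n := n) fun ω ω' h => ?_
    have e : visitedSites S n ω = visitedSites S n ω' :=
      Finset.image_congr fun j hj => h j (Finset.mem_Icc.1 hj).2
    simp only [e, pathDep_localTime n _ ω ω' h]
  have hgi' : Integrable (fun ω => ((Real.exp (-((∑' p, autocov μ ξ p) *
      ∑ k ∈ visitedSites S n ω, (θ * localTime S n k ω) ^ 2) / 2) : ℝ) : ℂ)) μ := hgi.ofReal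
  rw [hz, ← integral_complex_ofReal, ← integral_sub hzi hgi']
  obtain ⟨hBi, hB⟩ := hS.integral_error_le n (η / 2 + δ) (c₁ := η * (2 * θ ^ 2) * (Γ / 2 + 5 / 2 * Γ'))
    (c₂ := 3 / 2 * (Γ * (θ ^ 2 * (2 / (K * √n) ^ 2)) / η))
    (c₃ := 3 / 2 * (Γ * (θ ^ 2 * (6 / (K * √n))) / η))
    (c₄ := Γ' * θ ^ 2 / (2 * η ^ 3)) (by positivity) (by positivity) (by positivity)
    (by positivity) (fun ω => rfl)
  refine (norm_integral_le_of_norm_le hBi (ae_of_all _ fun ω => (hpt ω).trans_eq ?_)).trans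
    (hB.trans ?_)
  · ring
  · have hs : 0 < √(n : ℝ) := Real.sqrt_pos.2 (by exact_mod_cast hn0)
    have hss : (n : ℝ) = √(n : ℝ) ^ 2 := (Real.sq_sqrt (Nat.cast_nonneg n)).symm
    set s := √(n : ℝ) with hs_def
    rw [hss] at hθ ⊢
    have e1 : η * (2 * θ ^ 2) * (Γ / 2 + 5 / 2 * Γ') * (s * s ^ 2) = η * ((Γ + 5 * Γ') * t ^ 2) := by
      rw [← hθ]; ring
    have e2 : 3 / 2 * (Γ * (θ ^ 2 * (2 / (K * s) ^ 2)) / η) * (s * (s ^ 2) ^ 2) =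
        3 * Γ * t ^ 2 / (η * K) * (1 / K) := by
      rw [← hθ]; field_simp
    have e3 : 3 / 2 * (Γ * (θ ^ 2 * (6 / (K * s))) / η) * (s ^ 2) ^ 2 =
        9 * Γ * t ^ 2 / (η * K) := by
      rw [← hθ]; field_simp; ring
    have e4 : Γ' * θ ^ 2 / (2 * η ^ 3) * (2 * s ^ 2) = Γ' * t ^ 2 / (η ^ 3 * s) := by
      rw [← hθ]; field_simp
    have h2 : 3 * Γ * t ^ 2 / (η * K) * (1 / K) ≤ 3 * Γ * t ^ 2 / (η * K) :=
      mul_le_of_le_one_right (by positivity) ((div_le_one hK0).2 hK)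
    rw [e1, e2, e3, e4]
    have e5 : 12 * Γ * t ^ 2 / (η * K) = 3 * Γ * t ^ 2 / (η * K) + 9 * Γ * t ^ 2 / (η * K) := by ring
    rw [e5]
    linarith

end Conclusion

/-- Under conditions (3), (4), (5) on the stationary scenery `ξ`,
independent of the simple symmetric random walk `S`, the difference of the two
characteristic-function-type expectations tends to `0`. -/
theorem statement0 {Ω : Type*} [MeasurableSpace Ω] (μ : Measure Ω) [IsProbabilityMeasure μ]
    (S : ℕ → Ω → ℤ) (ξ : ℤ → Ω → ℝ)
    (hS : IsSSRW μ S)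
    (hξmeas : ∀ k, Measurable (ξ k))
    (hindep : IndepFun (fun ω (n : ℕ) => S n ω) (fun ω (k : ℤ) => ξ k ω) μ)
    (h3 : Cond3 μ ξ) (h4 : Cond4 μ ξ) (h5 : Cond5 μ ξ) (t : ℝ) :
    Tendsto (fun n : ℕ =>
        (∫ ω, Complex.exp (Complex.I * (t : ℂ) / (((n : ℝ) ^ ((3 : ℝ) / 4) : ℝ) : ℂ) *
            ((∑ k ∈ Finset.Icc 1 n, ξ (S k ω) ω : ℝ) : ℂ)) ∂μ) -
        ((∫ ω, Real.exp (-(t ^ 2 / (2 * (n : ℝ) ^ ((3 : ℝ) / 2))) *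
            ∑' ℓ : ℤ, (∑' m : ℤ, ∫ ω', ξ ℓ ω' * ξ m ω' ∂μ) * (localTime S n ℓ ω) ^ 2) ∂μ : ℝ) : ℂ))
      atTop (nhds 0) := by
  rw [Metric.tendsto_atTop]
  intro ε hε
  set Γ := ∑' p, |autocov μ ξ p| with hΓ
  set Γ' := ∑' p : ℤ, √(1 + |(p : ℝ)|) * |autocov μ ξ p| with hΓ'
  have hΓ0 : 0 ≤ Γ := tsum_nonneg fun _ => abs_nonneg _
  have hΓ'0 : 0 ≤ Γ' := tsum_nonneg fun _ => mul_nonneg (Real.sqrt_nonneg _) (abs_nonneg _)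
  set C := 1 / 2 + (Γ + 5 * Γ') * t ^ 2 with hC
  have hC0 : 0 < C := by positivity
  obtain ⟨η, hη, hη1, hηC⟩ : ∃ η : ℝ, 0 < η ∧ η ≤ 1 ∧ η * C ≤ ε / 8 := by
    refine ⟨min 1 (ε / 8 / C), by positivity, min_le_left _ _, ?_⟩
    rw [← le_div_iff₀ hC0]
    exact min_le_right _ _
  obtain ⟨K, hK, hKε⟩ : ∃ K : ℝ, 1 ≤ K ∧ 12 * Γ * t ^ 2 / (η * K) ≤ ε / 8 := by
    have hq : 0 ≤ 12 * Γ * t ^ 2 / (η * (ε / 8)) := by positivity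
    refine ⟨1 + 12 * Γ * t ^ 2 / (η * (ε / 8)), by linarith, ?_⟩
    rw [div_le_iff₀ (by positivity)]
    have e : 12 * Γ * t ^ 2 / (η * (ε / 8)) * (η * (ε / 8)) = 12 * Γ * t ^ 2 :=
      div_mul_cancel₀ _ (by positivity)
    nlinarith [mul_pos hη hε]
  obtain ⟨n₀, hn₀⟩ := hS.exists_norm_integral_sub_le hξmeas hindep h3 h4 h5 t hK hη hη1
    (by positivity : 0 < ε / 8)
  set M := Γ' * t ^ 2 / (η ^ 3 * (ε / 8)) with hM
  have hM0 : 0 ≤ M := by positivity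
  refine ⟨max n₀ (⌈M⌉₊ ^ 2 + 1), fun n hn => ?_⟩
  have hnn : n₀ ≤ n := (le_max_left _ _).trans hn
  have hnM : ⌈M⌉₊ ^ 2 + 1 ≤ n := (le_max_right _ _).trans hn
  have hn0 : 0 < n := by omega
  have hnR : (0 : ℝ) < n := by exact_mod_cast hn0
  have hsn : M ≤ √(n : ℝ) := by
    refine (Nat.le_ceil M).trans (Real.le_sqrt_of_sq_le ?_)
    exact_mod_cast (by omega : ⌈M⌉₊ ^ 2 ≤ n)
  have hs0 : 0 < √(n : ℝ) := Real.sqrt_pos.2 hnR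
  have hlast : Γ' * t ^ 2 / (η ^ 3 * √n) ≤ ε / 8 := by
    rw [div_le_iff₀ (by positivity)]
    rw [hM, div_le_iff₀ (by positivity)] at hsn
    linarith
  set θ := t / (n : ℝ) ^ ((3 : ℝ) / 4) with hθ_def
  have hpow : (n : ℝ) ^ ((3 : ℝ) / 2) = n * √n := by
    rw [Real.sqrt_eq_rpow, show (3 : ℝ) / 2 = 1 + 1 / 2 by norm_num, Real.rpow_add hnR,
      Real.rpow_one]
  have hpow' : ((n : ℝ) ^ ((3 : ℝ) / 4)) ^ 2 = (n : ℝ) ^ ((3 : ℝ) / 2) := by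
    rw [← Real.rpow_natCast, ← Real.rpow_mul hnR.le]
    norm_num
  have hθ2 : θ ^ 2 = t ^ 2 / (n * √n) := by rw [hθ_def, div_pow, hpow', hpow]
  have hθ : θ ^ 2 * (n * √n) = t ^ 2 := by rw [hθ2]; exact div_mul_cancel₀ _ (by positivity)
  have hmain := hn₀ n hnn θ hθ hn0
  rw [← hΓ, ← hΓ', ← hC] at hmain
  have e1 : ∀ ω, Complex.exp (Complex.I * (t : ℂ) / (((n : ℝ) ^ ((3 : ℝ) / 4) : ℝ) : ℂ) *
      ((∑ k ∈ Finset.Icc 1 n, ξ (S k ω) ω : ℝ) : ℂ)) =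
      expI (θ * ∑ j ∈ Finset.Icc 1 n, ξ (S j ω) ω) := fun ω => by
    rw [expI, hθ_def, Complex.ofReal_mul, Complex.ofReal_div]
    congr 1
    ring
  have e2 : ∀ ω, -(t ^ 2 / (2 * (n : ℝ) ^ ((3 : ℝ) / 2))) *
      ∑' ℓ : ℤ, (∑' m : ℤ, ∫ ω', ξ ℓ ω' * ξ m ω' ∂μ) * (localTime S n ℓ ω) ^ 2 =
      -((∑' p, autocov μ ξ p) *
        ∑ k ∈ visitedSites S n ω, (θ * localTime S n k ω) ^ 2) / 2 := fun ω => by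
    simp only [h3.1.tsum_integral_mul hξmeas, mul_pow]
    have hsum : ∑' k, localTime S n k ω ^ 2 = ∑ k ∈ visitedSites S n ω, localTime S n k ω ^ 2 :=
      tsum_eq_sum fun k hk => by rw [localTime_eq_zero hk, zero_pow two_ne_zero]
    rw [tsum_mul_left, hsum, ← Finset.mul_sum, hθ2, hpow]
    ring
  simp only [e1, e2]
  rw [dist_zero_right]
  linarith
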